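/- Let n ≥ 3. There exists ε > 0 with the following property: if K ⊂ ℝⁿ is a convex body with positive continuous curvature function such that Π²K = cK for some c > 0, and there exists φ ∈ GL_n(ℝ) such that φK has positive continuous curvature function f_{φK} with ‖f_{φK} − 1‖_C ≤ ε, then K is an ellipsoid centered at the origin. -/

import Mathlib

/-!
Write `ν` for the uniform probability measure on the sphere of `ℝ^{m+1}`, `n = m + 1`.

*Shadows.* The volume of the shadow of `K` on `v^⊥` is, up to a constant, the growth
`pK K v = |K + [0,v]| - |K|`. If `K` has curvature function `f`, then `pK K` is a multiple of the
cosine transform of `f dν` (`pK_curv`). If a body `Z` is a zonoid with generating measure `η`, then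
`pK Z u` is a multiple of `∫ |det(u, x₁, …, x_m)| dη(x₁) ⋯ dη(x_m)`, which is the cosine transform of
an explicit even measure `lamM η` on the sphere (`cos_lamM`, `zonoid_pK`). Since the cosine
transform is injective on even measures (`cos_unique`), `Π²K = cK` becomes a fixed point equation
`η = κ • lamM (lamM η)` for the even measure `η` generating `ΠK` (`fixed_point`).

*Linear invariance.* `Π²(φK)` is a multiple of `φ(Π²K)` (`proj2_image`), so `K` may be replaced by any
linear image. If `f_{φK}` is close to one, minimising `B ↦ ∫ ‖B x‖ f dν` over `det B = 1` gives a map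
close to an isometry (`exists_min`, `near_isometry`); the first order condition at the minimum says
that the transformed measure is isotropic, `∫ ⟪a,x⟫² f dν = ‖a‖²/n` (`first_order`). Hence it is enough
to treat an even density `f` close to one and isotropic (`normalise`).

*Contraction.* Linearising `lamM` at `ν` produces the spherical Radon transform: for `f = 1 + g`, the
density of `lamM (f dν)` is, up to normalisation, `1 + m R g` with a quadratically small error. The
multiplier of `R` on degree `2` harmonics is `-1/m`, so that `m R` has modulus one there, but isotropy
removes degrees at most two, and on higher degrees the multipliers are at most `κ/m` in absolute value
with `κ < 1`. Two applications of `lamM` therefore contract `g` strictly in `L²`, which forces `g = 0`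
(`contraction`). Then the shadow function is a multiple of the norm and the body is a ball
(`ball_of_norm`), so `K` is an ellipsoid.

The spectral bound for `R` does not use spherical harmonics: `R` is symmetric and triangular with
respect to the filtration of `L²` by the spans of the powers `⟪a,·⟫^k`, and the diagonal entries are the
moments of one coordinate (`spectral_abs`).
-/

open MeasureTheory Metric Set Filter
open scoped RealInnerProductSpace Topology Pointwise NNReal ENNReal

noncomputable section

/-- `Euc n` is Euclidean space `ℝⁿ`. -/
abbrev Euc (n : ℕ) : Type := EuclideanSpace ℝ (Fin n)

/-- `uball k` is `ω_k`, the volume of the unit ball of `ℝ^k`. -/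
def uball (k : ℕ) : ℝ := (volume (closedBall (0 : Euc k) 1)).toReal

/-- The spherical Lebesgue measure on `S^{n-1} ⊂ ℝⁿ`:
the `(n-1)`-dimensional Hausdorff measure. -/
def sphMeas (n : ℕ) : Measure (Euc n) := Measure.hausdorffMeasure ((n : ℝ) - 1)

/-- The support function of a set `K ⊆ ℝⁿ`. -/
def suppFn {n : ℕ} (K : Set (Euc n)) (x : Euc n) : ℝ :=
  sSup ((fun y => ⟪y, x⟫) '' K)

/-- `K` is a convex body: compact, convex, with nonempty interior. -/
def IsConvexBody {n : ℕ} (K : Set (Euc n)) : Prop :=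
  IsCompact K ∧ Convex ℝ K ∧ (interior K).Nonempty

/-- Lebesgue volume of a subset of `ℝⁿ`, as a real number. -/
def vol {n : ℕ} (K : Set (Euc n)) : ℝ := (volume K).toReal

/-- `projSupp K u` is the `(n-1)`-dimensional measure of the orthogonal projection of
`K` onto the hyperplane `u^⊥` (for a unit vector `u`); this is the support function
of the projection body `ΠK`. -/
def projSupp {n : ℕ} (K : Set (Euc n)) (u : Euc n) : ℝ :=
  (Measure.hausdorffMeasure ((n : ℝ) - 1)
    ((fun x : Euc n => x - ⟪x, u⟫ • u) '' K)).toReal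

/-- The projection body `ΠK` of `K`: the convex body whose support function is
`u ↦ V_{n-1}(K | u^⊥)`. -/
def projBody {n : ℕ} (K : Set (Euc n)) : Set (Euc n) :=
  {x | ∀ u ∈ sphere (0 : Euc n) 1, ⟪x, u⟫ ≤ projSupp K u}

/-- The convex body determined by a function `f` on the sphere (the Wulff shape /
intersection of halfspaces); if `f` is a support function this body has support function `f`. -/
def bodyOf {n : ℕ} (f : Euc n → ℝ) : Set (Euc n) :=
  {x | ∀ u ∈ sphere (0 : Euc n) 1, ⟪x, u⟫ ≤ f u}

/-- The 1-homogeneous extension of a function on the unit sphere. -/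
def homExt {n : ℕ} (f : Euc n → ℝ) (x : Euc n) : ℝ := ‖x‖ * f (‖x‖⁻¹ • x)

/-- The Euclidean Laplacian of `F : ℝⁿ → ℝ`. -/
def lapl {n : ℕ} (F : Euc n → ℝ) (x : Euc n) : ℝ :=
  ∑ i : Fin n, fderiv ℝ (fun y => fderiv ℝ F y (EuclideanSpace.single i 1)) x
    (EuclideanSpace.single i 1)

/-- The operator `□f = Δ_{S^{n-1}} f + (n-1) f` on functions on the sphere, realized as the
Euclidean Laplacian of the 1-homogeneous extension (restricted to the sphere). -/
def boxOp {n : ℕ} (f : Euc n → ℝ) (x : Euc n) : ℝ := lapl (homExt f) x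

/-- The cosine transform `Cf(u) = ∫_{S^{n-1}} |u·x| f(x) dx`. -/
def cosT {n : ℕ} (f : Euc n → ℝ) (u : Euc n) : ℝ :=
  ∫ x in sphere (0 : Euc n) 1, |⟪u, x⟫| * f x ∂(sphMeas n)

/-- The spherical Radon (Funk) transform
`Rf(u) = (1/((n-1)ω_{n-1})) ∫_{S^{n-1} ∩ u^⊥} f`, normalized so that `R1 = 1`. -/
def radon {n : ℕ} (f : Euc n → ℝ) (u : Euc n) : ℝ :=
  (1 / (((n : ℝ) - 1) * uball (n - 1))) *
    ∫ x in sphere (0 : Euc n) 1 ∩ {x : Euc n | ⟪x, u⟫ = 0}, f x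
      ∂(Measure.hausdorffMeasure ((n : ℝ) - 2))

/-- The `C²(S^{n-1})` norm of a function on the sphere (computed through its
1-homogeneous extension, which only depends on the values of `f` on the sphere). -/
def C2Norm {n : ℕ} (f : Euc n → ℝ) : ℝ :=
  ⨆ x : sphere (0 : Euc n) 1,
    (|homExt f (x : Euc n)| + ‖fderiv ℝ (homExt f) (x : Euc n)‖ +
      ‖iteratedFDeriv ℝ 2 (homExt f) (x : Euc n)‖)

/-- The sup (`C`) norm of a function on the sphere. -/
def CNorm {n : ℕ} (f : Euc n → ℝ) : ℝ := ⨆ x : sphere (0 : Euc n) 1, |f (x : Euc n)|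

/-- `f` is of class `C²` as a function on the sphere: its 1-homogeneous extension is
`C²` away from the origin. -/
def C2Sph {n : ℕ} (f : Euc n → ℝ) : Prop :=
  ContDiffOn ℝ 2 (homExt f) {(0 : Euc n)}ᶜ

/-- `f` is even on the sphere. -/
def EvenSph {n : ℕ} (f : Euc n → ℝ) : Prop := ∀ x ∈ sphere (0 : Euc n) 1, f (-x) = f x

/-- `f` is the curvature function of `K`: for every convex body `L`, the first variation of
volume satisfies `nV₁(K,L) = ∫_{S^{n-1}} h_L f dx`, i.e. the surface area measure of `K`
has density `f` with respect to spherical Lebesgue measure. -/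
def HasCurvFn {n : ℕ} (K : Set (Euc n)) (f : Euc n → ℝ) : Prop :=
  ∀ L : Set (Euc n), IsConvexBody L →
    Tendsto (fun t : ℝ => (vol (K + t • L) - vol K) / t) (𝓝[>] (0 : ℝ))
      (𝓝 (∫ x in sphere (0 : Euc n) 1, suppFn L x * f x ∂(sphMeas n)))

/-- `K` is a convex body of class `C²₊`: its support function is `C²` and it has a positive
continuous curvature function. -/
def IsC2Plus {n : ℕ} (K : Set (Euc n)) : Prop :=
  IsConvexBody K ∧ C2Sph (suppFn K) ∧
    ∃ f : Euc n → ℝ, ContinuousOn f (sphere (0 : Euc n) 1) ∧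
      (∀ x ∈ sphere (0 : Euc n) 1, 0 < f x) ∧ HasCurvFn K f

/-- `f` is a spherical harmonic of degree `k` on `S^{n-1}`: the restriction to the sphere of a
harmonic polynomial that is homogeneous of degree `k` (equivalently, an eigenfunction of the
Laplace–Beltrami operator with eigenvalue `-k(k+n-2)`; the zero function is allowed). -/
def IsSphHarm {n : ℕ} (k : ℕ) (f : Euc n → ℝ) : Prop :=
  ∃ P : MvPolynomial (Fin n) ℝ, P.IsHomogeneous k ∧
    (∑ i : Fin n, MvPolynomial.pderiv i (MvPolynomial.pderiv i P)) = 0 ∧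
    ∀ x ∈ sphere (0 : Euc n) 1, f x = MvPolynomial.eval (fun i => x i) P

/-- `π_k f = 0`: `f` is `L²(S^{n-1})`-orthogonal to all spherical harmonics of degree `k`. -/
def ProjZero {n : ℕ} (k : ℕ) (f : Euc n → ℝ) : Prop :=
  ∀ Y : Euc n → ℝ, IsSphHarm k Y →
    ∫ x in sphere (0 : Euc n) 1, f x * Y x ∂(sphMeas n) = 0

/-- The multipliers `v_{k,n}` of the spherical Radon transform:
`v_{k,n} = (1·3⋯(k-1)) / ((n-1)(n+1)⋯(n+k-3))` for even `k`, `v_{0,n} = 1`, and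
`v_{k,n} = 0` for odd `k`. -/
def vkn (n k : ℕ) : ℝ :=
  if k % 2 = 0 then ∏ i ∈ Finset.range (k / 2), (2 * (i : ℝ) + 1) / ((n : ℝ) + 2 * i - 1)
  else 0

/-- `D` is the derivative at `t = 0`, in the `C²(S^{n-1})`-norm, of a curve `t ↦ F t` of
functions on the sphere. -/
def HasC2DerivAt {n : ℕ} (F : ℝ → Euc n → ℝ) (D : Euc n → ℝ) : Prop :=
  Tendsto (fun t : ℝ => C2Norm (fun x => (F t x - F 0 x) / t - D x)) (𝓝[≠] (0 : ℝ)) (𝓝 0)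

set_option linter.unusedSectionVars false
set_option linter.unusedVariables false

namespace Petty

/-! ### Uniform measure on the sphere and on orthonormal pairs -/

section

/-- The orthogonal group of `ℝⁿ`, with the operator norm topology. -/
abbrev OG (n : ℕ) : Type := unitary (Euc n →L[ℝ] Euc n)

/-- The action of the orthogonal group on `ℝⁿ`. -/
def oact {n : ℕ} (g : OG n) : Euc n ≃ₗᵢ[ℝ] Euc n := Unitary.linearIsometryEquiv g

lemma oact_apply {n : ℕ} (g : OG n) (x : Euc n) : oact g x = (g : Euc n →L[ℝ] Euc n) x := rfl

lemma oact_mul {n : ℕ} (g h : OG n) (x : Euc n) : oact (g * h) x = oact g (oact h x) := rfl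

lemma oact_surj {n : ℕ} (e : Euc n ≃ₗᵢ[ℝ] Euc n) : ∃ g : OG n, oact g = e :=
  ⟨Unitary.linearIsometryEquiv.symm e, by simp [oact]⟩

instance instContStar (n : ℕ) : ContinuousStar (Euc n →L[ℝ] Euc n) :=
  ⟨(ContinuousLinearMap.adjoint (𝕜 := ℝ) (E := Euc n) (F := Euc n)).continuous⟩

instance instCompactOG (n : ℕ) : CompactSpace (OG n) := by
  refine (isCompact_iff_compactSpace (s := ((unitary (Euc n →L[ℝ] Euc n) : Submonoid _) : Set (Euc n →L[ℝ] Euc n)))).1 ?_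
  refine Metric.isCompact_of_isClosed_isBounded ?_ ?_
  · have : ((unitary (Euc n →L[ℝ] Euc n) : Submonoid _) : Set (Euc n →L[ℝ] Euc n)) =
        {g | star g * g = 1} ∩ {g | g * star g = 1} := by
      ext g; simp [Unitary.mem_iff]
    rw [this]
    exact (isClosed_eq (by fun_prop) (by fun_prop)).inter (isClosed_eq (by fun_prop) (by fun_prop))
  · refine (Metric.isBounded_closedBall (x := 0) (r := 1)).subset fun g hg => ?_
    rw [mem_closedBall_zero_iff]
    refine ContinuousLinearMap.opNorm_le_bound _ zero_le_one fun x => ?_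
    have := (oact (⟨g, hg⟩ : OG n)).norm_map x
    rw [oact_apply] at this
    simp [this]

instance instMeasOG (n : ℕ) : MeasurableSpace (OG n) := borel _
instance instBorelOG (n : ℕ) : BorelSpace (OG n) := ⟨rfl⟩
instance instSCOG (n : ℕ) : SecondCountableTopology (OG n) := inferInstance

/-- Haar probability measure on the orthogonal group. -/
def haarO (n : ℕ) : Measure (OG n) := Measure.haarMeasure ⊤

instance instProbHaar (n : ℕ) : IsProbabilityMeasure (haarO n) :=
  ⟨by simpa [haarO] using Measure.haarMeasure_self (G := OG n) (K₀ := ⊤)⟩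
instance instInvHaar (n : ℕ) : (haarO n).IsMulLeftInvariant := by unfold haarO; infer_instance

lemma continuous_oact_inv {n : ℕ} : Continuous fun p : OG n × Euc n => oact p.1⁻¹ p.2 := by
  have h : (fun p : OG n × Euc n => oact p.1⁻¹ p.2) =
      fun p => ((p.1⁻¹ : OG n) : Euc n →L[ℝ] Euc n) p.2 := rfl
  rw [h]
  have h1 : Continuous fun p : OG n × Euc n => ((p.1⁻¹ : OG n) : Euc n →L[ℝ] Euc n) :=
    continuous_subtype_val.comp (continuous_inv.comp continuous_fst)
  exact h1.clm_apply continuous_snd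

lemma orbit_unique_aux {n : ℕ} {X : Type*} [MeasurableSpace X] (act : OG n → X → X)
    (hm : Measurable fun p : OG n × X => act p.1⁻¹ p.2)
    (hmul : ∀ g h x, act (g * h) x = act g (act h x))
    (μ : Measure X) [SFinite μ] (inv : ∀ g, μ.map (act g) = μ) (x0 : X)
    (hx : ∀ᵐ x ∂μ, ∃ h, x = act h x0) (F : X → ℝ≥0∞) (hF : Measurable F) :
    ∫⁻ x, F x ∂μ = μ univ * ∫⁻ g, F (act g⁻¹ x0) ∂(haarO n) := by
  have hmg : ∀ g : OG n, Measurable (act g) := fun g => by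
    have := hm.comp (measurable_prodMk_left (x := g⁻¹))
    simpa [Function.comp_def] using this
  have h1 : ∀ g : OG n, ∫⁻ x, F (act g⁻¹ x) ∂μ = ∫⁻ x, F x ∂μ := fun g => by
    conv_rhs => rw [← inv g⁻¹, lintegral_map hF (hmg _)]
  calc ∫⁻ x, F x ∂μ = ∫⁻ _g, ∫⁻ x, F x ∂μ ∂(haarO n) := by simp
    _ = ∫⁻ g, ∫⁻ x, F (act g⁻¹ x) ∂μ ∂(haarO n) := by simp_rw [h1]
    _ = ∫⁻ x, ∫⁻ g, F (act g⁻¹ x) ∂(haarO n) ∂μ :=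
        lintegral_lintegral_swap (hF.comp hm).aemeasurable
    _ = ∫⁻ _x, ∫⁻ g, F (act g⁻¹ x0) ∂(haarO n) ∂μ := by
        refine lintegral_congr_ae ?_
        filter_upwards [hx] with x ⟨h, hh⟩
        have := lintegral_mul_left_eq_self (μ := haarO n) (fun g => F (act g⁻¹ x)) h
        rw [← this]
        refine lintegral_congr fun g => ?_
        congr 1
        rw [hh, ← hmul]; simp
    _ = _ := by simp [mul_comm]

lemma haarO_inv {n : ℕ} (F : OG n → ℝ≥0∞) (hF : Measurable F) :
    ∫⁻ g, F g⁻¹ ∂(haarO n) = ∫⁻ g, F g ∂(haarO n) := by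
  have := orbit_unique_aux (n := n) (fun g x => g * x) (by fun_prop) mul_assoc (haarO n)
    (fun g => Measure.IsMulLeftInvariant.map_mul_left_eq_self (μ := haarO n) g) 1
    (.of_forall fun x => ⟨x, by simp⟩) F hF
  simpa using this.symm

lemma haarO_mul_right {n : ℕ} (h : OG n) (F : OG n → ℝ≥0∞) (hF : Measurable F) :
    ∫⁻ g, F (g * h) ∂(haarO n) = ∫⁻ g, F g ∂(haarO n) := by
  rw [← haarO_inv F hF, ← haarO_inv (fun g => F (g * h)) (by fun_prop)]
  have := lintegral_mul_left_eq_self (μ := haarO n) (fun g => F g⁻¹) h⁻¹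
  rw [← this]
  simp

/-- A measure concentrated on one orbit of the orthogonal group and invariant under it is
the image of Haar measure, up to its total mass. -/
lemma orbit_unique {n : ℕ} {X : Type*} [MeasurableSpace X] (act : OG n → X → X)
    (hm : Measurable fun p : OG n × X => act p.1⁻¹ p.2)
    (hmul : ∀ g h x, act (g * h) x = act g (act h x))
    (μ : Measure X) [SFinite μ] (inv : ∀ g, μ.map (act g) = μ) (x0 : X)
    (hx : ∀ᵐ x ∂μ, ∃ h, x = act h x0) (F : X → ℝ≥0∞) (hF : Measurable F) :
    ∫⁻ x, F x ∂μ = μ univ * ∫⁻ g, F (act g x0) ∂(haarO n) := by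
  rw [orbit_unique_aux act hm hmul μ inv x0 hx F hF, haarO_inv fun g => F (act g x0)]
  have : Measurable fun g : OG n => act g x0 := by
    have := hm.comp ((measurable_inv (G := OG n)).prodMk (measurable_const (a := x0)))
    simpa [Function.comp_def] using this
  exact hF.comp this

/-- Any orthonormal family can be moved to any other by an orthogonal map. -/
lemma exists_oact_orthonormal {n : ℕ} {ι : Type*} [Fintype ι] [DecidableEq ι]
    (v w : ι → Euc n) (hv : Orthonormal ℝ v) (hw : Orthonormal ℝ w) :
    ∃ g : OG n, ∀ i, w i = oact g (v i) := by
  let bv := Module.Basis.span hv.linearIndependent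
  let bw := Module.Basis.span hw.linearIndependent
  have h2 : ∀ i, (bv i : Euc n) = v i := fun i => by simp [bv, Module.Basis.span_apply]
  have h3 : ∀ i, (bw i : Euc n) = w i := fun i => by simp [bw, Module.Basis.span_apply]
  have hbv : Orthonormal ℝ bv := by
    rw [orthonormal_iff_ite] at hv ⊢
    intro i j; rw [← hv i j, ← h2, ← h2]; rfl
  have hbw : Orthonormal ℝ bw := by
    rw [orthonormal_iff_ite] at hw ⊢
    intro i j; rw [← hw i j, ← h3, ← h3]; rfl
  let f : Submodule.span ℝ (Set.range v) →ₗᵢ[ℝ] Euc n :=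
    ((Submodule.span ℝ (Set.range w)).subtypeₗᵢ).comp
      (hbv.equiv hbw (Equiv.refl ι)).toLinearIsometry
  obtain ⟨g, hg⟩ := oact_surj (f.extend.toLinearIsometryEquiv rfl)
  refine ⟨g, fun i => ?_⟩
  have h1 : f.extend (bv i : Euc n) = f (bv i) := f.extend_apply _
  have h4 : f (bv i) = bw i := by
    simp [f]
  rw [← h3, ← h2, hg]
  simp [h1, h4]

/-- The first standard basis vector. -/
def e0 (n : ℕ) [NeZero n] : Euc n := EuclideanSpace.single 0 1

lemma norm_e0 (n : ℕ) [NeZero n] : ‖e0 n‖ = 1 := by simp [e0]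

lemma exists_oact_single {n : ℕ} (v w : Euc n) (hv : ‖v‖ = 1) (hw : ‖w‖ = 1) :
    ∃ g : OG n, w = oact g v := by
  obtain ⟨g, hg⟩ := exists_oact_orthonormal (ι := Fin 1) (fun _ => v) (fun _ => w)
    ⟨fun _ => hv, fun i j h => (h (Subsingleton.elim i j)).elim⟩
    ⟨fun _ => hw, fun i j h => (h (Subsingleton.elim i j)).elim⟩
  exact ⟨g, hg 0⟩

lemma exists_oact_pair {n : ℕ} (v w v' w' : Euc n) (hv : ‖v‖ = 1) (hw : ‖w‖ = 1)
    (hvw : ⟪v, w⟫ = 0) (hv' : ‖v'‖ = 1) (hw' : ‖w'‖ = 1) (hvw' : ⟪v', w'⟫ = 0) :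
    ∃ g : OG n, v' = oact g v ∧ w' = oact g w := by
  have key : ∀ v w : Euc n, ‖v‖ = 1 → ‖w‖ = 1 → ⟪v, w⟫ = 0 → Orthonormal ℝ ![v, w] := by
    intro v w hv hw h
    refine ⟨fun i => by fin_cases i <;> simp [hv, hw], fun i j hij => ?_⟩
    fin_cases i <;> fin_cases j <;> simp_all [real_inner_comm]
  obtain ⟨g, hg⟩ := exists_oact_orthonormal _ _ (key v w hv hw hvw) (key v' w' hv' hw' hvw')
  exact ⟨g, hg 0, hg 1⟩

/-- The uniform probability measure on the unit sphere, as a measure on `ℝⁿ`. -/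
def nu (n : ℕ) [NeZero n] : Measure (Euc n) := (haarO n).map fun g => oact g (e0 n)

lemma measurable_oact_left {n : ℕ} (x : Euc n) : Measurable fun g : OG n => oact g x := by
  have := (continuous_oact_inv.comp
    ((continuous_inv (G := OG n)).prodMk (continuous_const (y := x)))).measurable
  simpa [Function.comp_def] using this

lemma measurable_oact_joint {n : ℕ} {X : Type*} [MeasurableSpace X] {f : X → OG n}
    {g : X → Euc n} (hf : Measurable f) (hg : Measurable g) :
    Measurable fun p => oact (f p) (g p) := by
  have := continuous_oact_inv.measurable.comp (hf.inv.prodMk hg)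
  simpa [Function.comp_def] using this

lemma measurable_oact {n : ℕ} (g : OG n) : Measurable fun x : Euc n => oact g x :=
  (oact g).continuous.measurable

instance instProbNu (n : ℕ) [NeZero n] : IsProbabilityMeasure (nu n) :=
  Measure.isProbabilityMeasure_map (measurable_oact_left _).aemeasurable

lemma nu_sphere (n : ℕ) [NeZero n] : ∀ᵐ x ∂(nu n), ‖x‖ = 1 := by
  rw [nu, ae_map_iff (measurable_oact_left _).aemeasurable
    (measurableSet_eq_fun measurable_norm measurable_const)]
  exact .of_forall fun g => by rw [LinearIsometryEquiv.norm_map, norm_e0]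

/-- Uniqueness of rotation invariant measures on the sphere. -/
lemma nu_unique {n : ℕ} [NeZero n] (μ : Measure (Euc n)) [SFinite μ]
    (inv : ∀ g : OG n, μ.map (oact g) = μ) (hμ : ∀ᵐ x ∂μ, ‖x‖ = 1) :
    μ = μ univ • nu n := by
  ext A hA
  have := orbit_unique (fun g x => oact g x) continuous_oact_inv.measurable
    (fun g h x => oact_mul g h x) μ inv (e0 n)
    (by filter_upwards [hμ] with x hx using exists_oact_single _ _ (norm_e0 n) hx)
    (A.indicator 1) (measurable_one.indicator hA)
  rw [lintegral_indicator_one hA] at this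
  rw [this, Measure.smul_apply, smul_eq_mul, nu, Measure.map_apply (measurable_oact_left _) hA,
    ← lintegral_indicator_one ((measurable_oact_left _) hA)]
  rfl

lemma nu_map (n : ℕ) [NeZero n] (h : Euc n ≃ₗᵢ[ℝ] Euc n) : (nu n).map h = nu n := by
  obtain ⟨h, rfl⟩ := oact_surj h
  rw [nu, Measure.map_map (measurable_oact h) (measurable_oact_left _)]
  conv_rhs => rw [← Measure.IsMulLeftInvariant.map_mul_left_eq_self (μ := haarO n) h]
  rw [Measure.map_map (measurable_oact_left _) (measurable_const_mul _)]
  rfl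

lemma nu_mp (n : ℕ) [NeZero n] (h : Euc n ≃ₗᵢ[ℝ] Euc n) : MeasurePreserving h (nu n) (nu n) :=
  ⟨h.continuous.measurable, nu_map n h⟩

/-- The second vector of the standard orthonormal pair in `ℝ^{m+1}`. -/
def e1 (m : ℕ) [NeZero m] : Euc (m + 1) := EuclideanSpace.single (Fin.succ 0) 1

lemma norm_e1 (m : ℕ) [NeZero m] : ‖e1 m‖ = 1 := by simp [e1]

lemma inner_e1_e0 (m : ℕ) [NeZero m] : ⟪e1 m, e0 (m + 1)⟫ = 0 := by
  simp [e1, e0, EuclideanSpace.inner_single_left]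

/-- The law of a uniformly distributed orthonormal pair. -/
def pr (m : ℕ) [NeZero m] : Measure (Euc (m + 1) × Euc (m + 1)) :=
  (haarO (m + 1)).map fun g => (oact g (e1 m), oact g (e0 (m + 1)))


lemma measurable_pair {n : ℕ} (x y : Euc n) : Measurable fun g : OG n => (oact g x, oact g y) :=
  (measurable_oact_left _).prodMk (measurable_oact_left _)

variable {m : ℕ} [NeZero m]

instance instProbPr : IsProbabilityMeasure (pr m) :=
  Measure.isProbabilityMeasure_map (measurable_pair _ _).aemeasurable

/-- Uniqueness of rotation invariant measures on orthonormal pairs. -/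
lemma pr_unique (μ : Measure (Euc (m + 1) × Euc (m + 1))) [SFinite μ]
    (inv : ∀ g : OG (m + 1), μ.map (fun p => (oact g p.1, oact g p.2)) = μ)
    (hμ : ∀ᵐ p ∂μ, ‖p.1‖ = 1 ∧ ‖p.2‖ = 1 ∧ ⟪p.1, p.2⟫ = 0) :
    μ = μ univ • pr m := by
  ext A hA
  have := orbit_unique (fun g p => (oact g p.1, oact g p.2))
    ((continuous_oact_inv.comp (continuous_fst.prodMk
      (continuous_fst.comp continuous_snd))).prodMk
      (continuous_oact_inv.comp (continuous_fst.prodMk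
      (continuous_snd.comp continuous_snd)))).measurable
    (fun g h x => rfl) μ inv (e1 m, e0 (m + 1))
    (by
      filter_upwards [hμ] with p hp
      obtain ⟨g, h1, h2⟩ := exists_oact_pair _ _ _ _ (norm_e1 m) (norm_e0 (m + 1))
        (inner_e1_e0 m) hp.1 hp.2.1 hp.2.2
      exact ⟨g, Prod.ext h1 h2⟩)
    (A.indicator 1) (measurable_one.indicator hA)
  rw [lintegral_indicator_one hA] at this
  rw [this, Measure.smul_apply, smul_eq_mul, pr, Measure.map_apply (measurable_pair _ _) hA,
    ← lintegral_indicator_one ((measurable_pair _ _) hA)]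
  rfl

lemma map_pair_congr (x y : Euc (m + 1)) (h : OG (m + 1)) :
    (haarO (m + 1)).map (fun g => (oact g (oact h x), oact g (oact h y))) =
      (haarO (m + 1)).map (fun g => (oact g x, oact g y)) := by
  ext A hA
  rw [Measure.map_apply (measurable_pair _ _) hA, Measure.map_apply (measurable_pair _ _) hA,
    ← lintegral_indicator_one ((measurable_pair _ _) hA),
    ← lintegral_indicator_one ((measurable_pair _ _) hA),
    ← haarO_mul_right h ((((fun g => ((oact g) x, (oact g) y)) ⁻¹' A)).indicator 1)
      (measurable_one.indicator ((measurable_pair _ _) hA))]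
  rfl

/-- The law of an orthonormal pair does not depend on the pair that is rotated. -/
lemma pr_eq (x y : Euc (m + 1)) (hx : ‖x‖ = 1) (hy : ‖y‖ = 1) (hxy : ⟪x, y⟫ = 0) :
    pr m = (haarO (m + 1)).map (fun g => (oact g x, oact g y)) := by
  obtain ⟨h, h1, h2⟩ := exists_oact_pair _ _ x y (norm_e1 m) (norm_e0 (m + 1))
        (inner_e1_e0 m) hx hy hxy
  rw [h1, h2, map_pair_congr]; rfl

lemma pr_swap : (pr m).map Prod.swap = pr m := by
  conv_rhs => rw [pr_eq (e0 (m + 1)) (e1 m) (norm_e0 _) (norm_e1 m)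
    (by rw [real_inner_comm]; exact inner_e1_e0 m)]
  rw [pr, Measure.map_map measurable_swap (measurable_pair _ _)]
  rfl

lemma pr_map_snd : (pr m).map Prod.snd = nu (m + 1) := by
  rw [pr, Measure.map_map measurable_snd (measurable_pair _ _)]; rfl

lemma pr_map_fst : (pr m).map Prod.fst = nu (m + 1) := by
  rw [← pr_swap, Measure.map_map measurable_fst measurable_swap, ← pr_map_snd]; rfl

end

/-! ### Zonal integrals and injectivity of the cosine transform -/

section

lemma abs_inner_le_of_unit {n : ℕ} (a x : Euc n) (hx : ‖x‖ = 1) : |⟪a, x⟫| ≤ ‖a‖ := by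
  simpa [hx] using abs_real_inner_le_norm a x

lemma integrable_of_bound_sphere {n : ℕ} {μ : Measure (Euc n)} [IsFiniteMeasure μ]
    (hμ : ∀ᵐ x ∂μ, ‖x‖ = 1) {f : Euc n → ℝ} (hf : Measurable f) (C : ℝ)
    (hC : ∀ x, ‖x‖ = 1 → |f x| ≤ C) : Integrable f μ :=
  Integrable.of_bound hf.aestronglyMeasurable C
    (by filter_upwards [hμ] with x hx using hC x hx)

/-- Finite measures on the unit sphere are determined by their moments. -/
lemma moments_ext {n : ℕ} (μ₁ μ₂ : Measure (Euc n)) [IsFiniteMeasure μ₁] [IsFiniteMeasure μ₂]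
    (h₁ : ∀ᵐ x ∂μ₁, ‖x‖ = 1) (h₂ : ∀ᵐ x ∂μ₂, ‖x‖ = 1)
    (h : ∀ (a : Euc n) (k : ℕ), ∫ x, ⟪a, x⟫ ^ k ∂μ₁ = ∫ x, ⟪a, x⟫ ^ k ∂μ₂) : μ₁ = μ₂ := by
  have key : ∀ (μ : Measure (Euc n)) [IsFiniteMeasure μ], (∀ᵐ x ∂μ, ‖x‖ = 1) → ∀ t,
      HasSum (fun k : ℕ => (Complex.I ^ k / (k.factorial : ℂ)) * ((∫ x, ⟪t, x⟫ ^ k ∂μ : ℝ) : ℂ))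
        (charFun μ t) := by
    intro μ _ hμ t
    have e1 : ∀ k : ℕ, (Complex.I ^ k / (k.factorial : ℂ)) * ((∫ x, ⟪t, x⟫ ^ k ∂μ : ℝ) : ℂ) =
        ∫ x, (((⟪x, t⟫ : ℝ) : ℂ) * Complex.I) ^ k / (k.factorial : ℂ) ∂μ := by
      intro k
      rw [← integral_complex_ofReal, ← integral_const_mul]
      refine integral_congr_ae (.of_forall fun x => ?_)
      simp only [Complex.ofReal_pow, mul_pow, real_inner_comm x t]
      ring
    have e2 : charFun μ t = ∫ x, ∑' k : ℕ, (((⟪x, t⟫ : ℝ) : ℂ) * Complex.I) ^ k / (k.factorial : ℂ) ∂μ := by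
      rw [charFun_apply]
      refine integral_congr_ae (.of_forall fun x => ?_)
      simp only [Complex.exp_eq_exp_ℂ, NormedSpace.exp_eq_tsum_div]
    simp_rw [e1]
    rw [e2]
    have hb : ∀ k : ℕ, ∀ x : Euc n, ‖x‖ = 1 →
        ‖(((⟪x, t⟫ : ℝ) : ℂ) * Complex.I) ^ k / (k.factorial : ℂ)‖ ≤ ‖t‖ ^ k / k.factorial := by
      intro k x hx
      simp only [norm_div, norm_pow, norm_mul, Complex.norm_I, mul_one, Complex.norm_real,
        Complex.norm_natCast, Real.norm_eq_abs]
      gcongr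
      rw [real_inner_comm]; exact abs_inner_le_of_unit t x hx
    have hint : ∀ k : ℕ, Integrable
        (fun x : Euc n => (((⟪x, t⟫ : ℝ) : ℂ) * Complex.I) ^ k / (k.factorial : ℂ)) μ := by
      intro k
      refine Integrable.of_bound (Measurable.aestronglyMeasurable (by fun_prop)) _
        (by filter_upwards [hμ] with x hx using hb k x hx)
    refine hasSum_integral_of_summable_integral_norm hint ?_
    refine Summable.of_nonneg_of_le (fun k => by positivity) (fun k => ?_)
      ((Real.summable_pow_div_factorial ‖t‖).mul_left (μ.real univ))
    calc _ ≤ ∫ x, ‖t‖ ^ k / k.factorial ∂μ := by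
          refine integral_mono_ae (hint k).norm (integrable_const _) ?_
          filter_upwards [hμ] with x hx using hb k x hx
      _ = _ := by simp
  refine Measure.ext_of_charFun ?_
  ext t
  have := key μ₁ h₁ t
  simp_rw [h] at this
  exact this.unique (key μ₂ h₂ t)

variable {n : ℕ} [NeZero n]

/-- The mean width constant `∫ |e·y| dν(y)`. -/
def cabs (n : ℕ) [NeZero n] : ℝ := ∫ y, |⟪e0 n, y⟫| ∂(nu n)

/-- Integrals of zonal functions depend only on the length of the axis. -/
lemma nu_zonal (F : ℝ → ℝ) (u : Euc n) :
    ∫ y, F ⟪u, y⟫ ∂(nu n) = ∫ y, F (‖u‖ * ⟪e0 n, y⟫) ∂(nu n) := by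
  by_cases hu : u = 0
  · simp [hu]
  have hu' : ‖u‖ ≠ 0 := by simpa using hu
  obtain ⟨g, hg⟩ := exists_oact_single (e0 n) (‖u‖⁻¹ • u) (norm_e0 n)
    (by rw [norm_smul, norm_inv, norm_norm, inv_mul_cancel₀ hu'])
  have hu2 : u = oact g (‖u‖ • e0 n) := by
    rw [map_smul, ← hg, smul_smul, mul_inv_cancel₀ hu', one_smul]
  have := (nu_mp n (oact g)).integral_comp (oact g).toHomeomorph.measurableEmbedding
    (fun y => F ⟪u, y⟫)
  rw [← this]
  refine integral_congr_ae (.of_forall fun y => ?_)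
  simp only
  conv_lhs => rw [hu2, LinearIsometryEquiv.inner_map_map, inner_smul_left]
  simp

lemma nu_abs (u : Euc n) : ∫ y, |⟪u, y⟫| ∂(nu n) = cabs n * ‖u‖ := by
  rw [nu_zonal (fun t => |t|) u, cabs, mul_comm, ← integral_const_mul]
  simp [abs_mul]

lemma cabs_pos : 0 < cabs n := by
  have h0 : 0 ≤ cabs n := integral_nonneg fun y => abs_nonneg _
  rcases h0.lt_or_eq with h | h
  · exact h
  exfalso
  have h1 : ∀ u : Euc n, ∀ᵐ y ∂(nu n), ⟪u, y⟫ = 0 := by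
    intro u
    have h2 := nu_abs u
    rw [← h, zero_mul, integral_eq_zero_iff_of_nonneg (fun y => abs_nonneg _)
      (integrable_of_bound_sphere (nu_sphere n) (by fun_prop) ‖u‖ fun x hx => by
        rw [abs_abs]; exact abs_inner_le_of_unit u x hx)] at h2
    filter_upwards [h2] with y hy using by simpa using hy
  have h2 : ∀ᵐ y ∂(nu n), ∀ i, ⟪EuclideanSpace.single i (1 : ℝ), y⟫ = 0 :=
    ae_all_iff.2 fun i => h1 _
  have h3 : ∀ᵐ y ∂(nu n), False := by
    filter_upwards [h2, nu_sphere n] with y hy hn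
    have : y = 0 := by
      ext i; simpa [EuclideanSpace.inner_single_left] using hy i
    simp [this] at hn
  rw [ae_iff] at h3
  simp at h3

/-- Derivatives of `t ↦ ∫ q^k (1 + t q)^{1/2-k}`. -/
lemma deriv_step (μ : Measure (Euc n)) [IsFiniteMeasure μ] (hμ : ∀ᵐ x ∂μ, ‖x‖ = 1)
    (a : Euc n) (ha : ‖a‖ = 1) (k : ℕ) (t : ℝ) (ht : t ∈ Ioo (-1/2 : ℝ) (1/2)) :
    HasDerivAt (fun t : ℝ => ∫ x, (⟪a, x⟫ ^ 2) ^ k * (1 + t * ⟪a, x⟫ ^ 2) ^ ((1/2 : ℝ) - k) ∂μ)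
      (((1/2 : ℝ) - k) * ∫ x, (⟪a, x⟫ ^ 2) ^ (k + 1) *
        (1 + t * ⟪a, x⟫ ^ 2) ^ ((1/2 : ℝ) - (k + 1 : ℕ)) ∂μ) t := by
  have hq : ∀ x : Euc n, ‖x‖ = 1 → 0 ≤ ⟪a, x⟫ ^ 2 ∧ ⟪a, x⟫ ^ 2 ≤ 1 := fun x hx =>
    ⟨sq_nonneg _, by
      have := abs_inner_le_of_unit a x hx
      rw [ha] at this
      exact (sq_le_one_iff_abs_le_one _).2 this⟩
  have hpos : ∀ s ∈ Ioo (-1/2 : ℝ) (1/2), ∀ q : ℝ, 0 ≤ q → q ≤ 1 →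
      1/2 ≤ 1 + s * q ∧ 1 + s * q ≤ 3/2 := by
    intro s hs q h0 h1
    constructor <;> nlinarith [hs.1, hs.2]
  have hbd : ∀ r : ℝ, ∃ C : ℝ, ∀ y ∈ Icc (1/2 : ℝ) (3/2), |y ^ r| ≤ C := by
    intro r
    have : ContinuousOn (fun y : ℝ => y ^ r) (Icc (1/2 : ℝ) (3/2)) := by
      refine continuousOn_id.rpow_const fun y hy => Or.inl ?_
      simp only [id]; linarith [hy.1]
    obtain ⟨C, hC⟩ := isCompact_Icc.exists_bound_of_continuousOn this
    exact ⟨C, fun y hy => hC y hy⟩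
  obtain ⟨C0, hC0⟩ := hbd ((1/2 : ℝ) - k)
  obtain ⟨C1, hC1⟩ := hbd ((1/2 : ℝ) - (k + 1 : ℕ))
  rw [← integral_const_mul]
  refine (hasDerivAt_integral_of_dominated_loc_of_deriv_le
    (F := fun t x => (⟪a, x⟫ ^ 2) ^ k * (1 + t * ⟪a, x⟫ ^ 2) ^ ((1/2 : ℝ) - k))
    (F' := fun t x => ((1/2 : ℝ) - k) * ((⟪a, x⟫ ^ 2) ^ (k + 1) *
        (1 + t * ⟪a, x⟫ ^ 2) ^ ((1/2 : ℝ) - (k + 1 : ℕ))))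
    (bound := fun _ => |(1/2 : ℝ) - k| * C1)
    (s := Ioo (-1/2 : ℝ) (1/2)) (isOpen_Ioo.mem_nhds ht) ?_ ?_ ?_ ?_ ?_ ?_).2
  · exact .of_forall fun t => Measurable.aestronglyMeasurable (by fun_prop)
  · refine integrable_of_bound_sphere hμ (by fun_prop) C0 fun x hx => ?_
    rw [abs_mul, abs_of_nonneg (pow_nonneg (hq x hx).1 _)]
    calc _ ≤ 1 * C0 := mul_le_mul (pow_le_one₀ (hq x hx).1 (hq x hx).2)
          (hC0 _ (hpos t ht _ (hq x hx).1 (hq x hx).2)) (abs_nonneg _) zero_le_one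
      _ = C0 := one_mul _
  · exact Measurable.aestronglyMeasurable (by fun_prop)
  · filter_upwards [hμ] with x hx s hs
    rw [Real.norm_eq_abs, abs_mul, abs_mul, abs_of_nonneg (pow_nonneg (hq x hx).1 _)]
    refine mul_le_mul_of_nonneg_left ?_ (abs_nonneg _)
    calc _ ≤ 1 * C1 := mul_le_mul (pow_le_one₀ (hq x hx).1 (hq x hx).2)
          (hC1 _ (hpos s hs _ (hq x hx).1 (hq x hx).2)) (abs_nonneg _) zero_le_one
      _ = C1 := one_mul _
  · exact integrable_const _
  · filter_upwards [hμ] with x hx s hs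
    have hp := (hpos s hs _ (hq x hx).1 (hq x hx).2).1
    have h1 : HasDerivAt (fun s : ℝ => 1 + s * ⟪a, x⟫ ^ 2) (⟪a, x⟫ ^ 2) s := by
      simpa using ((hasDerivAt_id s).mul_const (⟪a, x⟫ ^ 2)).const_add 1
    have h2 := (h1.rpow_const (p := (1/2 : ℝ) - k) (Or.inl (by positivity))).const_mul
      ((⟪a, x⟫ ^ 2) ^ k)
    refine h2.congr_deriv ?_
    have : (1/2 : ℝ) - (k + 1 : ℕ) = 1/2 - k - 1 := by push_cast; ring
    rw [this]; ring

/-- Injectivity of the cosine transform on even measures. -/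
lemma cos_unique (μ₁ μ₂ : Measure (Euc n)) [IsFiniteMeasure μ₁] [IsFiniteMeasure μ₂]
    (h₁ : ∀ᵐ x ∂μ₁, ‖x‖ = 1) (h₂ : ∀ᵐ x ∂μ₂, ‖x‖ = 1)
    (e₁ : μ₁.map (fun x => -x) = μ₁) (e₂ : μ₂.map (fun x => -x) = μ₂)
    (h : ∀ u : Euc n, ∫ x, |⟪u, x⟫| ∂μ₁ = ∫ x, |⟪u, x⟫| ∂μ₂) : μ₁ = μ₂ := by
  -- the square-root integrals, obtained by integrating the hypothesis over `u = y + s (a·y) a`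
  have hfub : ∀ (μ : Measure (Euc n)) [IsFiniteMeasure μ], (∀ᵐ x ∂μ, ‖x‖ = 1) →
      ∀ (a : Euc n) (s : ℝ), ∫ y, ∫ x, |⟪y + (s * ⟪a, y⟫) • a, x⟫| ∂μ ∂(nu n) =
        cabs n * ∫ x, ‖x + (s * ⟪a, x⟫) • a‖ ∂μ := by
    intro μ _ hμ a s
    rw [integral_integral_swap, ← integral_const_mul]
    · refine integral_congr_ae (.of_forall fun x => ?_)
      simp only
      rw [← nu_abs]
      refine integral_congr_ae (.of_forall fun y => ?_)
      simp only [inner_add_left, inner_smul_left, inner_add_right, inner_smul_right,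
        real_inner_comm, RCLike.conj_to_real]
      congr 1
      ring
    · refine Integrable.of_bound (Measurable.aestronglyMeasurable (by fun_prop))
        ((1 + |s| * ‖a‖ * ‖a‖)) ?_
      filter_upwards [Measure.quasiMeasurePreserving_fst.ae (nu_sphere n),
        Measure.quasiMeasurePreserving_snd.ae hμ] with p h1 h2
      simp only [Function.uncurry, Real.norm_eq_abs, abs_abs]
      refine (abs_inner_le_of_unit _ _ h2).trans ((norm_add_le _ _).trans ?_)
      rw [h1, norm_smul, Real.norm_eq_abs, abs_mul]
      gcongr
      exact abs_inner_le_of_unit a _ h1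
  have hsqrt : ∀ a : Euc n, ‖a‖ = 1 → ∀ t ∈ Ioo (-1/2 : ℝ) (1/2),
      ∫ x, (1 + t * ⟪a, x⟫ ^ 2) ^ (1/2 : ℝ) ∂μ₁ = ∫ x, (1 + t * ⟪a, x⟫ ^ 2) ^ (1/2 : ℝ) ∂μ₂ := by
    intro a ha t ht
    set s : ℝ := √(1 + t) - 1 with hs
    have hst : 2 * s + s ^ 2 = t := by
      have := Real.sq_sqrt (show (0 : ℝ) ≤ 1 + t by linarith [ht.1])
      rw [hs]; linarith [this, sq (√(1 + t) - 1)]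
    have e : ∀ x : Euc n, ‖x‖ = 1 →
        ‖x + (s * ⟪a, x⟫) • a‖ = (1 + t * ⟪a, x⟫ ^ 2) ^ (1/2 : ℝ) := by
      intro x hx
      have h1 : ‖x + (s * ⟪a, x⟫) • a‖ ^ 2 = 1 + t * ⟪a, x⟫ ^ 2 := by
        rw [norm_add_sq_real, hx, norm_smul, ha, inner_smul_right, Real.norm_eq_abs, mul_one,
          sq_abs, real_inner_comm, ← hst]
        ring
      rw [← Real.sqrt_eq_rpow, ← h1, Real.sqrt_sq (norm_nonneg _)]
    have e' : ∀ (μ : Measure (Euc n)), (∀ᵐ x ∂μ, ‖x‖ = 1) →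
        ∫ x, ‖x + (s * ⟪a, x⟫) • a‖ ∂μ = ∫ x, (1 + t * ⟪a, x⟫ ^ 2) ^ (1/2 : ℝ) ∂μ := by
      intro μ hμ
      exact integral_congr_ae (by filter_upwards [hμ] with x hx using e x hx)
    rw [← e' μ₁ h₁, ← e' μ₂ h₂]
    have := hfub μ₁ h₁ a s
    simp_rw [h] at this
    rw [hfub μ₂ h₂ a s] at this
    exact (mul_left_cancel₀ cabs_pos.ne' this).symm
  have hk : ∀ a : Euc n, ‖a‖ = 1 → ∀ k : ℕ, ∀ t ∈ Ioo (-1/2 : ℝ) (1/2),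
      ∫ x, (⟪a, x⟫ ^ 2) ^ k * (1 + t * ⟪a, x⟫ ^ 2) ^ ((1/2 : ℝ) - k) ∂μ₁ =
      ∫ x, (⟪a, x⟫ ^ 2) ^ k * (1 + t * ⟪a, x⟫ ^ 2) ^ ((1/2 : ℝ) - k) ∂μ₂ := by
    intro a ha k
    induction k with
    | zero => simpa using hsqrt a ha
    | succ k ih =>
      intro t ht
      have d1 := deriv_step μ₁ h₁ a ha k t ht
      have d2 := deriv_step μ₂ h₂ a ha k t ht
      have d3 := d2.congr_of_eventuallyEq
        (by filter_upwards [isOpen_Ioo.mem_nhds ht] with s hs using ih s hs)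
      refine mul_left_cancel₀ ?_ (d1.unique d3)
      intro h0
      have : (1 : ℝ) = ((2 * k : ℕ) : ℝ) := by push_cast; linarith
      have : 1 = 2 * k := by exact_mod_cast this
      omega
  have heven : ∀ (a : Euc n) (k : ℕ), ∫ x, ⟪a, x⟫ ^ (2 * k) ∂μ₁ = ∫ x, ⟪a, x⟫ ^ (2 * k) ∂μ₂ := by
    intro a k
    by_cases ha : a = 0
    · have := hk (e0 n) (norm_e0 n) 0 0 (by norm_num)
      rcases k with _ | k
      · simpa using this
      · simp [ha]
    have ha' : ‖a‖ ≠ 0 := by simpa using ha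
    have := hk (‖a‖⁻¹ • a) (by rw [norm_smul, norm_inv, norm_norm, inv_mul_cancel₀ ha']) k 0
      (by norm_num)
    simp only [zero_mul, add_zero, Real.one_rpow, mul_one, inner_smul_left, mul_pow,
      integral_const_mul, RCLike.conj_to_real] at this
    simpa [pow_mul] using mul_left_cancel₀ (by positivity) this
  have hodd : ∀ (μ : Measure (Euc n)), μ.map (fun x => -x) = μ → ∀ (a : Euc n) (k : ℕ),
      ∫ x, ⟪a, x⟫ ^ (2 * k + 1) ∂μ = 0 := by
    intro μ hμ a k
    have : ∫ x, ⟪a, x⟫ ^ (2 * k + 1) ∂μ = ∫ x, ⟪a, -x⟫ ^ (2 * k + 1) ∂μ := by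
      conv_lhs => rw [← hμ]
      rw [integral_map (by fun_prop) (Measurable.aestronglyMeasurable (by fun_prop))]
    simp only [inner_neg_right, Odd.neg_pow ⟨k, rfl⟩, integral_neg] at this
    linarith
  refine moments_ext μ₁ μ₂ h₁ h₂ fun a k => ?_
  rcases Nat.even_or_odd' k with ⟨j, rfl | rfl⟩
  · exact heven a j
  · rw [hodd μ₁ e₁, hodd μ₂ e₂]

end

/-! ### A spectral bound for triangular symmetric operators; moments -/

section

/-- A symmetric operator that is triangular, with diagonal entries `lam j`, with respect to a
dense increasing sequence of closed subspaces is bounded by `κ` on the complement of the third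
subspace as soon as `|lam j| ≤ κ` for `j ≥ 3`. -/
lemma spectral_abs {H : Type*} [NormedAddCommGroup H] [InnerProductSpace ℝ H] [CompleteSpace H]
    (R : H →L[ℝ] H) (hsym : ∀ x y, ⟪R x, y⟫ = ⟪x, R y⟫) (V : ℕ → Submodule ℝ H)
    (hcl : ∀ j, IsClosed (V j : Set H)) (mono : Monotone V) (lam : ℕ → ℝ) (κ : ℝ) (hκ : 0 ≤ κ)
    (hV : ∀ j, ∀ x ∈ V (j + 1), R x - lam (j + 1) • x ∈ V j)
    (hR : ∀ j, ∀ x ∈ V j, R x ∈ V j)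
    (hlam : ∀ j, 3 ≤ j → |lam j| ≤ κ)
    (dense : ∀ h, (∀ j, ∀ v ∈ V j, ⟪v, h⟫ = 0) → h = 0) :
    ∀ g ∈ (V 2)ᗮ, ‖R g‖ ≤ κ * ‖g‖ := by
  have hop : ∀ j, (V j).HasOrthogonalProjection := fun j => by
    have : CompleteSpace (V j) := (hcl j).completeSpace_coe
    infer_instance
  have fin : ∀ j, 2 ≤ j → ∀ g ∈ V j, g ∈ (V 2)ᗮ → ‖R g‖ ≤ κ * ‖g‖ := by
    intro j hj
    induction j, hj using Nat.le_induction with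
    | base =>
      intro g h1 h2
      have : g = 0 := by
        have := Submodule.inner_right_of_mem_orthogonal h1 h2
        exact inner_self_eq_zero.1 this
      simp [this]
    | succ j hj ih =>
      intro g h1 h2
      have := hop j
      set p : H := (V j).starProjection g with hp
      set q : H := g - p with hq
      have hpj : p ∈ V j := Submodule.starProjection_apply_mem _ _
      have hqj : q ∈ (V j)ᗮ := Submodule.sub_starProjection_mem_orthogonal _
      have hq1 : q ∈ V (j + 1) := Submodule.sub_mem _ h1 (mono (Nat.le_succ j) hpj)
      have hRq : R q = lam (j + 1) • q := by
        have a1 := hV j q hq1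
        have a2 : R q - lam (j + 1) • q ∈ (V j)ᗮ := by
          refine Submodule.sub_mem _ ?_ (Submodule.smul_mem _ _ hqj)
          rw [Submodule.mem_orthogonal]
          intro v hv
          rw [← hsym]
          exact Submodule.inner_right_of_mem_orthogonal (hR j v hv) hqj
        have := Submodule.inner_right_of_mem_orthogonal a1 a2
        exact sub_eq_zero.1 (inner_self_eq_zero.1 this)
      have hp2 : p ∈ (V 2)ᗮ := by
        have : p = g - q := by rw [hq]; abel
        rw [this]
        exact Submodule.sub_mem _ h2 (Submodule.orthogonal_le (mono hj) hqj)
      have o1 : ⟪p, q⟫ = 0 := Submodule.inner_right_of_mem_orthogonal hpj hqj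
      have o2 : ⟪R p, R q⟫ = 0 := by
        rw [hRq, inner_smul_right,
          Submodule.inner_right_of_mem_orthogonal (hR j p hpj) hqj, mul_zero]
      have hg : g = p + q := by rw [hq]; abel
      have n1 : ‖g‖ ^ 2 = ‖p‖ ^ 2 + ‖q‖ ^ 2 := by
        rw [hg, norm_add_sq_real, o1]; ring
      have n2 : ‖R g‖ ^ 2 = ‖R p‖ ^ 2 + ‖R q‖ ^ 2 := by
        rw [hg, map_add, norm_add_sq_real, o2]; ring
      have n3 : ‖R q‖ ≤ κ * ‖q‖ := by
        rw [hRq, norm_smul, Real.norm_eq_abs]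
        exact mul_le_mul_of_nonneg_right (hlam _ (by omega)) (norm_nonneg _)
      have n4 := ih p hpj hp2
      refine (sq_le_sq₀ (norm_nonneg _) (by positivity)).1 ?_
      rw [n2, mul_pow, n1]
      nlinarith [pow_le_pow_left₀ (norm_nonneg _) n3 2, pow_le_pow_left₀ (norm_nonneg _) n4 2]
  intro g hg
  have := hop 2
  -- the union of the `V j` is dense
  let U : Submodule ℝ H := ⨆ j, V j
  have hU : U.topologicalClosure = ⊤ := by
    rw [Submodule.topologicalClosure_eq_top_iff, Submodule.eq_bot_iff]
    intro h hh
    refine dense h fun j v hv => ?_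
    exact Submodule.inner_right_of_mem_orthogonal (Submodule.mem_iSup_of_mem j hv) hh
  have hU' : ∀ u ∈ U, ∃ j, 2 ≤ j ∧ u ∈ V j := by
    intro u hu
    obtain ⟨j, hj⟩ := (Submodule.mem_iSup_of_directed V mono.directed_le).1 hu
    exact ⟨max j 2, le_max_right _ _, mono (le_max_left _ _) hj⟩
  -- a closed condition which holds on the union
  let Q : H →L[ℝ] H := (V 2)ᗮ.starProjection
  have hQ : ∀ x ∈ closure (U : Set H), ‖R (Q x)‖ ≤ κ * ‖Q x‖ := by
    intro x hx
    have hc : IsClosed {x | ‖R (Q x)‖ ≤ κ * ‖Q x‖} :=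
      isClosed_le (by fun_prop) (by fun_prop)
    refine closure_minimal (fun u hu => ?_) hc hx
    obtain ⟨j, hj, huj⟩ := hU' u hu
    refine fin j hj _ ?_ (Submodule.starProjection_apply_mem _ _)
    have : Q u = u - (V 2).starProjection u := by
      simp [Q, Submodule.starProjection_orthogonal']
    rw [this]
    exact Submodule.sub_mem _ huj (mono hj (Submodule.starProjection_apply_mem _ _))
  have := hQ g (by
    have : (closure (U : Set H)) = (U.topologicalClosure : Set H) := rfl
    rw [this, hU]; trivial)
  have hQg : Q g = g := Submodule.starProjection_eq_self_iff.2 hg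
  rwa [hQg] at this

variable {m : ℕ} [NeZero m]

/-- The embedding of `ℝᵐ` as the orthogonal complement of the first vector in `ℝ^{m+1}`. -/
def emb (z : Euc m) : Euc (m + 1) := WithLp.toLp 2 (Fin.cons 0 (fun i => z i) : Fin (m + 1) → ℝ)

/-- The adjoint of `emb`: dropping the first coordinate. -/
def tl (b : Euc (m + 1)) : Euc m := WithLp.toLp 2 (fun i : Fin m => b i.succ)

lemma inner_emb (b : Euc (m + 1)) (z : Euc m) : ⟪b, emb z⟫ = ⟪tl b, z⟫ := by
  simp [emb, tl, PiLp.inner_apply, Fin.sum_univ_succ]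

lemma norm_tl_sq (b : Euc (m + 1)) : ‖tl b‖ ^ 2 = ‖b‖ ^ 2 - ⟪b, e0 (m + 1)⟫ ^ 2 := by
  simp [tl, EuclideanSpace.norm_sq_eq, Fin.sum_univ_succ, e0, EuclideanSpace.inner_single_right]

lemma norm_emb (z : Euc m) : ‖emb z‖ = ‖z‖ := by
  have : ‖emb z‖ ^ 2 = ‖z‖ ^ 2 := by
    simp [emb, EuclideanSpace.norm_sq_eq, Fin.sum_univ_succ]
  exact (sq_eq_sq₀ (norm_nonneg _) (norm_nonneg _)).1 this

lemma inner_emb_e0 (z : Euc m) : ⟪emb z, e0 (m + 1)⟫ = 0 := by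
  simp [emb, e0, EuclideanSpace.inner_single_right]

lemma measurable_emb : Measurable (emb : Euc m → Euc (m + 1)) := by
  unfold emb
  refine (PiLp.continuous_toLp 2 _).measurable.comp (measurable_pi_iff.2 fun i => ?_)
  refine Fin.cases ?_ (fun j => ?_) i
  · simp
  · simp only [Fin.cons_succ]; fun_prop

/-- The moments of one coordinate of a uniform point of the unit sphere of `ℝᵐ`. -/
def mom (m : ℕ) [NeZero m] (k : ℕ) : ℝ := ∫ z, ⟪e0 m, z⟫ ^ k ∂(nu m)

lemma nu_mom (a : Euc m) (k : ℕ) : ∫ z, ⟪a, z⟫ ^ k ∂(nu m) = mom m k * ‖a‖ ^ k := by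
  rw [nu_zonal (fun t => t ^ k) a, mom, mul_comm, ← integral_const_mul]
  simp [mul_pow]

/-- The fibre of the law of a random orthonormal pair over its second vector is uniform. -/
lemma pr_moment (a : Euc (m + 1)) (k : ℕ) (g : Euc (m + 1) → ℝ) (hgm : Measurable g)
    (hg : Integrable g (nu (m + 1))) :
    ∫ p, ⟪a, p.1⟫ ^ k * g p.2 ∂(pr m) =
      mom m k * ∫ v, √(‖a‖ ^ 2 - ⟪a, v⟫ ^ 2) ^ k * g v ∂(nu (m + 1)) := by
  have h1 : ∀ y : Euc (m + 1), ‖y‖ = 1 → ⟪y, e0 (m + 1)⟫ = 0 →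
      ∫ p, ⟪a, p.1⟫ ^ k * g p.2 ∂(pr m) =
        ∫ h, ⟪a, oact h y⟫ ^ k * g (oact h (e0 (m + 1))) ∂(haarO (m + 1)) := by
    intro y hy hy0
    rw [pr_eq y (e0 (m + 1)) hy (norm_e0 _) hy0, integral_map (measurable_pair _ _).aemeasurable]
    exact (Measurable.aestronglyMeasurable (by fun_prop))
  have hgi : Integrable (fun h : OG (m + 1) => g (oact h (e0 (m + 1)))) (haarO (m + 1)) := by
    have := hg
    rw [nu, integrable_map_measure hgm.aestronglyMeasurable
      (measurable_oact_left _).aemeasurable] at this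
    exact this
  have hmeas : Measurable fun p : Euc m × OG (m + 1) => oact p.2 (emb p.1) := by
    exact measurable_oact_joint measurable_snd (measurable_emb.comp measurable_fst)
  calc ∫ p, ⟪a, p.1⟫ ^ k * g p.2 ∂(pr m)
      = ∫ z, ∫ h, ⟪a, oact h (emb z)⟫ ^ k * g (oact h (e0 (m + 1))) ∂(haarO (m + 1)) ∂(nu m) := by
        have : ∀ᵐ z ∂(nu m), ∫ h, ⟪a, oact h (emb z)⟫ ^ k * g (oact h (e0 (m + 1)))
            ∂(haarO (m + 1)) = ∫ p, ⟪a, p.1⟫ ^ k * g p.2 ∂(pr m) := by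
          filter_upwards [nu_sphere m] with z hz
          rw [h1 (emb z) (by rw [norm_emb, hz]) (inner_emb_e0 z)]
        rw [integral_congr_ae this]
        simp
    _ = ∫ h, ∫ z, ⟪a, oact h (emb z)⟫ ^ k * g (oact h (e0 (m + 1))) ∂(nu m) ∂(haarO (m + 1)) := by
        refine integral_integral_swap ?_
        refine Integrable.mono' (g := fun p => ‖a‖ ^ k * |g (oact p.2 (e0 (m + 1)))|)
          ((hgi.abs.const_mul _).comp_snd _) ?_ ?_
        · refine Measurable.aestronglyMeasurable ?_
          exact ((measurable_const.inner hmeas).pow_const k).mul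
            (hgm.comp ((measurable_oact_left _).comp measurable_snd))
        · filter_upwards [Measure.quasiMeasurePreserving_fst.ae (nu_sphere m)] with p hp
          simp only [Function.uncurry, Real.norm_eq_abs, abs_mul, abs_pow]
          gcongr
          exact abs_inner_le_of_unit _ _ (by rw [LinearIsometryEquiv.norm_map, norm_emb, hp])
    _ = ∫ h, mom m k * (√(‖a‖ ^ 2 - ⟪a, oact h (e0 (m + 1))⟫ ^ 2) ^ k *
          g (oact h (e0 (m + 1)))) ∂(haarO (m + 1)) := by
        refine integral_congr_ae (.of_forall fun h => ?_)
        simp only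
        rw [integral_mul_const]
        have e : ∀ y, ⟪a, oact h y⟫ = ⟪(oact h).symm a, y⟫ := fun y => by
          rw [← LinearIsometryEquiv.inner_map_map (oact h) ((oact h).symm a) y]; simp
        simp_rw [e, inner_emb, nu_mom]
        have : ‖tl ((oact h).symm a)‖ =
            √(‖a‖ ^ 2 - ⟪(oact h).symm a, e0 (m + 1)⟫ ^ 2) := by
          rw [← Real.sqrt_sq (norm_nonneg (tl _)), norm_tl_sq, LinearIsometryEquiv.norm_map]
        rw [this]; ring
    _ = _ := by
        rw [integral_const_mul, nu, integral_map (measurable_oact_left _).aemeasurable]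
        exact Measurable.aestronglyMeasurable (by fun_prop)

end

/-! ### The spherical Radon transform on L² -/

section

variable {m : ℕ} [NeZero m]

/-- The Hilbert space `L²` of the sphere of `ℝ^{m+1}`. -/
abbrev L2S (m : ℕ) : Type := Lp ℝ 2 (nu (m + 1))

lemma mp_fst : MeasurePreserving Prod.fst (pr m) (nu (m + 1)) := ⟨measurable_fst, pr_map_fst⟩
lemma mp_snd : MeasurePreserving Prod.snd (pr m) (nu (m + 1)) := ⟨measurable_snd, pr_map_snd⟩

/-- The spherical Radon transform on `L²`, through the law of random orthonormal pairs:
`⟪R f, g⟫ = E[f(x) g(v)]`. -/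
def Rop (m : ℕ) [NeZero m] : L2S m →L[ℝ] L2S m :=
  (ContinuousLinearMap.adjoint
    (Lp.compMeasurePreservingₗᵢ ℝ Prod.snd (mp_snd (m := m))
      (E := ℝ) (p := 2)).toContinuousLinearMap).comp
    (Lp.compMeasurePreservingₗᵢ ℝ Prod.fst (mp_fst (m := m))
      (E := ℝ) (p := 2)).toContinuousLinearMap

lemma inner_Rop (f g : L2S m) : ⟪Rop m f, g⟫ = ∫ p, f p.1 * g p.2 ∂(pr m) := by
  unfold Rop
  rw [ContinuousLinearMap.comp_apply, ContinuousLinearMap.adjoint_inner_left, L2.inner_def]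
  refine integral_congr_ae ?_
  have h1 := Lp.coeFn_compMeasurePreserving f (mp_fst (m := m))
  have h2 := Lp.coeFn_compMeasurePreserving g (mp_snd (m := m))
  filter_upwards [h1, h2] with p h1 h2
  have e1 : (((Lp.compMeasurePreservingₗᵢ ℝ Prod.fst (mp_fst (m := m))).toContinuousLinearMap f
    : Lp ℝ 2 (pr m)) : Euc (m + 1) × Euc (m + 1) → ℝ) p = f p.1 := h1
  have e2 : (((Lp.compMeasurePreservingₗᵢ ℝ Prod.snd (mp_snd (m := m))).toContinuousLinearMap g
    : Lp ℝ 2 (pr m)) : Euc (m + 1) × Euc (m + 1) → ℝ) p = g p.2 := h2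
  rw [e1, e2]
  simp [mul_comm]

lemma Rop_symm (f g : L2S m) : ⟪Rop m f, g⟫ = ⟪f, Rop m g⟫ := by
  rw [real_inner_comm (Rop m g) f, inner_Rop, inner_Rop]
  have : MeasurePreserving Prod.swap (pr m) (pr m) := ⟨measurable_swap, pr_swap⟩
  rw [← this.integral_comp MeasurableEquiv.prodComm.measurableEmbedding]
  simp [mul_comm]

lemma memLp_pow (a : Euc (m + 1)) (k : ℕ) : MemLp (fun x => ⟪a, x⟫ ^ k) 2 (nu (m + 1)) := by
  refine MemLp.of_bound (Measurable.aestronglyMeasurable (by fun_prop)) (‖a‖ ^ k) ?_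
  filter_upwards [nu_sphere (m + 1)] with x hx
  rw [norm_pow]
  exact pow_le_pow_left₀ (norm_nonneg _) (abs_inner_le_of_unit a x hx) k

/-- The powers of linear forms, as elements of `L²`. -/
def pwL (a : Euc (m + 1)) (k : ℕ) : L2S m := (memLp_pow a k).toLp _

lemma inner_pwL (a : Euc (m + 1)) (k : ℕ) (g : L2S m) :
    ⟪pwL a k, g⟫ = ∫ v, ⟪a, v⟫ ^ k * g v ∂(nu (m + 1)) := by
  rw [L2.inner_def]
  refine integral_congr_ae ?_
  filter_upwards [(memLp_pow a k).coeFn_toLp] with v hv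
  rw [pwL, hv]; simp [mul_comm]

lemma integrable_L2S (g : L2S m) : Integrable g (nu (m + 1)) :=
  (Lp.memLp g).integrable (by norm_num)

lemma integrable_pow_mul (a : Euc (m + 1)) (k : ℕ) (g : L2S m) :
    Integrable (fun v => ⟪a, v⟫ ^ k * g v) (nu (m + 1)) :=
  (integrable_L2S g).bdd_mul (c := ‖a‖ ^ k) (Measurable.aestronglyMeasurable (by fun_prop))
    (by
      filter_upwards [nu_sphere (m + 1)] with x hx
      rw [norm_pow]
      exact pow_le_pow_left₀ (norm_nonneg _) (abs_inner_le_of_unit a x hx) k)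

lemma inner_Rop_pwL (a : Euc (m + 1)) (k : ℕ) (g : L2S m) :
    ⟪Rop m (pwL a k), g⟫ =
      mom m k * ∫ v, √(‖a‖ ^ 2 - ⟪a, v⟫ ^ 2) ^ k * g v ∂(nu (m + 1)) := by
  rw [inner_Rop, ← pr_moment a k g (Lp.stronglyMeasurable g).measurable (integrable_L2S g)]
  refine integral_congr_ae ?_
  filter_upwards [mp_fst.quasiMeasurePreserving.ae (memLp_pow a k).coeFn_toLp] with p hp
  rw [pwL, hp]

lemma mom_odd (i : ℕ) : mom m (2 * i + 1) = 0 := by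
  have h := nu_mom (-(e0 m)) (2 * i + 1)
  simp only [inner_neg_left, Odd.neg_pow ⟨i, rfl⟩, integral_neg, norm_neg, norm_e0, one_pow,
    mul_one] at h
  rw [← mom] at h
  linarith

lemma Rop_pwL_odd (a : Euc (m + 1)) (i : ℕ) : Rop m (pwL a (2 * i + 1)) = 0 := by
  refine ext_inner_right ℝ fun g => ?_
  rw [inner_Rop_pwL, mom_odd, zero_mul, inner_zero_left]

/-- On the slice `v^⊥` the power `⟪a,·⟫^{2i}` averages to a moment times `(‖a‖² - ⟪a,v⟫²)^i`;
the binomial expansion shows that `R` is triangular with respect to the degree. -/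
lemma Rop_pwL_even (a : Euc (m + 1)) (i : ℕ) : Rop m (pwL a (2 * i)) =
    ∑ l ∈ Finset.range (i + 1),
      (mom m (2 * i) * ((-1) ^ l * (‖a‖ ^ 2) ^ (i - l) * (i.choose l))) • pwL a (2 * l) := by
  refine ext_inner_right ℝ fun g => ?_
  rw [inner_Rop_pwL, sum_inner]
  simp_rw [inner_smul_left, inner_pwL, RCLike.conj_to_real, mul_assoc (mom m (2 * i))]
  rw [← Finset.mul_sum]
  congr 1
  simp_rw [← integral_const_mul]
  rw [← integral_finsetSum _ fun l _ => (integrable_pow_mul a (2 * l) g).const_mul _]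
  refine integral_congr_ae ?_
  filter_upwards [nu_sphere (m + 1)] with v hv
  have h0 : 0 ≤ ‖a‖ ^ 2 - ⟪a, v⟫ ^ 2 := by
    have := abs_inner_le_of_unit a v hv
    rw [sub_nonneg]; exact sq_le_sq' (by linarith [abs_le.1 this]) (abs_le.1 this).2
  rw [pow_mul, Real.sq_sqrt h0, sub_eq_neg_add, add_pow, Finset.sum_mul]
  refine Finset.sum_congr rfl fun l _ => ?_
  rw [neg_pow, pow_mul]; ring

/-- Closed span of the powers of linear forms of degree at most `j`. -/
def VL (m : ℕ) [NeZero m] (j : ℕ) : Submodule ℝ (L2S m) :=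
  (Submodule.span ℝ {f | ∃ (a : Euc (m + 1)) (k : ℕ), k ≤ j ∧ f = pwL a k}).topologicalClosure

lemma pwL_mem (a : Euc (m + 1)) {k j : ℕ} (h : k ≤ j) : pwL a k ∈ VL m j :=
  Submodule.le_topologicalClosure _ (Submodule.subset_span ⟨a, k, h, rfl⟩)

lemma VL_mono : Monotone (VL m) := fun i j h =>
  Submodule.topologicalClosure_mono (Submodule.span_mono fun f ⟨a, k, hk, e⟩ =>
    ⟨a, k, hk.trans h, e⟩)

lemma VL_le {j : ℕ} (T : L2S m →L[ℝ] L2S m) (W : Submodule ℝ (L2S m)) (hW : IsClosed (W : Set (L2S m)))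
    (h : ∀ a k, k ≤ j → T (pwL a k) ∈ W) : ∀ x ∈ VL m j, T x ∈ W := by
  have hc : IsClosed ((W.comap T.toLinearMap : Submodule ℝ (L2S m)) : Set (L2S m)) :=
    hW.preimage T.continuous
  have : VL m j ≤ W.comap T.toLinearMap := by
    refine Submodule.topologicalClosure_minimal _ (Submodule.span_le.2 ?_) hc
    rintro f ⟨a, k, hk, rfl⟩
    exact h a k hk
  exact fun x hx => this hx

/-- The multipliers of the Radon transform. -/
def lamR (m : ℕ) [NeZero m] (k : ℕ) : ℝ := if Even k then (-1) ^ (k / 2) * mom m k else 0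

lemma Rop_pwL_mem (a : Euc (m + 1)) {k j : ℕ} (h : k ≤ j) : Rop m (pwL a k) ∈ VL m j := by
  rcases Nat.even_or_odd' k with ⟨i, rfl | rfl⟩
  · rw [Rop_pwL_even]
    refine Submodule.sum_mem _ fun l hl => Submodule.smul_mem _ _ (pwL_mem a ?_)
    have := Finset.mem_range.1 hl; omega
  · rw [Rop_pwL_odd]; exact Submodule.zero_mem _

lemma VL_closed (j : ℕ) : IsClosed (VL m j : Set (L2S m)) :=
  Submodule.isClosed_topologicalClosure _

lemma Rop_VL (j : ℕ) : ∀ x ∈ VL m j, Rop m x ∈ VL m j :=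
  VL_le (Rop m) _ (VL_closed j) fun a k hk => Rop_pwL_mem a hk

lemma Rop_VL_succ (j : ℕ) : ∀ x ∈ VL m (j + 1), Rop m x - lamR m (j + 1) • x ∈ VL m j := by
  refine VL_le (Rop m - lamR m (j + 1) • ContinuousLinearMap.id ℝ _) _ (VL_closed j)
    fun a k hk => ?_
  simp only [_root_.sub_apply, _root_.smul_apply,
    ContinuousLinearMap.id_apply]
  rcases Nat.lt_or_ge j k with hjk | hjk
  · obtain rfl : k = j + 1 := by omega
    rcases Nat.even_or_odd' (j + 1) with ⟨i, hi | hi⟩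
    · rw [hi, Rop_pwL_even, Finset.sum_range_succ]
      have : lamR m (2 * i) = mom m (2 * i) * ((-1) ^ i * (‖a‖ ^ 2) ^ (i - i) * (i.choose i)) := by
        simp [lamR, mul_comm]
      rw [this, add_sub_cancel_right]
      refine Submodule.sum_mem _ fun l hl => Submodule.smul_mem _ _ (pwL_mem a ?_)
      have := Finset.mem_range.1 hl; omega
    · rw [hi, Rop_pwL_odd]
      have : lamR m (2 * i + 1) = 0 := by simp [lamR]
      rw [this]; simp
  · exact Submodule.sub_mem _ (Rop_pwL_mem a hjk) (Submodule.smul_mem _ _ (pwL_mem a hjk))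

/-- The powers `⟪a,·⟫^k` span a dense subspace of `L²`: their integrals determine a finite
measure on the sphere. -/
lemma VL_dense (h : L2S m) (hh : ∀ j, ∀ v ∈ VL m j, ⟪v, h⟫ = 0) : h = 0 := by
  have h0 : ∀ (a : Euc (m + 1)) k, ∫ v, ⟪a, v⟫ ^ k * h v ∂(nu (m + 1)) = 0 := fun a k => by
    rw [← inner_pwL]; exact hh k _ (pwL_mem a le_rfl)
  set ν := nu (m + 1)
  have hm : Measurable (h : Euc (m + 1) → ℝ) := (Lp.stronglyMeasurable h).measurable
  let μ₁ := ν.withDensity fun x => ENNReal.ofReal (h x)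
  let μ₂ := ν.withDensity fun x => ENNReal.ofReal (-h x)
  have i1 : IsFiniteMeasure μ₁ := isFiniteMeasure_withDensity_ofReal (integrable_L2S h).2
  have i2 : IsFiniteMeasure μ₂ := isFiniteMeasure_withDensity_ofReal (integrable_L2S h).neg.2
  have s1 : ∀ᵐ x ∂μ₁, ‖x‖ = 1 := (withDensity_absolutelyContinuous _ _).ae_le (nu_sphere _)
  have s2 : ∀ᵐ x ∂μ₂, ‖x‖ = 1 := (withDensity_absolutelyContinuous _ _).ae_le (nu_sphere _)
  have hI : ∀ g : L2S m, Integrable g ν → ∀ (a : Euc (m + 1)) (k : ℕ),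
      Integrable (fun x => (ENNReal.ofReal (g x)).toReal • ⟪a, x⟫ ^ k) ν := by
    intro g hg a k
    simp only [ENNReal.toReal_ofReal', smul_eq_mul]
    refine hg.pos_part.mul_bdd (c := ‖a‖ ^ k) (Measurable.aestronglyMeasurable (by fun_prop)) ?_
    filter_upwards [nu_sphere (m + 1)] with x hx
    rw [norm_pow]
    exact pow_le_pow_left₀ (norm_nonneg _) (abs_inner_le_of_unit a x hx) k
  have key : μ₁ = μ₂ := by
    refine moments_ext μ₁ μ₂ s1 s2 fun a k => ?_
    rw [integral_withDensity_eq_integral_toReal_smul (by fun_prop) (by simp),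
      integral_withDensity_eq_integral_toReal_smul (by fun_prop) (by simp), ← sub_eq_zero,
      ← integral_sub]
    · rw [← h0 a k]
      refine integral_congr_ae (.of_forall fun x => ?_)
      simp only [ENNReal.toReal_ofReal', smul_eq_mul]
      rw [← sub_mul, mul_comm]
      congr 1
      exact max_zero_sub_eq_self _
    · exact hI h (integrable_L2S h) a k
    · have := hI (-h) (integrable_L2S (-h)) a k
      refine this.congr ?_
      filter_upwards [Lp.coeFn_neg h] with x hx
      rw [hx]; rfl
  rw [withDensity_eq_iff_of_sigmaFinite (by fun_prop) (by fun_prop)] at key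
  refine (Lp.eq_zero_iff_ae_eq_zero).2 ?_
  filter_upwards [key] with x hx
  have hx' := congrArg ENNReal.toReal hx
  simp only [ENNReal.toReal_ofReal'] at hx'
  have := max_zero_sub_eq_self (h x)
  simp only [Pi.zero_apply]
  rw [← this]; exact sub_eq_zero.2 hx'

end

/-! ### Bounds for the multipliers of the Radon transform -/

section

variable {m : ℕ} [NeZero m]

lemma integrable_pow_nu (a b : Euc m) (k l : ℕ) :
    Integrable (fun z => ⟪a, z⟫ ^ k * ⟪b, z⟫ ^ l) (nu m) := by
  refine integrable_of_bound_sphere (nu_sphere m) (by fun_prop) (‖a‖ ^ k * ‖b‖ ^ l) fun x hx => ?_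
  rw [abs_mul, abs_pow, abs_pow]
  have := abs_inner_le_of_unit a x hx
  have := abs_inner_le_of_unit b x hx
  gcongr

lemma integrable_pow_nu' (a : Euc m) (k : ℕ) : Integrable (fun z => ⟪a, z⟫ ^ k) (nu m) := by
  simpa using integrable_pow_nu a a k 0

lemma mom_two : mom m 2 = 1 / m := by
  have h1 : ∀ i : Fin m, ∫ z, ⟪EuclideanSpace.single i (1 : ℝ), z⟫ ^ 2 ∂(nu m) = mom m 2 := by
    intro i; rw [nu_mom]; simp
  have h2 : ∑ i : Fin m, ∫ z, ⟪EuclideanSpace.single i (1 : ℝ), z⟫ ^ 2 ∂(nu m) = 1 := by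
    rw [← integral_finsetSum _ fun i _ => integrable_pow_nu' _ 2]
    have : ∀ᵐ z ∂(nu m), ∑ i : Fin m, ⟪EuclideanSpace.single i (1 : ℝ), z⟫ ^ 2 = 1 := by
      filter_upwards [nu_sphere m] with z hz
      have := EuclideanSpace.norm_sq_eq z
      simp [EuclideanSpace.inner_single_left, hz] at this ⊢
      exact this.symm
    rw [integral_congr_ae this]; simp
  simp_rw [h1] at h2
  simp at h2
  have : (m : ℝ) ≠ 0 := Nat.cast_ne_zero.2 (NeZero.ne m)
  field_simp; linarith

lemma mom_four (hm : 2 ≤ m) : mom m 4 ≤ 3 / 4 * (1 / m) := by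
  let a : Euc m := EuclideanSpace.single ⟨0, by omega⟩ 1
  let b : Euc m := EuclideanSpace.single ⟨1, by omega⟩ 1
  have ha : ‖a‖ = 1 := by simp [a]
  have hb : ‖b‖ = 1 := by simp [b]
  have hab : ⟪a, b⟫ = 0 := by simp [a, b, EuclideanSpace.inner_single_left]
  have n1 : ‖a + b‖ ^ 4 = 4 := by
    rw [show 4 = 2 * 2 by rfl, pow_mul, norm_add_sq_real, ha, hb, hab]; norm_num
  have n2 : ‖a - b‖ ^ 4 = 4 := by
    rw [show 4 = 2 * 2 by rfl, pow_mul, norm_sub_sq_real, ha, hb, hab]; norm_num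
  have h1 := nu_mom (a + b) 4
  have h2 := nu_mom (a - b) 4
  have h3 := nu_mom a 4
  have h4 := nu_mom b 4
  have h5 := nu_mom a 2
  rw [n1] at h1
  rw [n2] at h2
  rw [ha] at h3 h5
  rw [hb] at h4
  have hs : ∫ z, ⟪a + b, z⟫ ^ 4 ∂(nu m) + ∫ z, ⟪a - b, z⟫ ^ 4 ∂(nu m) =
      2 * ∫ z, ⟪a, z⟫ ^ 4 ∂(nu m) + 2 * ∫ z, ⟪b, z⟫ ^ 4 ∂(nu m) +
      12 * ∫ z, ⟪a, z⟫ ^ 2 * ⟪b, z⟫ ^ 2 ∂(nu m) := by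
    rw [← integral_add (integrable_pow_nu' _ 4) (integrable_pow_nu' _ 4), ← integral_const_mul,
      ← integral_const_mul, ← integral_const_mul, ← integral_add, ← integral_add]
    · congr 1; ext z; rw [inner_add_left, inner_sub_left]; ring
    · exact ((integrable_pow_nu' _ 4).const_mul _).add ((integrable_pow_nu' _ 4).const_mul _)
    · exact (integrable_pow_nu _ _ 2 2).const_mul _
    · exact (integrable_pow_nu' _ 4).const_mul _
    · exact (integrable_pow_nu' _ 4).const_mul _
  have hle : ∫ z, ⟪a, z⟫ ^ 4 ∂(nu m) + ∫ z, ⟪a, z⟫ ^ 2 * ⟪b, z⟫ ^ 2 ∂(nu m) ≤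
      ∫ z, ⟪a, z⟫ ^ 2 ∂(nu m) := by
    rw [← integral_add (integrable_pow_nu' _ 4) (integrable_pow_nu _ _ 2 2)]
    refine integral_mono_ae ((integrable_pow_nu' _ 4).add (integrable_pow_nu _ _ 2 2))
      (integrable_pow_nu' _ 2) ?_
    filter_upwards [nu_sphere m] with z hz
    have hz2 : ⟪a, z⟫ ^ 2 + ⟪b, z⟫ ^ 2 ≤ 1 := by
      have hon : Orthonormal ℝ ![a, b] := by
        simp [orthonormal_vecCons_iff, ha, hb, hab]
      have := hon.sum_inner_products_le (x := z) (s := Finset.univ)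
      simpa [Fin.sum_univ_two, hz] using this
    have := mul_le_mul_of_nonneg_left hz2 (sq_nonneg ⟪a, z⟫)
    nlinarith
  rw [← mom_two]
  simp only [one_pow, mul_one] at h3 h4 h5
  linarith

lemma mom_even_le (i : ℕ) (hi : 2 ≤ i) : mom m (2 * i) ≤ mom m 4 := by
  refine integral_mono_ae (integrable_pow_nu' _ _) (integrable_pow_nu' _ _) ?_
  filter_upwards [nu_sphere m] with z hz
  have h := abs_inner_le_of_unit (e0 m) z hz
  rw [norm_e0] at h
  have h2 : ⟪e0 m, z⟫ ^ 2 ≤ 1 := by rw [← sq_abs]; nlinarith [abs_nonneg ⟪e0 m, z⟫]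
  rw [pow_mul, show 4 = 2 * 2 by rfl, pow_mul]
  exact pow_le_pow_of_le_one (sq_nonneg _) h2 hi

lemma lamR_le (hm : 2 ≤ m) (j : ℕ) (hj : 3 ≤ j) : |lamR m j| ≤ 3 / 4 * (1 / m) := by
  rcases Nat.even_or_odd' j with ⟨i, rfl | rfl⟩
  · have h0 : 0 ≤ mom m (2 * i) := integral_nonneg fun z => by
      simp only [Pi.zero_apply]; rw [pow_mul]; positivity
    have : |lamR m (2 * i)| = mom m (2 * i) := by
      simp [lamR, abs_mul, abs_of_nonneg h0]
    rw [this]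
    exact (mom_even_le i (by omega)).trans (mom_four hm)
  · have : lamR m (2 * i + 1) = 0 := by simp [lamR]
    rw [this]; simp

/-- Off the polynomials of degree at most two, `R` has norm at most `3/(4 m)`, strictly below
the value `1/m` attained in degree two. -/
lemma Rop_contr (hm : 2 ≤ m) : ∀ g ∈ (VL m 2)ᗮ, ‖Rop m g‖ ≤ 3 / 4 * (1 / m) * ‖g‖ :=
  spectral_abs (Rop m) Rop_symm (VL m) VL_closed VL_mono (lamR m) _ (by positivity) Rop_VL_succ
    Rop_VL (lamR_le hm) VL_dense

/-- The bilinear form `E[g(x) ψ(v)]` over uniform orthonormal pairs `(x, v)`. -/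
def BB (m : ℕ) [NeZero m] (g ψ : Euc (m + 1) → ℝ) : ℝ := ∫ p, g p.1 * ψ p.2 ∂(pr m)

/-- The `L²` norm on the sphere. -/
def n2 (g : Euc (m + 1) → ℝ) : ℝ := √(∫ x, g x ^ 2 ∂(nu (m + 1)))

lemma n2_nonneg (g : Euc (m + 1) → ℝ) : 0 ≤ n2 g := Real.sqrt_nonneg _

lemma n2_sq (g : Euc (m + 1) → ℝ) : n2 g ^ 2 = ∫ x, g x ^ 2 ∂(nu (m + 1)) :=
  Real.sq_sqrt (integral_nonneg fun _ => sq_nonneg _)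

lemma n2_abs (g : Euc (m + 1) → ℝ) : n2 (fun x => |g x|) = n2 g := by simp [n2]

/-- A bounded measurable function as an element of `L²`. -/
lemma exists_L2 (g : Euc (m + 1) → ℝ) (hg : Measurable g) (C : ℝ) (hC : ∀ x, |g x| ≤ C) :
    ∃ G : L2S m, (G =ᵐ[nu (m + 1)] g) ∧ ‖G‖ = n2 g := by
  have hL : MemLp g 2 (nu (m + 1)) := MemLp.of_bound hg.aestronglyMeasurable C (.of_forall hC)
  refine ⟨hL.toLp g, hL.coeFn_toLp, ?_⟩
  have : ‖hL.toLp g‖ ^ 2 = n2 g ^ 2 := by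
    rw [n2_sq, ← real_inner_self_eq_norm_sq, L2.inner_def]
    refine integral_congr_ae ?_
    filter_upwards [hL.coeFn_toLp] with x hx
    rw [hx]; simp [sq]
  exact (sq_eq_sq₀ (norm_nonneg _) (n2_nonneg g)).1 this

lemma BB_eq (g ψ : Euc (m + 1) → ℝ) (G Ψ : L2S m) (hG : G =ᵐ[nu (m + 1)] g)
    (hΨ : Ψ =ᵐ[nu (m + 1)] ψ) : BB m g ψ = ⟪Rop m G, Ψ⟫ := by
  rw [inner_Rop, BB]
  refine integral_congr_ae ?_
  filter_upwards [mp_fst.quasiMeasurePreserving.ae hG, mp_snd.quasiMeasurePreserving.ae hΨ]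
    with p h1 h2
  rw [h1, h2]

/-- Cauchy–Schwarz for `BB`. -/
lemma BB_le (g ψ : Euc (m + 1) → ℝ) (hg : Measurable g) (hψ : Measurable ψ) (C D : ℝ)
    (hC : ∀ x, |g x| ≤ C) (hD : ∀ x, |ψ x| ≤ D) : |BB m g ψ| ≤ n2 g * n2 ψ := by
  obtain ⟨G, hG, e1⟩ := exists_L2 g hg C hC
  obtain ⟨Ψ, hΨ, e2⟩ := exists_L2 ψ hψ D hD
  rw [BB_eq g ψ G Ψ hG hΨ, ← e1, ← e2]
  refine (abs_real_inner_le_norm _ _).trans (mul_le_mul_of_nonneg_right ?_ (norm_nonneg _))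
  unfold Rop
  rw [ContinuousLinearMap.comp_apply]
  refine (ContinuousLinearMap.le_opNorm _ _).trans ?_
  have h1 : ‖(Lp.compMeasurePreservingₗᵢ ℝ Prod.fst (mp_fst (m := m))
      (E := ℝ) (p := 2)).toContinuousLinearMap G‖ = ‖G‖ := LinearIsometry.norm_map _ _
  rw [h1, LinearIsometryEquiv.norm_map]
  refine mul_le_of_le_one_left (norm_nonneg _) (LinearIsometry.norm_toContinuousLinearMap_le _)

/-- The spectral gap: on functions orthogonal to polynomials of degree at most two,
the form `BB` is bounded by `3/(4m)`. -/
lemma BB_contr (hm : 2 ≤ m) (g ψ : Euc (m + 1) → ℝ) (hg : Measurable g) (hψ : Measurable ψ)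
    (C D : ℝ) (hC : ∀ x, |g x| ≤ C) (hD : ∀ x, |ψ x| ≤ D)
    (horth : ∀ (a : Euc (m + 1)) (k : ℕ), k ≤ 2 → ∫ x, ⟪a, x⟫ ^ k * g x ∂(nu (m + 1)) = 0) :
    |BB m g ψ| ≤ 3 / 4 * (1 / m) * n2 g * n2 ψ := by
  obtain ⟨G, hG, e1⟩ := exists_L2 g hg C hC
  obtain ⟨Ψ, hΨ, e2⟩ := exists_L2 ψ hψ D hD
  rw [BB_eq g ψ G Ψ hG hΨ, ← e1, ← e2]
  refine (abs_real_inner_le_norm _ _).trans (mul_le_mul_of_nonneg_right ?_ (norm_nonneg _))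
  refine Rop_contr hm G ?_
  rw [Submodule.mem_orthogonal]
  have hle : VL m 2 ≤ (ℝ ∙ G)ᗮ := by
    refine Submodule.topologicalClosure_minimal _ (Submodule.span_le.2 ?_)
      (Submodule.isClosed_orthogonal _)
    rintro f ⟨a, k, hk, rfl⟩
    simp only [SetLike.mem_coe]
    rw [Submodule.mem_orthogonal_singleton_iff_inner_left, inner_pwL, ← horth a k hk]
    refine integral_congr_ae ?_
    filter_upwards [hG] with x hx
    rw [hx]
  intro u hu
  exact Submodule.mem_orthogonal_singleton_iff_inner_left.1 (hle hu)

lemma BB_symm (g ψ : Euc (m + 1) → ℝ) : BB m g ψ = BB m ψ g := by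
  unfold BB
  have : MeasurePreserving Prod.swap (pr m) (pr m) := ⟨measurable_swap, pr_swap⟩
  rw [← this.integral_comp MeasurableEquiv.prodComm.measurableEmbedding]
  simp [mul_comm]

end

/-! ### Cross products and the measure of the projection body of a zonoid -/

section

variable {m : ℕ}

/-- The determinant of `n` vectors of `ℝⁿ`. -/
def Dt (n : ℕ) : (Euc n) [⋀^Fin n]→ₗ[ℝ] ℝ := (EuclideanSpace.basisFun (Fin n) ℝ).toBasis.det

lemma continuous_Dt (n : ℕ) : Continuous (Dt n) := by
  have : (Dt n : (Fin n → Euc n) → ℝ) = fun v => (Matrix.of fun i j => v j i).det := by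
    ext v
    rw [Dt, Module.Basis.det_apply]
    congr 1
  rw [this]
  refine Continuous.matrix_det ?_
  refine continuous_pi fun i => continuous_pi fun j => ?_
  simp only [Matrix.of_apply]
  fun_prop

lemma Dt_comp {n : ℕ} (f : Euc n →ₗ[ℝ] Euc n) (v : Fin n → Euc n) :
    Dt n (fun i => f (v i)) = LinearMap.det f * Dt n v :=
  Module.Basis.det_comp _ f v

/-- The generalised cross product of `m` vectors of `ℝ^{m+1}`. -/
def wv (x : Fin m → Euc (m + 1)) : Euc (m + 1) :=
  WithLp.toLp 2 fun j => Dt (m + 1) (Fin.cons (EuclideanSpace.single j 1) x)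

lemma inner_wv (u : Euc (m + 1)) (x : Fin m → Euc (m + 1)) :
    ⟪u, wv x⟫ = Dt (m + 1) (Fin.cons u x) := by
  let L : Euc (m + 1) →ₗ[ℝ] ℝ :=
    { toFun := fun u => (Dt (m + 1)).curryLeft u x
      map_add' := fun a b => by simp
      map_smul' := fun a b => by simp }
  have hL : ∀ u, L u = Dt (m + 1) (Fin.cons u x) := fun u => rfl
  rw [← hL]
  have hu : u = ∑ j, u j • EuclideanSpace.single j (1 : ℝ) := by
    ext i; simp [Finset.sum_apply, Pi.single_apply]
  conv_rhs => rw [hu, map_sum]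
  rw [PiLp.inner_apply]
  refine Finset.sum_congr rfl fun j _ => ?_
  rw [map_smul, hL, smul_eq_mul, wv]
  simp [mul_comm]

lemma continuous_cons {n k : ℕ} : Continuous fun p : Euc n × (Fin k → Euc n) =>
    (Fin.cons p.1 p.2 : Fin (k + 1) → Euc n) := by
  refine continuous_pi fun i => ?_
  refine Fin.cases ?_ (fun j => ?_) i
  · exact continuous_fst
  · simp only [Fin.cons_succ]; fun_prop

lemma continuous_wv : Continuous (wv : (Fin m → Euc (m + 1)) → Euc (m + 1)) := by
  unfold wv
  refine (PiLp.continuous_toLp 2 _).comp (continuous_pi fun j => ?_)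
  exact (continuous_Dt _).comp (continuous_cons.comp (by fun_prop : Continuous fun
    x : Fin m → Euc (m + 1) => ((EuclideanSpace.single j (1 : ℝ) : Euc (m + 1)), x)))

lemma inner_wv_self (x : Fin m → Euc (m + 1)) (i : Fin m) : ⟪x i, wv x⟫ = 0 := by
  rw [inner_wv]
  exact (Dt (m + 1)).map_eq_zero_of_eq _ (i := 0) (j := i.succ) (by simp) (Fin.succ_ne_zero i).symm

lemma abs_det_isom {n : ℕ} (g : Euc n ≃ₗᵢ[ℝ] Euc n) :
    |LinearMap.det (g.toLinearEquiv : Euc n →ₗ[ℝ] Euc n)| = 1 := by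
  rw [← LinearMap.normDet_eq_abs_det]
  exact LinearIsometry.normDet_eq_one g.toLinearIsometry

/-- The generalised cross product is equivariant under isometries, up to the sign of the
determinant. -/
lemma wv_isom (g : Euc (m + 1) ≃ₗᵢ[ℝ] Euc (m + 1)) (x : Fin m → Euc (m + 1)) :
    wv (fun i => g (x i)) =
      LinearMap.det (g.toLinearEquiv : Euc (m + 1) →ₗ[ℝ] Euc (m + 1)) • g (wv x) := by
  refine ext_inner_left ℝ fun v => ?_
  obtain ⟨u, rfl⟩ := g.surjective v
  rw [inner_wv, inner_smul_right, g.inner_map_map, inner_wv, ← Dt_comp]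
  congr 1
  ext1 i
  refine Fin.cases ?_ (fun j => ?_) i <;> simp

/-- The unit vector in the direction of `x`. -/
def Nrm {n : ℕ} (x : Euc n) : Euc n := ‖x‖⁻¹ • x

lemma norm_Nrm {n : ℕ} {x : Euc n} (hx : x ≠ 0) : ‖Nrm x‖ = 1 := by
  rw [Nrm, norm_smul, norm_inv, norm_norm, inv_mul_cancel₀ (norm_ne_zero_iff.2 hx)]

lemma norm_smul_Nrm {n : ℕ} (x : Euc n) : ‖x‖ • Nrm x = x := by
  by_cases hx : x = 0
  · simp [hx, Nrm]
  · rw [Nrm, smul_smul, mul_inv_cancel₀ (norm_ne_zero_iff.2 hx), one_smul]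

@[fun_prop]
lemma measurable_Nrm {n : ℕ} : Measurable (Nrm : Euc n → Euc n) := by
  unfold Nrm; fun_prop

@[fun_prop]
lemma measurable_wv : Measurable (wv : (Fin m → Euc (m + 1)) → Euc (m + 1)) :=
  continuous_wv.measurable

lemma measurable_Nwv : Measurable fun x : Fin m → Euc (m + 1) => Nrm (wv x) :=
  measurable_Nrm.comp measurable_wv

lemma measurable_nNwv : Measurable fun x : Fin m → Euc (m + 1) => -Nrm (wv x) :=
  measurable_Nwv.neg

lemma exists_wv_bound (m : ℕ) : ∃ C : ℝ, 0 ≤ C ∧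
    ∀ x : Fin m → Euc (m + 1), (∀ i, ‖x i‖ = 1) → ‖wv x‖ ≤ C := by
  have hc : IsCompact (Set.pi univ fun _ : Fin m => sphere (0 : Euc (m + 1)) 1) :=
    isCompact_univ_pi fun _ => isCompact_sphere _ _
  obtain ⟨C, hC⟩ := hc.exists_bound_of_continuousOn (continuous_wv (m := m)).continuousOn
  refine ⟨|C|, abs_nonneg _, fun x hx => (hC x ?_).trans (le_abs_self _)⟩
  intro i _; simpa using hx i

/-- The `m`-fold product measure weighted with the length of the cross product. -/
def Wm (η : Measure (Euc (m + 1))) : Measure (Fin m → Euc (m + 1)) :=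
  (Measure.pi fun _ => η).withDensity fun x => ENNReal.ofReal ‖wv x‖

/-- The measure on the sphere whose cosine transform is
`u ↦ ∫ |det(u, x₁, …, x_m)| dη(x₁) ⋯ dη(x_m)`. -/
def lamM (η : Measure (Euc (m + 1))) : Measure (Euc (m + 1)) :=
  (2⁻¹ : ℝ≥0∞) • ((Wm η).map (fun x => Nrm (wv x)) + (Wm η).map (fun x => -Nrm (wv x)))

lemma ae_pi_sphere {η : Measure (Euc (m + 1))} [IsFiniteMeasure η] (h : ∀ᵐ x ∂η, ‖x‖ = 1) :
    ∀ᵐ x ∂(Measure.pi fun _ : Fin m => η), ∀ i, ‖x i‖ = 1 :=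
  Measure.ae_pi_le_pi (Filter.eventually_pi fun i => h)

lemma Wm_ae {η : Measure (Euc (m + 1))} [IsFiniteMeasure η] (h : ∀ᵐ x ∂η, ‖x‖ = 1) :
    ∀ᵐ x ∂(Wm η), (∀ i, ‖x i‖ = 1) ∧ wv x ≠ 0 := by
  rw [Wm, ae_withDensity_iff (by have := measurable_wv (m := m); fun_prop)]
  filter_upwards [ae_pi_sphere h] with x hx h0
  refine ⟨hx, ?_⟩
  rintro h1; simp [h1] at h0

lemma finite_Wm {η : Measure (Euc (m + 1))} [IsFiniteMeasure η] (h : ∀ᵐ x ∂η, ‖x‖ = 1) :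
    IsFiniteMeasure (Wm η) := by
  obtain ⟨C, hC0, hC⟩ := exists_wv_bound m
  refine isFiniteMeasure_withDensity_ofReal (f := fun x => ‖wv x‖) ?_
  refine (Integrable.of_bound (C := C) ?_ ?_ : Integrable (fun x => ‖wv x‖) _).2
  · exact measurable_wv.norm.aestronglyMeasurable
  · filter_upwards [ae_pi_sphere h] with x hx
    simpa using hC x hx

lemma finite_lamM {η : Measure (Euc (m + 1))} [IsFiniteMeasure η] (h : ∀ᵐ x ∂η, ‖x‖ = 1) :
    IsFiniteMeasure (lamM η) := by
  have := finite_Wm h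
  unfold lamM
  exact Measure.smul_finite _ (by simp)

lemma lamM_sphere {η : Measure (Euc (m + 1))} [IsFiniteMeasure η] (h : ∀ᵐ x ∂η, ‖x‖ = 1) :
    ∀ᵐ x ∂(lamM η), ‖x‖ = 1 := by
  have hs : MeasurableSet {x : Euc (m + 1) | ‖x‖ = 1} :=
    measurableSet_eq_fun measurable_norm measurable_const
  refine Measure.ae_smul_measure ?_ _
  rw [ae_add_measure_iff, ae_map_iff measurable_Nwv.aemeasurable hs,
    ae_map_iff measurable_nNwv.aemeasurable hs]
  constructor <;>
  · filter_upwards [Wm_ae h] with x hx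
    simp [norm_Nrm hx.2]

lemma lamM_even (η : Measure (Euc (m + 1))) : (lamM η).map (fun x => -x) = lamM η := by
  rw [lamM, Measure.map_smul, Measure.map_add _ _ measurable_neg,
    Measure.map_map measurable_neg measurable_Nwv, Measure.map_map measurable_neg measurable_nNwv]
  simp only [Function.comp_def, neg_neg]
  congr 1
  exact add_comm _ _

lemma lintegral_lamM (η : Measure (Euc (m + 1))) (ψ : Euc (m + 1) → ℝ≥0∞) (hψ : Measurable ψ) :
    ∫⁻ v, ψ v ∂(lamM η) = 2⁻¹ * ∫⁻ x, ENNReal.ofReal ‖wv x‖ *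
      (ψ (Nrm (wv x)) + ψ (-Nrm (wv x))) ∂(Measure.pi fun _ : Fin m => η) := by
  have h1 := measurable_Nwv (m := m)
  have h3 := measurable_nNwv (m := m)
  have h2 := measurable_wv (m := m)
  rw [lamM, lintegral_smul_measure, lintegral_add_measure, lintegral_map hψ h1,
    lintegral_map hψ h3, ← lintegral_add_left (by fun_prop), Wm,
    lintegral_withDensity_eq_lintegral_mul _ (by fun_prop) (by fun_prop), smul_eq_mul]
  rfl

lemma integral_Wm {η : Measure (Euc (m + 1))} (F : (Fin m → Euc (m + 1)) → ℝ) :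
    ∫ x, F x ∂(Wm η) = ∫ x, ‖wv x‖ * F x ∂(Measure.pi fun _ : Fin m => η) := by
  rw [Wm, integral_withDensity_eq_integral_toReal_smul
    (by have := measurable_wv (m := m); fun_prop) (by simp)]
  simp

lemma integral_lamM {η : Measure (Euc (m + 1))} [IsFiniteMeasure η] (h : ∀ᵐ x ∂η, ‖x‖ = 1)
    (ψ : Euc (m + 1) → ℝ) (hψ : Measurable ψ) (C : ℝ) (hC : ∀ x, ‖x‖ = 1 → |ψ x| ≤ C) :
    ∫ v, ψ v ∂(lamM η) = 1 / 2 * (∫ x, ψ (Nrm (wv x)) ∂(Wm η) + ∫ x, ψ (-Nrm (wv x)) ∂(Wm η)) := by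
  have h1 := measurable_Nwv (m := m)
  have h3 := measurable_nNwv (m := m)
  have := finite_Wm h
  rw [lamM, integral_smul_measure, integral_add_measure, integral_map h1.aemeasurable
    hψ.aestronglyMeasurable, integral_map h3.aemeasurable hψ.aestronglyMeasurable]
  · simp
  all_goals
    rw [integrable_map_measure hψ.aestronglyMeasurable (by fun_prop)]
    refine Integrable.of_bound (hψ.comp (by fun_prop)).aestronglyMeasurable C ?_
    filter_upwards [Wm_ae h] with x hx
    refine hC _ ?_
    simp [norm_Nrm hx.2]

/-- The cosine transform of `lamM η` is the mixed determinant integral that gives the shadows of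
the zonoid generated by `η`. -/
lemma cos_lamM {η : Measure (Euc (m + 1))} [IsFiniteMeasure η] (h : ∀ᵐ x ∂η, ‖x‖ = 1)
    (u : Euc (m + 1)) : ∫ v, |⟪u, v⟫| ∂(lamM η) =
      ∫ x, |Dt (m + 1) (Fin.cons u x)| ∂(Measure.pi fun _ : Fin m => η) := by
  rw [integral_lamM h _ (by fun_prop) ‖u‖ (fun x hx => by
    rw [abs_abs]; exact abs_inner_le_of_unit u x hx)]
  simp only [inner_neg_right, abs_neg]
  rw [integral_Wm]
  have : ∀ x : Fin m → Euc (m + 1), ‖wv x‖ * |⟪u, Nrm (wv x)⟫| = |Dt (m + 1) (Fin.cons u x)| := by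
    intro x
    rw [← inner_wv]
    conv_rhs => rw [← norm_smul_Nrm (wv x), inner_smul_right, abs_mul, abs_norm]
  simp_rw [this]; ring

lemma lamM_smul (η : Measure (Euc (m + 1))) [IsFiniteMeasure η] (a : ℝ≥0∞) (ha : a ≠ ⊤) :
    lamM (a • η) = a ^ m • lamM η := by
  have hpi : (Measure.pi fun _ : Fin m => a • η) = a ^ m • Measure.pi fun _ : Fin m => η := by
    have : IsFiniteMeasure (a • η) := Measure.smul_finite _ ha
    refine Measure.pi_eq fun s hs => ?_
    simp [Measure.pi_pi, Finset.prod_mul_distrib]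
  ext A hA
  rw [← lintegral_indicator_one hA, ← lintegral_indicator_one hA,
    lintegral_lamM _ _ (measurable_one.indicator hA), lintegral_smul_measure,
    lintegral_lamM _ _ (measurable_one.indicator hA), hpi, lintegral_smul_measure, smul_eq_mul,
    smul_eq_mul, mul_left_comm]

end

/-! ### First order expansion around the uniform measure -/

section

variable {m : ℕ} [NeZero m]

/-- The joint law of one of the vectors `x_i` and of the (symmetrised) unit normal, under the
weighted product measure. -/
def JM (i : Fin m) : Measure (Euc (m + 1) × Euc (m + 1)) :=
  (2⁻¹ : ℝ≥0∞) • ((Wm (nu (m + 1))).map (fun x => (x i, Nrm (wv x))) +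
    (Wm (nu (m + 1))).map (fun x => (x i, -Nrm (wv x))))

lemma meas_J1 (i : Fin m) :
    Measurable fun x : Fin m → Euc (m + 1) => (x i, Nrm (wv x)) := by fun_prop

lemma meas_J2 (i : Fin m) :
    Measurable fun x : Fin m → Euc (m + 1) => (x i, -Nrm (wv x)) := by fun_prop

instance finite_JM (i : Fin m) : IsFiniteMeasure (JM i) := by
  have := finite_Wm (nu_sphere (m + 1))
  unfold JM
  exact Measure.smul_finite _ (by simp)

lemma lintegral_JM (i : Fin m) (G : Euc (m + 1) × Euc (m + 1) → ℝ≥0∞) (hG : Measurable G) :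
    ∫⁻ p, G p ∂(JM i) = 2⁻¹ * ∫⁻ x, ENNReal.ofReal ‖wv x‖ *
      (G (x i, Nrm (wv x)) + G (x i, -Nrm (wv x))) ∂(Measure.pi fun _ : Fin m => nu (m + 1)) := by
  rw [JM, lintegral_smul_measure, lintegral_add_measure, lintegral_map hG (meas_J1 i),
    lintegral_map hG (meas_J2 i), ← lintegral_add_left (by fun_prop), Wm,
    lintegral_withDensity_eq_lintegral_mul _ (by fun_prop) (by fun_prop), smul_eq_mul]
  rfl

lemma pi_nu_map (g : Euc (m + 1) ≃ₗᵢ[ℝ] Euc (m + 1)) :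
    MeasurePreserving (fun (x : Fin m → Euc (m + 1)) i => g (x i))
      (Measure.pi fun _ : Fin m => nu (m + 1)) (Measure.pi fun _ : Fin m => nu (m + 1)) := by
  refine ⟨?_, ?_⟩
  · refine measurable_pi_iff.2 fun i => g.continuous.measurable.comp (measurable_pi_apply i)
  · rw [Measure.pi_map_pi (fun i => g.continuous.measurable.aemeasurable)]
    simp_rw [nu_map]

lemma Nrm_wv_isom (g : Euc (m + 1) ≃ₗᵢ[ℝ] Euc (m + 1)) :
    (∀ x : Fin m → Euc (m + 1), ‖wv (fun i => g (x i))‖ = ‖wv x‖) ∧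
    ((∀ x : Fin m → Euc (m + 1), Nrm (wv (fun i => g (x i))) = g (Nrm (wv x))) ∨
    (∀ x : Fin m → Euc (m + 1), Nrm (wv (fun i => g (x i))) = - g (Nrm (wv x)))) := by
  have h := abs_det_isom g
  refine ⟨fun x => ?_, ?_⟩
  · rw [wv_isom, norm_smul, Real.norm_eq_abs, h, one_mul, g.norm_map]
  · rcases (abs_eq zero_le_one).1 h with h1 | h1
    · left; intro x
      rw [wv_isom, h1, one_smul, Nrm, Nrm, g.norm_map, map_smul]
    · right; intro x
      rw [wv_isom, h1, neg_smul, one_smul, Nrm, Nrm, norm_neg, g.norm_map, map_smul, smul_neg]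

lemma JM_inv (i : Fin m) (g : OG (m + 1)) :
    (JM i).map (fun p => (oact g p.1, oact g p.2)) = JM i := by
  have hg : Measurable fun p : Euc (m + 1) × Euc (m + 1) => (oact g p.1, oact g p.2) := by
    have := measurable_oact g
    fun_prop
  ext A hA
  rw [← lintegral_indicator_one hA, ← lintegral_indicator_one hA]
  have hI : Measurable (A.indicator (1 : Euc (m + 1) × Euc (m + 1) → ℝ≥0∞)) :=
    measurable_one.indicator hA
  generalize A.indicator (1 : Euc (m + 1) × Euc (m + 1) → ℝ≥0∞) = G at hI
  rw [lintegral_map hI hg, lintegral_JM i (fun p => G (oact g p.1, oact g p.2)) (hI.comp hg),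
    lintegral_JM _ _ hI]
  congr 1
  have hm : Measurable fun x : Fin m → Euc (m + 1) => ENNReal.ofReal ‖wv x‖ *
      (G (x i, Nrm (wv x)) + G (x i, -Nrm (wv x))) := by fun_prop
  rw [← (pi_nu_map (oact g)).lintegral_comp hm]
  obtain ⟨h1, h2 | h2⟩ := Nrm_wv_isom (oact g)
  · simp_rw [h1, h2, map_neg]
  · simp_rw [h1, h2, map_neg, neg_neg]
    refine lintegral_congr fun x => ?_
    congr 1
    exact add_comm _ _

/-- The mass of `lamM ν`. -/
def cW (m : ℕ) [NeZero m] : ℝ≥0∞ := Wm (m := m) (nu (m + 1)) univ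

lemma cW_ne_top : cW m ≠ ⊤ := by
  have := finite_Wm (m := m) (nu_sphere (m + 1))
  exact measure_ne_top _ _

lemma JM_univ (i : Fin m) : JM i univ = cW m := by
  rw [JM, Measure.smul_apply, Measure.add_apply, Measure.map_apply (meas_J1 i) .univ,
    Measure.map_apply (meas_J2 i) .univ, preimage_univ, preimage_univ, ← cW, smul_eq_mul,
    ← two_mul, ← mul_assoc, ENNReal.inv_mul_cancel (by simp) (by simp), one_mul]

/-- By rotation invariance, the joint law of one factor and the normal direction is a multiple of
the uniform law on orthonormal pairs; this is how the Radon transform enters the linearisation. -/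
lemma JM_eq (i : Fin m) : JM i = cW m • pr m := by
  rw [← JM_univ i]
  refine pr_unique _ (JM_inv i) ?_
  have hs : MeasurableSet {p : Euc (m + 1) × Euc (m + 1) |
      ‖p.1‖ = 1 ∧ ‖p.2‖ = 1 ∧ ⟪p.1, p.2⟫ = 0} :=
    (measurableSet_eq_fun (by fun_prop) measurable_const).inter
      ((measurableSet_eq_fun (by fun_prop) measurable_const).inter
      (measurableSet_eq_fun (by fun_prop) measurable_const))
  refine Measure.ae_smul_measure ?_ _
  rw [ae_add_measure_iff, ae_map_iff (meas_J1 i).aemeasurable hs,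
    ae_map_iff (meas_J2 i).aemeasurable hs]
  have h0 : ∀ x : Fin m → Euc (m + 1), ⟪x i, Nrm (wv x)⟫ = 0 := fun x => by
    rw [Nrm, inner_smul_right, inner_wv_self, mul_zero]
  constructor <;>
  · filter_upwards [Wm_ae (nu_sphere (m + 1))] with x hx
    simp [norm_Nrm hx.2, hx.1 i, h0]

lemma lamM_nu : lamM (nu (m + 1)) = cW m • nu (m + 1) := by
  have h : lamM (nu (m + 1)) = (JM (0 : Fin m)).map Prod.snd := by
    rw [JM, lamM, Measure.map_smul, Measure.map_add _ _ measurable_snd,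
      Measure.map_map measurable_snd (meas_J1 0), Measure.map_map measurable_snd (meas_J2 0)]
    rfl
  rw [h, JM_eq, Measure.map_smul, pr_map_snd]

/-- A measure pinched between two multiples of `μ` has a density with the same bounds. -/
lemma exists_density {X : Type*} [MeasurableSpace X] (μ lam : Measure X) [IsFiniteMeasure μ]
    [IsFiniteMeasure lam] (a b : ℝ) (ha : 0 ≤ a) (hab : a ≤ b)
    (h1 : ENNReal.ofReal a • μ ≤ lam) (h2 : lam ≤ ENNReal.ofReal b • μ) :
    ∃ k : X → ℝ, Measurable k ∧ (∀ x, a ≤ k x ∧ k x ≤ b) ∧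
      lam = μ.withDensity fun x => ENNReal.ofReal (k x) := by
  have hac : lam ≪ μ := fun s hs => by
    have := h2 s
    rw [Measure.smul_apply, hs, smul_zero] at this
    exact le_antisymm this bot_le
  have hrn := Measure.withDensity_rnDeriv_eq lam μ hac
  have hm := Measure.measurable_rnDeriv lam μ
  have hub : ∀ᵐ x ∂μ, lam.rnDeriv μ x ≤ ENNReal.ofReal b := by
    refine ae_le_of_forall_setLIntegral_le_of_sigmaFinite hm fun s hs _ => ?_
    rw [← withDensity_apply _ hs, hrn, setLIntegral_const]
    simpa using h2 s
  have hlb : ∀ᵐ x ∂μ, ENNReal.ofReal a ≤ lam.rnDeriv μ x := by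
    refine ae_le_of_forall_setLIntegral_le_of_sigmaFinite measurable_const fun s hs _ => ?_
    rw [← withDensity_apply (lam.rnDeriv μ) hs, hrn, setLIntegral_const]
    simpa using h1 s
  refine ⟨fun x => max a (min b (lam.rnDeriv μ x).toReal), by fun_prop, fun x =>
    ⟨le_max_left _ _, max_le hab (min_le_left _ _)⟩, ?_⟩
  conv_lhs => rw [← hrn]
  refine withDensity_congr_ae ?_
  filter_upwards [hub, hlb] with x hx1 hx2
  have hne : lam.rnDeriv μ x ≠ ⊤ := (hx1.trans_lt ENNReal.ofReal_lt_top).ne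
  have e1 : (lam.rnDeriv μ x).toReal ≤ b := ENNReal.toReal_le_of_le_ofReal (ha.trans hab) hx1
  have e2 : a ≤ (lam.rnDeriv μ x).toReal := (ENNReal.ofReal_le_iff_le_toReal hne).1 hx2
  rw [min_eq_right e1, max_eq_right e2, ENNReal.ofReal_toReal hne]

lemma pi_withDensity (f : Euc (m + 1) → ℝ≥0∞) (hf : Measurable f)
    [IsFiniteMeasure ((nu (m + 1)).withDensity f)] :
    (Measure.pi fun _ : Fin m => (nu (m + 1)).withDensity f) =
      (Measure.pi fun _ : Fin m => nu (m + 1)).withDensity fun x => ∏ i, f (x i) := by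
  refine Measure.pi_eq fun s hs => ?_
  rw [withDensity_apply _ (MeasurableSet.univ_pi hs), ← lintegral_indicator (MeasurableSet.univ_pi hs)]
  have : ∀ x : Fin m → Euc (m + 1), (univ.pi s).indicator (fun x => ∏ i, f (x i)) x =
      ∏ i, (s i).indicator f (x i) := by
    intro x
    by_cases hx : x ∈ univ.pi s
    · rw [indicator_of_mem hx]
      exact Finset.prod_congr rfl fun i _ => (indicator_of_mem (hx i (mem_univ i)) _).symm
    · rw [indicator_of_notMem hx]
      simp only [Set.mem_pi, mem_univ, true_implies, not_forall] at hx
      obtain ⟨i, hi⟩ := hx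
      exact (Finset.prod_eq_zero (Finset.mem_univ i) (indicator_of_notMem hi _)).symm
  simp_rw [this]
  have hX : ∀ i : Fin m, Measurable ((s i).indicator f) := fun i => hf.indicator (hs i)
  rw [ProbabilityTheory.lintegral_prod_eq_prod_lintegral_of_indepFun Finset.univ
    (fun i (x : Fin m → Euc (m + 1)) => (s i).indicator f (x i))
    (ProbabilityTheory.iIndepFun_pi (X := fun i => (s i).indicator f)
      fun i => (hX i).aemeasurable)
    fun i => (hX i).comp (measurable_pi_apply i)]
  refine Finset.prod_congr rfl fun i _ => ?_
  rw [withDensity_apply _ (hs i), ← lintegral_indicator (hs i)]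
  exact (measurePreserving_eval (fun _ : Fin m => nu (m + 1)) i).lintegral_comp (hX i)

lemma prod_est1 {ι : Type*} [DecidableEq ι] (s : Finset ι) (g : ι → ℝ) (hg : ∀ i, |g i| ≤ 1) :
    |∏ i ∈ s, (1 + g i) - 1| ≤ 2 ^ s.card * ∑ i ∈ s, |g i| := by
  induction s using Finset.induction_on with
  | empty => simp
  | insert j s hj ih =>
    rw [Finset.prod_insert hj, Finset.sum_insert hj, Finset.card_insert_of_notMem hj]
    have e : (1 + g j) * ∏ i ∈ s, (1 + g i) - 1 = (∏ i ∈ s, (1 + g i) - 1) * (1 + g j) + g j := by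
      ring
    rw [e]
    have h1 : |1 + g j| ≤ 2 := by
      have := abs_add_le 1 (g j); have := hg j; rw [abs_one] at *; linarith
    refine (abs_add_le _ _).trans ?_
    rw [abs_mul]
    have h2 : (1 : ℝ) ≤ 2 ^ (s.card + 1) := one_le_pow₀ (by norm_num)
    have h3 := mul_le_mul ih h1 (abs_nonneg _) (by positivity)
    have h4 := mul_le_mul_of_nonneg_right h2 (abs_nonneg (g j))
    rw [pow_succ] at h4 ⊢
    nlinarith

lemma prod_est2 {ι : Type*} [DecidableEq ι] (s : Finset ι) (g : ι → ℝ) (δ : ℝ) (hδ : δ ≤ 1)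
    (hg : ∀ i, |g i| ≤ δ) :
    |∏ i ∈ s, (1 + g i) - 1 - ∑ i ∈ s, g i| ≤ 2 ^ s.card * δ * ∑ i ∈ s, |g i| := by
  induction s using Finset.induction_on with
  | empty => simp
  | insert j s hj ih =>
    rw [Finset.prod_insert hj, Finset.sum_insert hj, Finset.sum_insert hj,
      Finset.card_insert_of_notMem hj]
    have e : (1 + g j) * ∏ i ∈ s, (1 + g i) - 1 - (g j + ∑ i ∈ s, g i) =
        (∏ i ∈ s, (1 + g i) - 1 - ∑ i ∈ s, g i) + g j * (∏ i ∈ s, (1 + g i) - 1) := by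
      ring
    rw [e]
    refine (abs_add_le _ _).trans ?_
    rw [abs_mul]
    have h1 := prod_est1 s g fun i => (hg i).trans hδ
    have h3 := mul_le_mul (hg j) h1 (abs_nonneg _) ((abs_nonneg _).trans (hg j))
    have h4 : 0 ≤ 2 ^ s.card * δ * |g j| :=
      mul_nonneg (mul_nonneg (by positivity) ((abs_nonneg _).trans (hg j))) (abs_nonneg _)
    rw [pow_succ]
    nlinarith

end

/-! ### Remainder estimates for densities near one -/

section

variable {m : ℕ} [NeZero m]

/-- The joint law of all the vectors `x_i` and of the symmetrised unit normal. -/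
def LM (m : ℕ) [NeZero m] : Measure ((Fin m → Euc (m + 1)) × Euc (m + 1)) :=
  (2⁻¹ : ℝ≥0∞) • ((Wm (nu (m + 1))).map (fun x => (x, Nrm (wv x))) +
    (Wm (nu (m + 1))).map (fun x => (x, -Nrm (wv x))))

instance finite_LM : IsFiniteMeasure (LM m) := by
  have := finite_Wm (m := m) (nu_sphere (m + 1))
  unfold LM
  exact Measure.smul_finite _ (by simp)

lemma LM_map_JM (i : Fin m) : (LM m).map (fun p => (p.1 i, p.2)) = JM i := by
  have h : Measurable fun p : (Fin m → Euc (m + 1)) × Euc (m + 1) => (p.1 i, p.2) := by fun_prop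
  rw [LM, JM, Measure.map_smul, Measure.map_add _ _ h, Measure.map_map h (by fun_prop),
    Measure.map_map h (by fun_prop)]
  rfl

lemma LM_map_snd : (LM m).map Prod.snd = lamM (nu (m + 1)) := by
  rw [LM, lamM, Measure.map_smul, Measure.map_add _ _ measurable_snd,
    Measure.map_map measurable_snd (by fun_prop), Measure.map_map measurable_snd (by fun_prop)]
  rfl

lemma lintegral_LM (G : (Fin m → Euc (m + 1)) × Euc (m + 1) → ℝ≥0∞) (hG : Measurable G) :
    ∫⁻ p, G p ∂(LM m) = 2⁻¹ * ∫⁻ x, ENNReal.ofReal ‖wv x‖ *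
      (G (x, Nrm (wv x)) + G (x, -Nrm (wv x))) ∂(Measure.pi fun _ : Fin m => nu (m + 1)) := by
  rw [LM, lintegral_smul_measure, lintegral_add_measure, lintegral_map hG (by fun_prop),
    lintegral_map hG (by fun_prop), ← lintegral_add_left (by fun_prop), Wm,
    lintegral_withDensity_eq_lintegral_mul _ (by fun_prop) (by fun_prop), smul_eq_mul]
  rfl

/-- The measure on the sphere with density `f`. -/
def dn (f : Euc (m + 1) → ℝ) : Measure (Euc (m + 1)) :=
  (nu (m + 1)).withDensity fun x => ENNReal.ofReal (f x)

lemma finite_dn (f : Euc (m + 1) → ℝ) (hf : Measurable f) (C : ℝ) (hC : ∀ x, |f x| ≤ C) :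
    IsFiniteMeasure (dn f) :=
  isFiniteMeasure_withDensity_ofReal
    (Integrable.of_bound hf.aestronglyMeasurable C (.of_forall hC) : Integrable f _).2

lemma dn_sphere (f : Euc (m + 1) → ℝ) : ∀ᵐ x ∂(dn f), ‖x‖ = 1 :=
  (withDensity_absolutelyContinuous _ _).ae_le (nu_sphere _)

lemma integral_dn (f ψ : Euc (m + 1) → ℝ) (hf : Measurable f) (h0 : ∀ x, 0 ≤ f x) :
    ∫ x, ψ x ∂(dn f) = ∫ x, f x * ψ x ∂(nu (m + 1)) := by
  rw [dn, integral_withDensity_eq_integral_toReal_smul (by fun_prop) (by simp)]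
  simp [ENNReal.toReal_ofReal, h0]

lemma lamM_dn (f : Euc (m + 1) → ℝ) (hf : Measurable f) (h0 : ∀ x, 0 ≤ f x) (C : ℝ)
    (hC : ∀ x, |f x| ≤ C) :
    lamM (dn f) = ((LM m).withDensity fun p => ENNReal.ofReal (∏ i, f (p.1 i))).map Prod.snd := by
  have := finite_dn f hf C hC
  ext A hA
  rw [← lintegral_indicator_one hA, ← lintegral_indicator_one hA]
  have hI : Measurable (A.indicator (1 : Euc (m + 1) → ℝ≥0∞)) := measurable_one.indicator hA
  generalize A.indicator (1 : Euc (m + 1) → ℝ≥0∞) = G at hI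
  have hF : Measurable fun x : Fin m → Euc (m + 1) => ∏ i, f (x i) := by fun_prop
  rw [lintegral_map hI measurable_snd, lintegral_withDensity_eq_lintegral_mul _ (by fun_prop)
    (by fun_prop), lintegral_LM _ (by fun_prop), lintegral_lamM _ _ hI]
  congr 1
  have : IsFiniteMeasure ((nu (m + 1)).withDensity fun x => ENNReal.ofReal (f x)) := this
  unfold dn
  rw [pi_withDensity _ (by fun_prop), lintegral_withDensity_eq_lintegral_mul _ (by fun_prop)
    (by fun_prop)]
  refine lintegral_congr fun x => ?_
  simp only [Pi.mul_apply]
  rw [ENNReal.ofReal_prod_of_nonneg fun i _ => h0 _]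
  ring

lemma phi_bounds (f : Euc (m + 1) → ℝ) (hf : Measurable f) (δ : ℝ) (hδ : 0 ≤ δ)
    (hδ1 : 2 ^ m * m * δ ≤ 1) (hfδ : ∀ x, |f x - 1| ≤ δ) :
    δ ≤ 1 ∧ (∀ x, 0 ≤ f x) ∧ (∀ x, |f x| ≤ 2) ∧
      ∀ x : Fin m → Euc (m + 1), |∏ i, f (x i) - 1| ≤ 2 ^ m * m * δ := by
  have h1 : (1 : ℝ) ≤ 2 ^ m * m := by
    have a : (1 : ℝ) ≤ 2 ^ m := one_le_pow₀ (by norm_num)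
    have b : (1 : ℝ) ≤ m := by exact_mod_cast Nat.one_le_iff_ne_zero.2 (NeZero.ne m)
    nlinarith
  have h2 : δ ≤ 1 := by nlinarith
  refine ⟨h2, fun x => ?_, fun x => ?_, fun x => ?_⟩
  · linarith [(abs_le.1 (hfδ x)).1]
  · rw [abs_le]; constructor <;> linarith [(abs_le.1 (hfδ x)).1, (abs_le.1 (hfδ x)).2]
  · have := prod_est1 Finset.univ (fun i => f (x i) - 1) fun i => (hfδ _).trans h2
    simp only [add_sub_cancel, Finset.card_univ, Fintype.card_fin] at this
    refine this.trans ?_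
    rw [mul_assoc]
    gcongr
    refine (Finset.sum_le_sum fun i _ => hfδ (x i)).trans ?_
    simp

/-- Perturbation expansion of `lamM` at the uniform measure: to first order it is `m` times the
spherical Radon transform. -/
lemma phi (hc : cW m ≠ 0) (f : Euc (m + 1) → ℝ) (hf : Measurable f) (δ : ℝ) (hδ : 0 ≤ δ)
    (hδ1 : 2 ^ m * m * δ ≤ 1) (hfδ : ∀ x, |f x - 1| ≤ δ) :
    ∃ k : Euc (m + 1) → ℝ, Measurable k ∧ (∀ x, |k x - 1| ≤ 2 ^ m * m * δ) ∧
      lamM (dn f) = cW m • dn k ∧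
      ∀ (ψ : Euc (m + 1) → ℝ) (D : ℝ), Measurable ψ → (∀ x, |ψ x| ≤ D) →
        |∫ x, ψ x * (k x - 1) ∂(nu (m + 1)) - m * BB m (fun x => f x - 1) ψ| ≤
          2 ^ m * m * δ * BB m (fun x => |f x - 1|) (fun x => |ψ x|) := by
  obtain ⟨hd1, f0, f2, fp⟩ := phi_bounds f hf δ hδ hδ1 hfδ
  set D0 : ℝ := 2 ^ m * m * δ with hD0
  have hD00 : 0 ≤ D0 := by positivity
  have := finite_dn f hf 2 f2
  have := finite_lamM (dn_sphere f)
  have hF : Measurable fun x : Fin m → Euc (m + 1) => ∏ i, f (x i) := by fun_prop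
  have hFp : Measurable fun p : (Fin m → Euc (m + 1)) × Euc (m + 1) => ∏ i, f (p.1 i) := by fun_prop
  have hF0 : ∀ x : Fin m → Euc (m + 1), 0 ≤ ∏ i, f (x i) :=
    fun x => Finset.prod_nonneg fun i _ => f0 _
  have hL := lamM_dn f hf f0 2 f2
  have hbd : ENNReal.ofReal (1 - D0) • (cW m • nu (m + 1)) ≤ lamM (dn f) ∧
      lamM (dn f) ≤ ENNReal.ofReal (1 + D0) • (cW m • nu (m + 1)) := by
    rw [← lamM_nu, ← LM_map_snd, hL]
    constructor <;> refine Measure.le_iff.2 fun s hs => ?_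
    all_goals
      rw [Measure.smul_apply, Measure.map_apply measurable_snd hs,
        Measure.map_apply measurable_snd hs, withDensity_apply _ (measurable_snd hs), smul_eq_mul,
        ← setLIntegral_const]
      refine lintegral_mono fun p => ENNReal.ofReal_le_ofReal ?_
      linarith [(abs_le.1 (fp p.1)).1, (abs_le.1 (fp p.1)).2]
  have : IsFiniteMeasure (cW m • nu (m + 1)) := Measure.smul_finite _ cW_ne_top
  obtain ⟨k, hk, hkb, hke⟩ := exists_density (cW m • nu (m + 1)) (lamM (dn f)) (1 - D0) (1 + D0)
    (by linarith) (by linarith) hbd.1 hbd.2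
  have hke' : lamM (dn f) = cW m • dn k := by rw [hke, withDensity_smul_measure]; rfl
  have k0 : ∀ x, 0 ≤ k x := fun x => by linarith [(hkb x).1]
  refine ⟨k, hk, fun x => ?_, hke', fun ψ D hψ hD => ?_⟩
  · rw [abs_le]; constructor <;> linarith [(hkb x).1, (hkb x).2]
  have hD' : 0 ≤ D := (abs_nonneg _).trans (hD 0)
  set c := (cW m).toReal with hcdef
  have hcpos : 0 < c := ENNReal.toReal_pos hc cW_ne_top
  have i1 : ∫ v, ψ v ∂(lamM (dn f)) = c * ∫ x, k x * ψ x ∂(nu (m + 1)) := by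
    rw [hke', integral_smul_measure, integral_dn k ψ hk k0, smul_eq_mul]
  have i2 : ∫ v, ψ v ∂(lamM (dn f)) = ∫ p, (∏ i, f (p.1 i)) * ψ p.2 ∂(LM m) := by
    rw [hL, integral_map measurable_snd.aemeasurable hψ.aestronglyMeasurable,
      integral_withDensity_eq_integral_toReal_smul (by fun_prop) (by simp)]
    simp [ENNReal.toReal_ofReal, hF0]
  have i3 : ∫ p, ψ p.2 ∂(LM m) = c * ∫ x, ψ x ∂(nu (m + 1)) := by
    have := integral_map (μ := LM m) measurable_snd.aemeasurable
      (f := ψ) hψ.aestronglyMeasurable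
    rw [← this, LM_map_snd, lamM_nu, integral_smul_measure, smul_eq_mul]
  have i4 : ∀ (i : Fin m) (g ψ : Euc (m + 1) → ℝ), Measurable g → Measurable ψ →
      ∫ p, g (p.1 i) * ψ p.2 ∂(LM m) = c * BB m g ψ := by
    intro i g ψ hg hψ
    have h : Measurable fun p : (Fin m → Euc (m + 1)) × Euc (m + 1) => (p.1 i, p.2) := by fun_prop
    have := integral_map (μ := LM m) h.aemeasurable
      (f := fun q => g q.1 * ψ q.2) (Measurable.aestronglyMeasurable (by fun_prop))
    rw [← this, LM_map_JM, JM_eq, integral_smul_measure, smul_eq_mul]; rfl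
  have ik : Integrable (fun x => k x * ψ x) (nu (m + 1)) :=
    Integrable.of_bound (by fun_prop) (2 * D) (.of_forall fun x => by
      rw [norm_mul]
      refine mul_le_mul ?_ (hD x) (norm_nonneg _) (by norm_num)
      rw [Real.norm_eq_abs, abs_of_nonneg (k0 x)]; linarith [(hkb x).2])
  have iψ : Integrable ψ (nu (m + 1)) := Integrable.of_bound (by fun_prop) D (.of_forall hD)
  have jψ : Integrable (fun p => ψ p.2) (LM m) :=
    Integrable.of_bound (hψ.comp measurable_snd).aestronglyMeasurable D (.of_forall fun p => hD _)
  have jF : Integrable (fun p => (∏ i, f (p.1 i)) * ψ p.2) (LM m) :=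
    Integrable.of_bound (Measurable.aestronglyMeasurable (by fun_prop)) (2 * D)
      (.of_forall fun p => by
        rw [norm_mul]
        refine mul_le_mul ?_ (hD _) (norm_nonneg _) (by norm_num)
        rw [Real.norm_eq_abs, abs_of_nonneg (hF0 _)]; linarith [(abs_le.1 (fp p.1)).2])
  have jg : ∀ i, Integrable (fun p => (f (p.1 i) - 1) * ψ p.2) (LM m) := fun i =>
    Integrable.of_bound (Measurable.aestronglyMeasurable (by fun_prop)) (δ * D)
      (.of_forall fun p => by
        rw [norm_mul]; exact mul_le_mul (hfδ _) (hD _) (norm_nonneg _) hδ)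
  have jag : ∀ i, Integrable (fun p => |f (p.1 i) - 1| * |ψ p.2|) (LM m) := fun i => by
    have := (jg i).norm
    simpa [abs_mul] using this
  have e1 : c * (∫ x, ψ x * (k x - 1) ∂(nu (m + 1)) - m * BB m (fun x => f x - 1) ψ) =
      ∫ p, (∏ i, f (p.1 i) - 1 - ∑ i, (f (p.1 i) - 1)) * ψ p.2 ∂(LM m) := by
    have : ∫ x, ψ x * (k x - 1) ∂(nu (m + 1)) =
        ∫ x, k x * ψ x ∂(nu (m + 1)) - ∫ x, ψ x ∂(nu (m + 1)) := by
      rw [← integral_sub ik iψ]; congr 1; ext x; ring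
    rw [this, mul_sub, mul_sub, ← i1, i2, ← i3]
    have s1 : c * (m * BB m (fun x => f x - 1) ψ) =
        ∫ p, ∑ i, (f (p.1 i) - 1) * ψ p.2 ∂(LM m) := by
      rw [integral_finsetSum _ fun i _ => jg i]
      simp_rw [fun i => i4 i (fun x => f x - 1) ψ (by fun_prop) hψ]
      simp; ring
    have jFψ : Integrable (fun p => (∏ i, f (p.1 i)) * ψ p.2 - ψ p.2) (LM m) := jF.sub jψ
    rw [s1, ← integral_sub jF jψ, ← integral_sub jFψ (integrable_finsetSum _ fun i _ => jg i)]
    congr 1; ext p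
    rw [← Finset.sum_mul]; ring
  have e2 : |∫ p, (∏ i, f (p.1 i) - 1 - ∑ i, (f (p.1 i) - 1)) * ψ p.2 ∂(LM m)| ≤
      c * (2 ^ m * m * δ * BB m (fun x => |f x - 1|) (fun x => |ψ x|)) := by
    have s2 : c * (2 ^ m * m * δ * BB m (fun x => |f x - 1|) (fun x => |ψ x|)) =
        ∫ p, 2 ^ m * δ * ∑ i, |f (p.1 i) - 1| * |ψ p.2| ∂(LM m) := by
      rw [integral_const_mul, integral_finsetSum _ fun i _ => jag i]
      simp_rw [fun i => i4 i (fun x => |f x - 1|) (fun x => |ψ x|) (by fun_prop) (by fun_prop)]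
      simp; ring
    rw [s2, ← Real.norm_eq_abs]
    refine norm_integral_le_of_norm_le ((integrable_finsetSum _ fun i _ => jag i).const_mul _)
      (.of_forall fun p => ?_)
    have := prod_est2 Finset.univ (fun i => f (p.1 i) - 1) δ hd1 fun i => hfδ _
    simp only [add_sub_cancel, Finset.card_univ, Fintype.card_fin] at this
    rw [norm_mul, Real.norm_eq_abs, Real.norm_eq_abs, ← Finset.sum_mul, ← mul_assoc]
    exact mul_le_mul_of_nonneg_right this (abs_nonneg _)
  rw [← e1, abs_mul, abs_of_pos hcpos] at e2
  exact le_of_mul_le_mul_left e2 hcpos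

end

/-! ### The contraction argument in isotropic position -/

section

variable {m : ℕ} [NeZero m]

lemma n2_sq_mul (g : Euc (m + 1) → ℝ) : n2 g ^ 2 = ∫ x, g x * g x ∂(nu (m + 1)) := by
  rw [n2_sq]; congr 1; ext x; ring

/-- If `lamM ν` vanishes then `lamM` vanishes on every bounded density. -/
lemma lamM_dn_zero (hc : cW m = 0) (f : Euc (m + 1) → ℝ) (hf : Measurable f) (h0 : ∀ x, 0 ≤ f x)
    (C : ℝ) (hC : ∀ x, |f x| ≤ C) : lamM (dn f) = 0 := by
  have h1 : (LM m).map Prod.snd = 0 := by rw [LM_map_snd, lamM_nu, hc, zero_smul]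
  have h2 : LM m = 0 := (Measure.map_eq_zero_iff measurable_snd.aemeasurable).1 h1
  rw [lamM_dn f hf h0 C hC, h2]; simp

lemma lamM_zero : lamM (0 : Measure (Euc (m + 1))) = 0 := by
  have := lamM_smul (m := m) (0 : Measure (Euc (m + 1))) 0 (by simp)
  rwa [zero_smul, zero_pow (NeZero.ne m), zero_smul] at this

/-- Near the constant density, and after the normalisation of the first three moments, the
iterated operator `lamM ∘ lamM` has only the uniform measure as a projective fixed point. -/
theorem contraction (hm : 2 ≤ m) : ∃ δ : ℝ, 0 < δ ∧ ∀ (f : Euc (m + 1) → ℝ) (κ : ℝ≥0∞),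
    Measurable f → (∀ x, |f x - 1| ≤ δ) →
    (∀ a, ∫ x, ⟪a, x⟫ * f x ∂(nu (m + 1)) = 0) → ∫ x, f x ∂(nu (m + 1)) = 1 →
    (∀ a : Euc (m + 1), ∫ x, ⟪a, x⟫ ^ 2 * f x ∂(nu (m + 1)) = ‖a‖ ^ 2 / ((m : ℝ) + 1)) →
    dn f = κ • lamM (lamM (dn f)) → dn f = nu (m + 1) := by
  set A : ℝ := 2 ^ m * m with hA
  have hA1 : (1 : ℝ) ≤ A := by
    have a : (1 : ℝ) ≤ 2 ^ m := one_le_pow₀ (by norm_num)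
    have b : (1 : ℝ) ≤ m := by exact_mod_cast Nat.one_le_iff_ne_zero.2 (NeZero.ne m)
    nlinarith
  have mpos : (0 : ℝ) < m := by exact_mod_cast (by omega : 0 < m)
  refine ⟨1 / (20 * A ^ 2), by positivity, fun f κ hf hfδ hf1 hf0 hf2 hκ => ?_⟩
  set δ : ℝ := 1 / (20 * A ^ 2) with hδd
  have hδ : 0 < δ := by positivity
  have hAAδ : A * (A * δ) = 1 / 20 := by rw [hδd]; field_simp
  have hAδ : A * δ ≤ 1 / 20 := by nlinarith [mul_pos (by linarith : 0 < A) hδ]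
  have hAδ0 : 0 ≤ A * δ := by positivity
  obtain ⟨-, f0, f2, -⟩ := phi_bounds f hf δ hδ.le (by linarith) hfδ
  have fint : ∫⁻ x, ENNReal.ofReal (f x) ∂(nu (m + 1)) = 1 := by
    rw [← ofReal_integral_eq_lintegral_ofReal (Integrable.of_bound hf.aestronglyMeasurable 2
      (.of_forall f2)) (.of_forall f0), hf0]; simp
  have hmass : dn f univ = 1 := by rw [dn, withDensity_apply _ .univ]; simpa using fint
  have hc : cW m ≠ 0 := by
    intro hc
    rw [lamM_dn_zero hc f hf f0 2 f2, lamM_zero, smul_zero] at hκ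
    rw [hκ] at hmass; simp at hmass
  obtain ⟨k, hk, hkδ, ek, Ek⟩ := phi hc f hf δ hδ.le (by linarith) hfδ
  obtain ⟨l, hl, hlδ, el, El⟩ := phi hc k hk (A * δ) hAδ0 (by linarith) hkδ
  obtain ⟨-, k0, k2, -⟩ := phi_bounds k hk (A * δ) hAδ0 (by linarith) hkδ
  rw [← hA] at hkδ hlδ Ek El
  rw [hAAδ] at hlδ El
  have hl1 : ∀ x, 19 / 20 ≤ l x ∧ l x ≤ 21 / 20 := fun x => by
    have := abs_le.1 (hlδ x); constructor <;> linarith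
  have l0 : ∀ x, 0 ≤ l x := fun x => by linarith [(hl1 x).1]
  have l2 : ∀ x, |l x| ≤ 2 := fun x => by rw [abs_of_nonneg (l0 x)]; linarith [(hl1 x).2]
  have := finite_dn k hk 2 k2
  rw [ek, lamM_smul _ _ cW_ne_top, el, smul_smul, smul_smul] at hκ
  set β := κ * cW m ^ m * cW m with hβ
  -- the normalising constant `β` is finite and at most `20 / 19`
  have ll : ENNReal.ofReal (19 / 20) ≤ dn l univ := by
    rw [dn, withDensity_apply _ .univ, setLIntegral_univ]
    calc ENNReal.ofReal (19 / 20) = ∫⁻ x, ENNReal.ofReal (19 / 20) ∂(nu (m + 1)) := by simp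
      _ ≤ _ := lintegral_mono fun x => ENNReal.ofReal_le_ofReal (hl1 x).1
  have hβm : β * dn l univ = 1 := by rw [← hmass, hκ]; simp
  have hβl : β * ENNReal.ofReal (19 / 20) ≤ 1 := by rw [← hβm]; gcongr
  have hβt : β ≠ ⊤ := by
    rintro h; rw [h, ENNReal.top_mul (by simp)] at hβl; simp at hβl
  set b := β.toReal with hb
  have hb0 : 0 ≤ b := ENNReal.toReal_nonneg
  have hbl : b * (19 / 20) ≤ 1 := by
    have := ENNReal.toReal_mono (by simp) hβl
    rwa [ENNReal.toReal_mul, ENNReal.toReal_ofReal (by norm_num), ENNReal.toReal_one] at this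
  have tr : ∀ ψ : Euc (m + 1) → ℝ, ∫ x, f x * ψ x ∂(nu (m + 1)) =
      b * ∫ x, l x * ψ x ∂(nu (m + 1)) := fun ψ => by
    rw [← integral_dn f ψ hf f0, ← integral_dn l ψ hl l0, hκ, integral_smul_measure, smul_eq_mul]
  have I : ∀ (u : Euc (m + 1) → ℝ) (C : ℝ), Measurable u → (∀ x, |u x| ≤ C) →
      Integrable u (nu (m + 1)) := fun u C hu hC =>
    Integrable.of_bound hu.aestronglyMeasurable C (.of_forall hC)
  have gm : Measurable fun x => f x - 1 := by fun_prop
  have pm : Measurable fun x => k x - 1 := by fun_prop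
  have g0 : ∫ x, (f x - 1) ∂(nu (m + 1)) = 0 := by
    rw [integral_sub (I f 2 hf f2) (integrable_const _), hf0]; simp
  have horth : ∀ (a : Euc (m + 1)) (j : ℕ), j ≤ 2 →
      ∫ x, ⟪a, x⟫ ^ j * (f x - 1) ∂(nu (m + 1)) = 0 := by
    intro a j hj
    have i1 : Integrable (fun x => ⟪a, x⟫ ^ j * f x) (nu (m + 1)) :=
      (integrable_pow_nu' a j).mul_bdd (c := 2) hf.aestronglyMeasurable (.of_forall f2)
    have e : ∫ x, ⟪a, x⟫ ^ j * (f x - 1) ∂(nu (m + 1)) =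
        ∫ x, ⟪a, x⟫ ^ j * f x ∂(nu (m + 1)) - ∫ x, ⟪a, x⟫ ^ j ∂(nu (m + 1)) := by
      rw [← integral_sub i1 (integrable_pow_nu' a j)]; congr 1; ext x; ring
    interval_cases j
    · simpa using g0
    · have ha : ∫ x, ⟪a, x⟫ ∂(nu (m + 1)) = 0 := by
        have hmp : MeasurePreserving (fun x : Euc (m+1) => -x) (nu (m + 1)) (nu (m + 1)) := by
          exact nu_mp (m + 1) (LinearIsometryEquiv.neg ℝ (E := Euc (m + 1)))
        have := hmp.integral_comp (MeasurableEquiv.neg _).measurableEmbedding (fun x => ⟪a, x⟫)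
        simp only [inner_neg_right, integral_neg] at this
        linarith
      rw [e]; simp [hf1, ha]
    · rw [e, hf2, nu_mom, mom_two]; push_cast; field_simp; ring
  set G := n2 (fun x => f x - 1) with hG
  set P := n2 (fun x => k x - 1) with hP
  have hG0 : 0 ≤ G := n2_nonneg _
  have hP0 : 0 ≤ P := n2_nonneg _
  have hp : P ^ 2 ≤ (4 / 5) * G * P := by
    have h1 := Ek (fun x => k x - 1) (A * δ) pm hkδ
    have h2 := BB_contr hm (fun x => f x - 1) (fun x => k x - 1) gm pm δ (A * δ) hfδ hkδ horth
    have h3 := BB_le (fun x => |f x - 1|) (fun x => |k x - 1|) (by fun_prop) (by fun_prop)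
      δ (A * δ) (fun x => by rw [abs_abs]; exact hfδ x) (fun x => by rw [abs_abs]; exact hkδ x)
    rw [n2_abs (fun x => f x - 1), n2_abs (fun x => k x - 1)] at h3
    rw [← n2_sq_mul] at h1
    have h4 : m * |BB m (fun x => f x - 1) fun x => k x - 1| ≤ 3 / 4 * (G * P) := by
      refine (mul_le_mul_of_nonneg_left h2 mpos.le).trans_eq ?_
      rw [← hG, ← hP]; field_simp
    have h5 := (abs_le.1 h1).2
    have h6 := mul_le_mul_of_nonneg_left ((le_abs_self _).trans h3) hAδ0
    have h7 := mul_le_mul_of_nonneg_right hAδ (mul_nonneg hG0 hP0)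
    have h8 := mul_le_mul_of_nonneg_left
      (le_abs_self (BB m (fun x => f x - 1) fun x => k x - 1)) mpos.le
    nlinarith
  have hg : G ^ 2 ≤ b * ((4 / 5) * G * P) := by
    have h1 := El (fun x => f x - 1) δ gm hfδ
    have h2 := BB_contr hm (fun x => f x - 1) (fun x => k x - 1) gm pm δ (A * δ) hfδ hkδ horth
    have h3 := BB_le (fun x => |k x - 1|) (fun x => |f x - 1|) (by fun_prop) (by fun_prop)
      (A * δ) δ (fun x => by rw [abs_abs]; exact hkδ x) (fun x => by rw [abs_abs]; exact hfδ x)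
    rw [n2_abs (fun x => f x - 1), n2_abs (fun x => k x - 1)] at h3
    rw [BB_symm] at h1
    have h4 : m * |BB m (fun x => f x - 1) fun x => k x - 1| ≤ 3 / 4 * (G * P) := by
      refine (mul_le_mul_of_nonneg_left h2 mpos.le).trans_eq ?_
      rw [← hG, ← hP]; field_simp
    have h5 := (abs_le.1 h1).2
    have h6 := (le_abs_self _).trans h3
    have h8 := mul_le_mul_of_nonneg_left
      (le_abs_self (BB m (fun x => f x - 1) fun x => k x - 1)) mpos.le
    have h9 : G ^ 2 = b * ∫ x, (f x - 1) * (l x - 1) ∂(nu (m + 1)) := by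
      have ig : Integrable (fun x => f x - 1) (nu (m + 1)) := I _ δ gm hfδ
      have ifg : Integrable (fun x => f x * (f x - 1)) (nu (m + 1)) :=
        ig.bdd_mul (c := 2) hf.aestronglyMeasurable (.of_forall f2)
      have ilg : Integrable (fun x => l x * (f x - 1)) (nu (m + 1)) :=
        ig.bdd_mul (c := 2) hl.aestronglyMeasurable (.of_forall l2)
      have a1 : G ^ 2 = ∫ x, f x * (f x - 1) ∂(nu (m + 1)) := by
        rw [hG, n2_sq_mul, ← sub_zero (∫ x, f x * (f x - 1) ∂_), ← g0, ← integral_sub ifg ig]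
        congr 1; ext x; ring
      have a2 : ∫ x, (f x - 1) * (l x - 1) ∂(nu (m + 1)) =
          ∫ x, l x * (f x - 1) ∂(nu (m + 1)) := by
        rw [← sub_zero (∫ x, l x * (f x - 1) ∂_), ← g0, ← integral_sub ilg ig]
        congr 1; ext x; ring
      rw [a1, a2, tr]
    rw [h9]
    refine mul_le_mul_of_nonneg_left ?_ hb0
    nlinarith
  have hPG : P ≤ 4 / 5 * G := by
    rcases hP0.eq_or_lt with h | h
    · rw [← h]; positivity
    · nlinarith
  have hGz : G = 0 := by
    by_contra hne
    have hGp : 0 < G := lt_of_le_of_ne hG0 (Ne.symm hne)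
    have h1 : G ≤ b * (4 / 5 * P) := by
      refine le_of_mul_le_mul_right ?_ hGp
      calc G * G = G ^ 2 := by ring
        _ ≤ _ := hg
        _ = _ := by ring
    have h2 : b * (4 / 5 * P) ≤ b * (4 / 5 * (4 / 5 * G)) := by gcongr
    nlinarith
  have h0 : ∫ x, (f x - 1) ^ 2 ∂(nu (m + 1)) = 0 := by rw [← n2_sq, ← hG, hGz]; simp
  rw [integral_eq_zero_iff_of_nonneg (fun x => sq_nonneg _) (I _ (δ ^ 2) (gm.pow_const 2) fun x => by
    rw [abs_pow]; gcongr; exact hfδ x)] at h0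
  rw [dn, withDensity_congr_ae (g := 1), withDensity_one]
  filter_upwards [h0] with x hx
  have : f x = 1 := by
    have : f x - 1 = 0 := by simpa using hx
    linarith
  simp [this]

end

/-! ### Shadows and sweeping volume -/

section

lemma vol_interval_add (I : Set ℝ) (hI : IsCompact I) (hc : Convex ℝ I) (hne : I.Nonempty) (s : ℝ)
    (hs : 0 ≤ s) : volume (I + Icc 0 s) = volume I + ENNReal.ofReal s := by
  obtain ⟨a, b, hab, rfl⟩ : ∃ a b, a ≤ b ∧ I = Icc a b :=
    ⟨sInf I, sSup I, by
      obtain ⟨x, hx⟩ := hne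
      exact (csInf_le hI.bddBelow hx).trans (le_csSup hI.bddAbove hx),
      eq_Icc_of_connected_compact ⟨hne, hc.isPreconnected⟩ hI⟩
  rw [Set.Icc_add_Icc hab hs, Real.volume_Icc, Real.volume_Icc, ← ENNReal.ofReal_add (by linarith) hs]
  congr 1; ring

/-- Sweeping a compact convex set along the first factor by a segment of length `s` adds `s` times
the measure of its shadow (Cavalieri). -/
lemma sweep_prod {F : Type*} [NormedAddCommGroup F] [NormedSpace ℝ F] [FiniteDimensional ℝ F]
    [MeasurableSpace F] [BorelSpace F] (μ : Measure F) [SigmaFinite μ] (K : Set (ℝ × F))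
    (hK : IsCompact K) (hc : Convex ℝ K) (s : ℝ) (hs : 0 ≤ s) :
    ((volume : Measure ℝ).prod μ) (K + (fun t => (t, 0)) '' Icc 0 s) =
      ((volume : Measure ℝ).prod μ) K + ENNReal.ofReal s * μ (Prod.snd '' K) := by
  have : ProperSpace F := FiniteDimensional.proper ℝ F
  have hS : IsCompact ((fun t : ℝ => (t, (0 : F))) '' Icc 0 s) :=
    isCompact_Icc.image (by fun_prop)
  have hKS := hK.add hS
  have hP : MeasurableSet (Prod.snd '' K) := (hK.image continuous_snd).measurableSet
  rw [Measure.prod_apply_symm hKS.measurableSet, Measure.prod_apply_symm hK.measurableSet,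
    ← lintegral_indicator_const hP, ← lintegral_add_left
      (measurable_measure_prodMk_right hK.measurableSet)]
  refine lintegral_congr fun y => ?_
  have e : (fun x => (x, y)) ⁻¹' (K + (fun t => (t, (0 : F))) '' Icc 0 s) =
      (fun x => (x, y)) ⁻¹' K + Icc 0 s := by
    ext t
    simp only [mem_preimage, Set.mem_add, mem_image]
    constructor
    · rintro ⟨⟨a, b⟩, hab, _, ⟨r, hr, rfl⟩, h⟩
      simp only [Prod.mk_add_mk, Prod.mk.injEq, add_zero] at h
      exact ⟨a, h.2 ▸ hab, r, hr, h.1⟩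
    · rintro ⟨a, ha, r, hr, rfl⟩
      exact ⟨(a, y), ha, _, ⟨r, hr, rfl⟩, by simp⟩
  rw [e]
  by_cases hy : y ∈ Prod.snd '' K
  · rw [indicator_of_mem hy]
    refine vol_interval_add _ ?_ ?_ ?_ s hs
    · refine Metric.isCompact_of_isClosed_isBounded (hK.isClosed.preimage (by fun_prop)) ?_
      refine (hK.image continuous_fst).isBounded.subset ?_
      intro t ht; exact ⟨_, ht, rfl⟩
    · intro a ha b hb p q hp hq hpq
      have := hc ha hb hp hq hpq
      simpa [← add_smul, hpq] using this
    · obtain ⟨⟨a, b⟩, h, rfl⟩ := hy; exact ⟨a, h⟩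
  · have : (fun x => (x, y)) ⁻¹' K = ∅ := by
      ext t; simp only [mem_preimage, mem_empty_iff_false, iff_false]
      exact fun h => hy ⟨_, h, rfl⟩
    rw [indicator_of_notMem hy, this, empty_add]; simp

variable {m : ℕ} [NeZero m]

/-- The splitting `ℝ × ℝᵐ ≃ ℝᵐ⁺¹` along the first coordinate. -/
def Th (m : ℕ) : (ℝ × Euc m) ≃L[ℝ] Euc (m + 1) :=
  LinearEquiv.toContinuousLinearEquiv
    { toFun := fun p => WithLp.toLp 2 (Fin.cons p.1 (fun i => p.2 i) : Fin (m + 1) → ℝ)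
      invFun := fun x => (x 0, tl x)
      left_inv := fun p => by ext <;> simp [tl]
      right_inv := fun x => by
        ext i; refine Fin.cases ?_ (fun j => ?_) i <;> simp [tl]
      map_add' := fun p q => by
        ext i; refine Fin.cases ?_ (fun j => ?_) i <;> simp
      map_smul' := fun c p => by
        ext i; refine Fin.cases ?_ (fun j => ?_) i <;> simp }

lemma Th_apply (p : ℝ × Euc m) : Th m p = p.1 • e0 (m + 1) + emb p.2 := by
  ext i
  refine Fin.cases ?_ (fun j => ?_) i <;> simp [Th, e0, emb]

lemma tl_Th (p : ℝ × Euc m) : (Th m).symm (Th m p) = p := by simp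

lemma Th_symm_snd (x : Euc (m + 1)) : ((Th m).symm x).2 = tl x := rfl

lemma Th_haar : ∃ c : ℝ≥0, c ≠ 0 ∧
    ((volume : Measure ℝ).prod (volume : Measure (Euc m))).map (Th m) = c • volume := by
  have h1 : (((volume : Measure ℝ).prod (volume : Measure (Euc m))).map (Th m)).IsAddHaarMeasure :=
    ContinuousLinearEquiv.isAddHaarMeasure_map _ _
  refine ⟨_, ?_, Measure.isAddLeftInvariant_eq_smul _ volume⟩
  exact (Measure.addHaarScalarFactor_pos_of_isAddHaarMeasure _ _).ne'

lemma emb_isometry : Isometry (emb : Euc m → Euc (m + 1)) := by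
  refine Isometry.of_dist_eq fun x y => ?_
  rw [dist_eq_norm, dist_eq_norm, ← norm_emb (x - y)]
  congr 1
  ext i
  refine Fin.cases ?_ (fun j => ?_) i <;> simp [emb]

lemma haus_haar : ∃ c : ℝ≥0, c ≠ 0 ∧
    (Measure.hausdorffMeasure (((m + 1 : ℕ) : ℝ) - 1) : Measure (Euc m)) = c • volume := by
  have h : (((m + 1 : ℕ) : ℝ) - 1) = (Module.finrank ℝ (Euc m) : ℝ) := by simp
  rw [h]
  refine ⟨_, ?_, Measure.isAddLeftInvariant_eq_smul _ volume⟩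
  exact (Measure.addHaarScalarFactor_pos_of_isAddHaarMeasure _ _).ne'

/-- The rate of growth of the volume of `K` when `K` is swept along `v`; for unit `v` it is the
volume of the shadow of `K` on `v^⊥`. -/
def pK {n : ℕ} (K : Set (Euc n)) (v : Euc n) : ℝ := vol (K + segment ℝ 0 v) - vol K

lemma segment_zero_eq {n : ℕ} (v : Euc n) : segment ℝ 0 v = (fun t : ℝ => t • v) '' Icc 0 1 := by
  rw [segment_eq_image']; simp

lemma segment_smul_eq {n : ℕ} (v : Euc n) (s : ℝ) (hs : 0 ≤ s) :
    segment ℝ 0 (s • v) = (fun t : ℝ => t • v) '' Icc 0 s := by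
  rw [segment_zero_eq]
  ext x; constructor
  · rintro ⟨t, ht, rfl⟩
    exact ⟨t * s, ⟨mul_nonneg ht.1 hs, by nlinarith [ht.2]⟩, by simp [mul_smul]⟩
  · rintro ⟨t, ht, rfl⟩
    rcases hs.eq_or_lt with h | h
    · exact ⟨0, by simp, by have : t = 0 := le_antisymm (h ▸ ht.2) ht.1
                            simp [this]⟩
    · exact ⟨t / s, ⟨div_nonneg ht.1 hs, (div_le_one h).2 ht.2⟩, by
        simp [smul_smul, div_mul_cancel₀ _ h.ne']⟩

/-- The sweeping formula in all unit directions. -/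
lemma sweep_unit : ∃ c : ℝ≥0, c ≠ 0 ∧ ∀ (K : Set (Euc (m + 1))) (u : Euc (m + 1)), IsCompact K →
    Convex ℝ K → ‖u‖ = 1 → ∀ s : ℝ, 0 ≤ s →
    volume (K + segment ℝ 0 (s • u)) = volume K + ENNReal.ofReal s * (c *
      Measure.hausdorffMeasure (((m + 1 : ℕ) : ℝ) - 1)
        ((fun x : Euc (m + 1) => x - ⟪x, u⟫ • u) '' K)) := by
  obtain ⟨c1, hc1, e1⟩ := Th_haar (m := m)
  obtain ⟨c2, hc2, e2⟩ := haus_haar (m := m)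
  refine ⟨c1⁻¹ * c2⁻¹, by simp [hc1, hc2], fun K u hK hc hu s hs => ?_⟩
  obtain ⟨g, rfl⟩ := exists_oact_single (e0 (m + 1)) u (norm_e0 _) hu
  -- the set seen in the product
  let T : (ℝ × Euc m) → Euc (m + 1) := fun p => oact g (Th m p)
  have Tc : Continuous T := by fun_prop
  have Tadd : ∀ p q, T (p + q) = T p + T q := fun p q => by simp [T]
  have hT : ∀ A : Set (Euc (m + 1)), MeasurableSet A →
      volume A = c1⁻¹ * ((volume : Measure ℝ).prod (volume : Measure (Euc m))) (T ⁻¹' A) := by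
    intro A hA
    have h1 : volume A = volume (oact g ⁻¹' A) :=
      ((oact g).measurePreserving.measure_preimage hA.nullMeasurableSet).symm
    have h2 : (c1 : ℝ≥0∞) * volume (oact g ⁻¹' A) =
        ((volume : Measure ℝ).prod (volume : Measure (Euc m))) (T ⁻¹' A) := by
      have h3 : MeasurableSet (oact g ⁻¹' A) := (oact g).continuous.measurable hA
      have := congrArg (fun μ => μ (oact g ⁻¹' A)) e1
      simp only [Measure.map_apply (Th m).continuous.measurable h3] at this
      rw [Measure.smul_apply] at this
      exact this.symm
    rw [h1, ← h2, ← mul_assoc, ENNReal.coe_inv hc1,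
      ENNReal.inv_mul_cancel (by simpa using hc1) (by simp), one_mul]
  have Tbij : Function.Bijective T := (oact g).bijective.comp (Th m).bijective
  have hTK : IsCompact (T ⁻¹' K) := by
    have : T ⁻¹' K = (fun x => (Th m).symm ((oact g).symm x)) '' K := by
      ext p; constructor
      · intro hp; exact ⟨T p, hp, by simp [T]⟩
      · rintro ⟨x, hx, rfl⟩; simpa [T] using hx
    rw [this]; exact hK.image (by fun_prop)
  have hTc : Convex ℝ (T ⁻¹' K) := by
    intro a ha b hb p q hp hq hpq
    have := hc ha hb hp hq hpq
    simpa [T] using this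
  have seg : segment ℝ 0 (s • oact g (e0 (m + 1))) = T '' ((fun t : ℝ => (t, 0)) '' Icc 0 s) := by
    rw [segment_smul_eq _ _ hs, image_image]
    refine image_congr fun t _ => ?_
    simp only [T, Th_apply]
    have : emb (0 : Euc m) = 0 := by simpa using norm_emb (0 : Euc m)
    simp [this]
  have pre : T ⁻¹' (K + segment ℝ 0 (s • oact g (e0 (m + 1)))) =
      T ⁻¹' K + (fun t : ℝ => (t, 0)) '' Icc 0 s := by
    rw [seg]
    apply Set.image_injective.2 Tbij.1
    rw [image_preimage_eq _ Tbij.2]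
    have : ∀ A B : Set (ℝ × Euc m), T '' (A + B) = T '' A + T '' B := fun A B => by
      rw [← image2_add, ← image2_add, image_image2, image2_image_left, image2_image_right]
      simp only [Tadd]
    rw [this, image_preimage_eq _ Tbij.2]
  have hseg : IsCompact (segment ℝ 0 (s • oact g (e0 (m + 1)))) := by
    rw [segment_smul_eq _ _ hs]; exact isCompact_Icc.image (by fun_prop)
  rw [hT _ (hK.add hseg).measurableSet, pre, sweep_prod volume _ hTK hTc s hs, mul_add,
    ← hT _ hK.measurableSet]
  congr 1
  have hsh : (fun x : Euc (m + 1) => x - ⟪x, oact g (e0 (m + 1))⟫ • oact g (e0 (m + 1))) '' K =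
      (fun y => oact g (emb y)) '' (Prod.snd '' (T ⁻¹' K)) := by
    have key : ∀ p, T p - ⟪T p, oact g (e0 (m + 1))⟫ • oact g (e0 (m + 1)) = oact g (emb p.2) := by
      intro p
      simp only [T, Th_apply, LinearIsometryEquiv.inner_map_map, inner_add_left, inner_emb_e0,
        real_inner_smul_left, real_inner_self_eq_norm_sq, norm_e0]
      simp
    nth_rewrite 1 [← image_preimage_eq K Tbij.2]
    rw [image_image, image_image]
    exact image_congr fun p _ => key p
  have hiso : Isometry (fun y : Euc m => oact g (emb y)) := (oact g).isometry.comp emb_isometry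
  rw [hsh, hiso.hausdorffMeasure_image, e2, Measure.smul_apply]
  · rw [ENNReal.smul_def, smul_eq_mul]
    have : (c2 : ℝ≥0∞)⁻¹ * c2 = 1 := ENNReal.inv_mul_cancel (by simpa using hc2) (by simp)
    push_cast [ENNReal.coe_inv hc1, ENNReal.coe_inv hc2]
    calc _ = ENNReal.ofReal s * (c1 : ℝ≥0∞)⁻¹ * (1 * volume (Prod.snd '' (T ⁻¹' K))) := by ring
      _ = _ := by rw [← this]; ring
  · left; simp

/-- The ratio between the volume of shadows and the (non normalised) Hausdorff measure. -/
def cH (m : ℕ) [NeZero m] : ℝ := ((sweep_unit (m := m)).choose : ℝ)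

lemma cH_pos : 0 < cH m := by
  have := (sweep_unit (m := m)).choose_spec.1
  exact NNReal.coe_pos.2 (pos_iff_ne_zero.2 this)

lemma isCompact_seg {n : ℕ} (v : Euc n) : IsCompact (segment ℝ 0 v) := by
  rw [segment_zero_eq]; exact isCompact_Icc.image (by fun_prop)

lemma seg_vol_unit (K : Set (Euc (m + 1))) (hK : IsCompact K) (hc : Convex ℝ K) (u : Euc (m + 1))
    (hu : ‖u‖ = 1) (s : ℝ) (hs : 0 ≤ s) :
    vol (K + segment ℝ 0 (s • u)) = vol K + s * (cH m * projSupp K u) := by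
  have h := fun s hs => (sweep_unit (m := m)).choose_spec.2 K u hK hc hu s hs
  set c := (sweep_unit (m := m)).choose
  have h1 := h 1 zero_le_one
  have fin : ∀ v, volume (K + segment ℝ 0 v) ≠ ⊤ := fun v =>
    (hK.add (isCompact_seg v)).measure_lt_top.ne
  have hX : (c : ℝ≥0∞) * Measure.hausdorffMeasure (((m + 1 : ℕ) : ℝ) - 1)
        ((fun x : Euc (m + 1) => x - ⟪x, u⟫ • u) '' K) ≠ ⊤ := by
    intro hX
    rw [hX] at h1; exact fin _ (by rw [h1]; simp)
  rw [vol, h s hs, ENNReal.toReal_add hK.measure_lt_top.ne (ENNReal.mul_ne_top (by simp) hX),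
    ENNReal.toReal_mul, ENNReal.toReal_mul, ENNReal.toReal_ofReal hs]
  rfl

/-- The volume grows linearly while sweeping. -/
lemma seg_vol (K : Set (Euc (m + 1))) (hK : IsCompact K) (hc : Convex ℝ K) (v : Euc (m + 1))
    (s : ℝ) (hs : 0 ≤ s) : vol (K + segment ℝ 0 (s • v)) = vol K + s * pK K v := by
  rcases eq_or_ne v 0 with rfl | hv
  · simp [pK]
  · have hu : ‖(‖v‖⁻¹ • v)‖ = 1 := norm_smul_inv_norm hv
    have hvv : v = ‖v‖ • (‖v‖⁻¹ • v) := by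
      rw [smul_smul, mul_inv_cancel₀ (norm_ne_zero_iff.2 hv), one_smul]
    generalize ‖v‖⁻¹ • v = u at hu hvv
    have h1 := seg_vol_unit K hK hc u hu (s * ‖v‖) (by positivity)
    have h2 := seg_vol_unit K hK hc u hu ‖v‖ (by positivity)
    rw [← hvv] at h2
    rw [mul_smul, ← hvv] at h1
    rw [h1, pK, h2]; ring

lemma projSupp_eq (K : Set (Euc (m + 1))) (hK : IsCompact K) (hc : Convex ℝ K) (u : Euc (m + 1))
    (hu : ‖u‖ = 1) : projSupp K u = (cH m)⁻¹ * pK K u := by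
  have := seg_vol_unit K hK hc u hu 1 zero_le_one
  rw [one_smul, one_mul] at this
  rw [pK, this, add_sub_cancel_left, ← mul_assoc, inv_mul_cancel₀ cH_pos.ne', one_mul]

lemma pK_smul_nonneg (K : Set (Euc (m + 1))) (hK : IsCompact K) (hc : Convex ℝ K)
    (v : Euc (m + 1)) (s : ℝ) (hs : 0 ≤ s) : pK K (s • v) = s * pK K v := by
  rw [pK, seg_vol K hK hc v s hs]; ring

lemma vol_vadd {n : ℕ} (K : Set (Euc n)) (x : Euc n) : vol (K + {x}) = vol K := by
  rw [add_singleton, vol, vol]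
  congr 1
  have : (fun y => y + x) '' K = x +ᵥ K := by
    ext z; simp only [mem_image, Set.mem_vadd_set, vadd_eq_add, add_comm]
  rw [this, measure_vadd]

lemma segment_neg_eq {n : ℕ} (v : Euc n) : segment ℝ 0 (-v) + {v} = segment ℝ 0 v := by
  rw [add_singleton]
  have := segment_translate_image ℝ v 0 (-v)
  simp only [add_zero, add_neg_cancel] at this
  rw [segment_symm ℝ 0 v, ← this]
  exact image_congr fun y _ => by rw [add_comm]

lemma pK_neg {n : ℕ} (K : Set (Euc n)) (v : Euc n) : pK K (-v) = pK K v := by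
  rw [pK, pK, ← segment_neg_eq v, ← add_assoc, vol_vadd]

lemma vol_mono {n : ℕ} {K L : Set (Euc n)} (hL : IsCompact L) (h : K ⊆ L) : vol K ≤ vol L :=
  ENNReal.toReal_mono hL.measure_lt_top.ne (measure_mono h)

lemma pK_nonneg {n : ℕ} (K : Set (Euc n)) (hK : IsCompact K) (v : Euc n) : 0 ≤ pK K v := by
  rw [pK, sub_nonneg]
  refine vol_mono (hK.add (isCompact_seg v)) fun x hx => ?_
  exact ⟨x, hx, 0, left_mem_segment ℝ _ _, by simp⟩

end

/-! ### Shadows in terms of the curvature function -/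

section

lemma vol_smul {n : ℕ} (K : Set (Euc n)) (r : ℝ) (hr : 0 ≤ r) : vol (r • K) = r ^ n * vol K := by
  rw [vol, Measure.addHaar_smul, ENNReal.toReal_mul, ENNReal.toReal_ofReal (abs_nonneg _), vol,
    abs_of_nonneg (pow_nonneg hr _)]
  simp

lemma vol_pos {n : ℕ} (K : Set (Euc n)) (hK : IsConvexBody K) : 0 < vol K :=
  ENNReal.toReal_pos (Measure.measure_pos_of_nonempty_interior _ hK.2.2).ne' hK.1.measure_lt_top.ne

lemma suppFn_seg_ball {n : ℕ} (v x : Euc n) (hx : ‖x‖ = 1) (s : ℝ) (hs : 0 ≤ s) :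
    suppFn (segment ℝ (-v) v + closedBall 0 s) x = |⟪v, x⟫| + s := by
  refine IsGreatest.csSup_eq ⟨?_, ?_⟩
  · rcases abs_cases ⟪v, x⟫ with h | h
    · refine ⟨v + s • x, ⟨v, right_mem_segment ℝ _ _, s • x, ?_, rfl⟩, ?_⟩
      · simp [norm_smul, hx, abs_of_nonneg hs]
      · simp [inner_add_left, real_inner_smul_left, h.1, hx]
    · refine ⟨-v + s • x, ⟨-v, left_mem_segment ℝ _ _, s • x, ?_, rfl⟩, ?_⟩
      · simp [norm_smul, hx, abs_of_nonneg hs]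
      · simp [inner_add_left, real_inner_smul_left, h.1, hx]
  · rintro _ ⟨_, ⟨_, ⟨a, b, ha, hb, hab, rfl⟩, z, hz, rfl⟩, rfl⟩
    have h1 : ⟪z, x⟫ ≤ s := by
      have := real_inner_le_norm z x
      rw [hx, mul_one] at this
      exact this.trans (by simpa using hz)
    simp only [inner_add_left, real_inner_smul_left, inner_neg_left]
    have h2 := le_abs_self ⟪v, x⟫
    have h3 := neg_abs_le ⟪v, x⟫
    nlinarith

lemma suppFn_ball {n : ℕ} (x : Euc n) (hx : ‖x‖ = 1) : suppFn (closedBall (0 : Euc n) 1) x = 1 := by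
  have := suppFn_seg_ball 0 x hx 1 zero_le_one
  simpa using this

variable {m : ℕ} [NeZero m]

/-- Spherical Lebesgue measure, concentrated on the sphere. -/
def sg (n : ℕ) : Measure (Euc n) := (sphMeas n).restrict (sphere 0 1)

lemma sg_sphere (n : ℕ) : ∀ᵐ x ∂(sg n), ‖x‖ = 1 := by
  filter_upwards [ae_restrict_mem isClosed_sphere.measurableSet] with x hx
  simpa using hx

lemma sg_map (n : ℕ) (g : OG n) : (sg n).map (oact g) = sg n := by
  have h := (oact g).toIsometryEquiv.map_hausdorffMeasure ((n : ℝ) - 1)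
  have hm : MeasurableEmbedding (oact g) :=
    (oact g).toHomeomorph.toMeasurableEquiv.measurableEmbedding
  have := hm.restrict_map (sphMeas n) (sphere 0 1)
  rw [sg]
  have e : sphere (0 : Euc n) 1 = oact g ⁻¹' sphere 0 1 := by ext; simp
  nth_rewrite 1 [e]
  rw [← this]
  congr 1

/-- A body inside the ball of radius `R` grows at least as fast as under the dilations
`(1 + t / R) K`; this makes the surface area positive. -/
lemma growth (K : Set (Euc (m + 1))) (hK : IsConvexBody K) : ∃ R : ℝ, 0 < R ∧ ∀ t : ℝ, 0 < t →
    vol K / R ≤ (vol (K + t • closedBall (0 : Euc (m + 1)) 1) - vol K) / t := by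
  obtain ⟨R, hR, hKR⟩ := hK.1.isBounded.exists_pos_norm_le
  refine ⟨R, hR, fun t ht => ?_⟩
  rw [le_div_iff₀ ht]
  have h1 : (1 + t / R) • K ⊆ K + t • closedBall (0 : Euc (m + 1)) 1 := by
    rintro _ ⟨x, hx, rfl⟩
    refine ⟨x, hx, t • (R⁻¹ • x), ⟨_, ?_, rfl⟩, ?_⟩
    · simp only [mem_closedBall, dist_zero_right, norm_smul, norm_inv, Real.norm_eq_abs,
        abs_of_pos hR]
      rw [inv_mul_le_iff₀ hR, mul_one]; exact hKR x hx
    · simp [add_smul, smul_smul, div_eq_mul_inv]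
  have h2 := vol_mono (hK.1.add ((isCompact_closedBall _ _).smul t)) h1
  rw [vol_smul _ _ (by positivity)] at h2
  have h3 : 1 + t / R ≤ (1 + t / R) ^ (m + 1) :=
    le_self_pow₀ (by linarith [div_pos ht hR]) (by omega)
  have h4 := mul_le_mul_of_nonneg_right h3 (vol_pos K hK).le
  have : vol K / R * t = t / R * vol K := by ring
  nlinarith

/-- The spherical Lebesgue measure is a finite non-zero multiple of the invariant probability
measure; here this is read off from the existence of a body with a curvature function. -/
lemma sg_eq (K : Set (Euc (m + 1))) (hK : IsConvexBody K) (f : Euc (m + 1) → ℝ)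
    (hf : ContinuousOn f (sphere 0 1)) (hf0 : ∀ x ∈ sphere (0 : Euc (m + 1)) 1, 0 < f x)
    (hKf : HasCurvFn K f) : ∃ M : ℝ≥0∞, M ≠ 0 ∧ M ≠ ⊤ ∧ sg (m + 1) = M • nu (m + 1) := by
  obtain ⟨R, hR, hg⟩ := growth K hK
  have hB : IsConvexBody (closedBall (0 : Euc (m + 1)) 1) :=
    ⟨isCompact_closedBall _ _, convex_closedBall _ _,
      ⟨0, by rw [interior_closedBall _ one_ne_zero]; simp⟩⟩
  have h1 : vol K / R ≤ ∫ x, suppFn (closedBall (0 : Euc (m + 1)) 1) x * f x ∂(sg (m + 1)) :=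
    ge_of_tendsto (hKf _ hB) (by
      filter_upwards [self_mem_nhdsWithin] with t ht using hg t ht)
  have h2 : ∫ x, suppFn (closedBall (0 : Euc (m + 1)) 1) x * f x ∂(sg (m + 1)) =
      ∫ x, f x ∂(sg (m + 1)) := by
    refine integral_congr_ae ?_
    filter_upwards [sg_sphere (m + 1)] with x hx
    rw [suppFn_ball x hx, one_mul]
  rw [h2] at h1
  have h3 : 0 < ∫ x, f x ∂(sg (m + 1)) := (div_pos (vol_pos K hK) hR).trans_le h1
  have hi : Integrable f (sg (m + 1)) := by
    by_contra h; rw [integral_undef h] at h3; exact lt_irrefl _ h3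
  obtain ⟨x0, hx0, hmin⟩ := (isCompact_sphere (0 : Euc (m + 1)) 1).exists_isMinOn
    ⟨e0 (m + 1), by simp [norm_e0]⟩ hf
  have hfin : IsFiniteMeasure (sg (m + 1)) := by
    have : Integrable (fun _ : Euc (m + 1) => f x0) (sg (m + 1)) := by
      refine hi.mono (by fun_prop) ?_
      filter_upwards [sg_sphere (m + 1)] with x hx
      have hx' : x ∈ sphere (0 : Euc (m + 1)) 1 := by simpa using hx
      rw [Real.norm_of_nonneg (hf0 x0 hx0).le, Real.norm_of_nonneg (hf0 x hx').le]
      exact hmin hx'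
    rcases integrable_const_iff.1 this with h | h
    · exact absurd h (hf0 x0 hx0).ne'
    · exact h
  refine ⟨sg (m + 1) univ, ?_, measure_ne_top _ _, nu_unique _ (sg_map _) (sg_sphere _)⟩
  intro h
  rw [Measure.measure_univ_eq_zero.1 h] at h3
  simp at h3

lemma smul_seg_ball {n : ℕ} (v : Euc n) (s t : ℝ) (ht : 0 < t) (hs : 0 ≤ s) :
    t • (segment ℝ (-v) v + closedBall (0 : Euc n) s) =
      segment ℝ 0 ((2 * t) • v) + closedBall 0 (t * s) + {-(t • v)} := by
  rw [smul_add, smul_closedBall _ _ hs, smul_zero, Real.norm_of_nonneg ht.le, add_right_comm]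
  congr 1
  have h1 : t • segment ℝ (-v) v = segment ℝ (t • (-v)) (t • v) := by
    have := image_segment ℝ (LinearMap.lsmul ℝ (Euc n) t).toAffineMap (-v) v
    exact this
  rw [h1, add_singleton]
  have := segment_translate_image ℝ (-(t • v)) 0 ((2 * t) • v)
  have e : -(t • v) + (2 * t) • v = t • v := by rw [mul_smul, two_smul]; abel
  rw [add_zero, e] at this
  rw [smul_neg, ← this]
  exact image_congr fun y _ => by rw [add_comm]

lemma upper (K : Set (Euc (m + 1))) (hK : IsConvexBody K) : ∃ r : ℝ, 0 < r ∧
    ∀ (v : Euc (m + 1)) (s t : ℝ), 0 ≤ s → 0 < t →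
    vol (K + t • (segment ℝ (-v) v + closedBall (0 : Euc (m + 1)) s)) ≤
      (1 + t * s / r) ^ (m + 1) * (vol K + 2 * t * pK K v) := by
  obtain ⟨x0, hx0⟩ := hK.2.2
  obtain ⟨r, hr, hball⟩ := Metric.nhds_basis_closedBall.mem_iff.1 (mem_interior_iff_mem_nhds.1 hx0)
  refine ⟨r, hr, fun v s t hs ht => ?_⟩
  rw [smul_seg_ball v s t ht hs, ← add_assoc, vol_vadd, ← add_assoc]
  rw [← seg_vol K hK.1 hK.2.1 v (2 * t) (by positivity)]
  set K' := K + segment ℝ 0 ((2 * t) • v)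
  have hK' : Convex ℝ K' := hK.2.1.add (convex_segment _ _)
  have hKc : IsCompact K' := hK.1.add (isCompact_seg _)
  have hsub : K ⊆ K' := fun x hx => ⟨x, hx, 0, left_mem_segment ℝ _ _, by simp⟩
  set q := t * s / r
  have hq : 0 ≤ q := by positivity
  have h1 : K' + closedBall 0 (t * s) ⊆ (1 + q) • K' + {-(q • x0)} := by
    rw [hK'.add_smul zero_le_one hq, one_smul]
    rintro _ ⟨y, hy, z, hz, rfl⟩
    rw [mem_closedBall, dist_zero_right] at hz
    have hz0 : ∃ w ∈ K', z = q • w - q • x0 := by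
      rcases hq.eq_or_lt with h | h
      · refine ⟨y, hy, ?_⟩
        have h0 : t * s = 0 := by
          have := (div_eq_zero_iff.1 h.symm); exact this.resolve_right hr.ne'
        rw [h0, norm_le_zero_iff] at hz
        rw [hz, ← h]; simp
      · refine ⟨x0 + q⁻¹ • z, hsub (hball ?_), ?_⟩
        · rw [mem_closedBall, dist_self_add_left, norm_smul, norm_inv, Real.norm_of_nonneg hq,
            inv_mul_le_iff₀ h]
          calc ‖z‖ ≤ t * s := hz
            _ = q * r := by simp only [q]; field_simp
        · rw [smul_add, smul_smul, mul_inv_cancel₀ h.ne', one_smul]; abel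
    obtain ⟨w, hw, rfl⟩ := hz0
    exact ⟨y + q • w, ⟨y, hy, q • w, ⟨w, hw, rfl⟩, rfl⟩, -(q • x0), rfl, by
      simp only [sub_eq_add_neg, add_assoc]⟩
  have h2 := vol_mono ((hKc.smul (1 + q)).add isCompact_singleton) h1
  rwa [vol_vadd, vol_smul _ _ (by positivity)] at h2

lemma lower (K : Set (Euc (m + 1))) (hK : IsConvexBody K) (v : Euc (m + 1)) (s t : ℝ) (hs : 0 ≤ s)
    (ht : 0 < t) : vol K + 2 * t * pK K v ≤
    vol (K + t • (segment ℝ (-v) v + closedBall (0 : Euc (m + 1)) s)) := by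
  rw [smul_seg_ball v s t ht hs, ← add_assoc, vol_vadd, ← add_assoc]
  rw [← seg_vol K hK.1 hK.2.1 v (2 * t) (by positivity)]
  refine vol_mono ((hK.1.add (isCompact_seg _)).add (isCompact_closedBall _ _)) fun x hx => ?_
  exact ⟨x, hx, 0, by simp [mul_nonneg ht.le hs], by simp⟩

/-- Shadows are a positive multiple of the cosine transform of the curvature function. -/
lemma pK_curv (K : Set (Euc (m + 1))) (hK : IsConvexBody K) (f : Euc (m + 1) → ℝ)
    (hf : ContinuousOn f (sphere 0 1)) (hf0 : ∀ x ∈ sphere (0 : Euc (m + 1)) 1, 0 < f x)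
    (hKf : HasCurvFn K f) : ∃ M : ℝ, 0 < M ∧ ∀ v, pK K v = M * ∫ x, |⟪v, x⟫| * f x ∂(nu (m + 1)) := by
  obtain ⟨M, hM0, hMt, hM⟩ := sg_eq K hK f hf hf0 hKf
  refine ⟨M.toReal / 2, by have := ENNReal.toReal_pos hM0 hMt; positivity, fun v => ?_⟩
  have fin : IsFiniteMeasure (sg (m + 1)) := by rw [hM]; exact Measure.smul_finite _ hMt
  have e : M.toReal * ∫ x, |⟪v, x⟫| * f x ∂(nu (m + 1)) = ∫ x, |⟪v, x⟫| * f x ∂(sg (m + 1)) := by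
    rw [hM, integral_smul_measure, smul_eq_mul]
  obtain ⟨r, hr, hup⟩ := upper K hK
  have key : ∀ s : ℝ, 0 < s →
      2 * pK K v ≤ ∫ x, (|⟪v, x⟫| + s) * f x ∂(sg (m + 1)) ∧
      ∫ x, (|⟪v, x⟫| + s) * f x ∂(sg (m + 1)) ≤ 2 * pK K v + s * ((m + 1) / r * vol K) := by
    intro s hs
    have hL : IsConvexBody (segment ℝ (-v) v + closedBall (0 : Euc (m + 1)) s) := by
      refine ⟨IsCompact.add ?_ (isCompact_closedBall _ _),
        (convex_segment _ _).add (convex_closedBall _ _), ⟨0, ?_⟩⟩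
      · rw [segment_eq_image']; exact isCompact_Icc.image (by fun_prop)
      · refine mem_interior_iff_mem_nhds.2 (mem_of_superset (closedBall_mem_nhds _ hs) ?_)
        intro x hx
        refine ⟨0, ⟨1 / 2, 1 / 2, by norm_num, by norm_num, by norm_num, by simp⟩, x, hx, by simp⟩
    have hlim := hKf _ hL
    have e2 : ∫ x in sphere (0 : Euc (m + 1)) 1,
        suppFn (segment ℝ (-v) v + closedBall (0 : Euc (m + 1)) s) x * f x ∂(sphMeas (m + 1)) =
        ∫ x, (|⟪v, x⟫| + s) * f x ∂(sg (m + 1)) := by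
      refine integral_congr_ae ?_
      filter_upwards [sg_sphere (m + 1)] with x hx
      rw [suppFn_seg_ball v x hx s hs.le]
    rw [e2] at hlim
    constructor
    · refine ge_of_tendsto hlim ?_
      filter_upwards [self_mem_nhdsWithin] with t ht
      have ht : 0 < t := ht
      rw [le_div_iff₀ ht]
      linarith [lower K hK v s t hs.le ht]
    · have hd : HasDerivAt (fun t : ℝ => (1 + t * s / r) ^ (m + 1) * (vol K + 2 * t * pK K v))
          (2 * pK K v + s * ((m + 1) / r * vol K)) 0 := by
        have h1 : HasDerivAt (fun t : ℝ => 1 + t * s / r) (s / r) 0 := by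
          have := (((hasDerivAt_id (0 : ℝ)).mul_const s).div_const r).const_add 1
          simpa using this
        have h2 : HasDerivAt (fun t : ℝ => vol K + 2 * t * pK K v) (2 * pK K v) 0 := by
          have := (((hasDerivAt_id (0 : ℝ)).const_mul 2).mul_const (pK K v)).const_add (vol K)
          simpa using this
        have h3 := (h1.pow (m + 1)).mul h2
        refine h3.congr_deriv ?_
        simp; ring
      have hs2 := hd.tendsto_slope_zero_right
      refine le_of_tendsto_of_tendsto hlim hs2 ?_
      filter_upwards [self_mem_nhdsWithin] with t ht
      have ht : 0 < t := ht
      rw [smul_eq_mul, inv_mul_eq_div]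
      have := hup v s t hs.le ht
      rw [show (1 + (0 + t) * s / r) ^ (m + 1) * (vol K + 2 * (0 + t) * pK K v) -
        (1 + 0 * s / r) ^ (m + 1) * (vol K + 2 * 0 * pK K v) =
        (1 + t * s / r) ^ (m + 1) * (vol K + 2 * t * pK K v) - vol K by
          simp only [zero_add, zero_mul, zero_div, mul_zero, add_zero, one_pow, one_mul]]
      exact div_le_div_of_nonneg_right (sub_le_sub_right this _) ht.le
  have ff : Integrable f (sg (m + 1)) := by
    have : IsFiniteMeasure ((sphMeas (m + 1)).restrict (sphere 0 1)) := fin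
    obtain ⟨C, hC⟩ := (isCompact_sphere (0 : Euc (m + 1)) 1).exists_bound_of_continuousOn hf
    refine Integrable.of_bound (hf.aestronglyMeasurable isClosed_sphere.measurableSet) C ?_
    filter_upwards [sg_sphere (m + 1)] with x hx using hC x (by simpa using hx)
  have gf : Integrable (fun x => |⟪v, x⟫| * f x) (sg (m + 1)) := by
    refine ff.bdd_mul (c := ‖v‖) (by fun_prop) ?_
    filter_upwards [sg_sphere (m + 1)] with x hx
    rw [Real.norm_eq_abs, abs_abs]; exact abs_inner_le_of_unit v x hx
  have lin : ∀ s : ℝ, ∫ x, (|⟪v, x⟫| + s) * f x ∂(sg (m + 1)) =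
      ∫ x, |⟪v, x⟫| * f x ∂(sg (m + 1)) + s * ∫ x, f x ∂(sg (m + 1)) := fun s => by
    rw [← integral_const_mul, ← integral_add gf (ff.const_mul s)]
    congr 1; ext x; ring
  simp_rw [lin, ← e] at key
  have T : ∀ a b : ℝ, Tendsto (fun s : ℝ => a + s * b) (𝓝[>] 0) (𝓝 a) := fun a b => by
    have : Tendsto (fun s : ℝ => a + s * b) (𝓝 0) (𝓝 (a + 0 * b)) :=
      Continuous.tendsto (by fun_prop) 0
    rw [zero_mul, add_zero] at this
    exact this.mono_left nhdsWithin_le_nhds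
  have h1 : 2 * pK K v ≤ M.toReal * ∫ x, |⟪v, x⟫| * f x ∂(nu (m + 1)) :=
    ge_of_tendsto (T _ (∫ x, f x ∂(sg (m + 1)))) (by
      filter_upwards [self_mem_nhdsWithin] with s hs using (key s hs).1)
  have h2 : M.toReal * ∫ x, |⟪v, x⟫| * f x ∂(nu (m + 1)) ≤ 2 * pK K v :=
    le_of_tendsto_of_tendsto (T _ (∫ x, f x ∂(sg (m + 1)))) (T _ ((m + 1) / r * vol K)) (by
      filter_upwards [self_mem_nhdsWithin] with s hs using (key s hs).2)
  linarith

end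

/-! ### Volume of zonotopes -/

section

variable {m : ℕ} [NeZero m] {ι : Type*} [DecidableEq ι]

/-- The zonotope generated by the vectors `a i`, `i ∈ s`. -/
def zt {n : ℕ} (a : ι → Euc n) (s : Finset ι) : Set (Euc n) := ∑ i ∈ s, segment ℝ 0 (a i)

/-- The volume of `B` plus a zonotope. -/
def VZ {n : ℕ} (a : ι → Euc n) (B : Set (Euc n)) (s : Finset ι) : ℝ := vol (B + zt a s)

/-- The Möbius transform of `VZ` in the set of generators. -/
def cZ {n : ℕ} (a : ι → Euc n) (B : Set (Euc n)) (s : Finset ι) : ℝ :=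
  ∑ J ∈ s.powerset, (-1) ^ (s.card + J.card) * VZ a B J

lemma zt_insert {n : ℕ} (a : ι → Euc n) (s : Finset ι) (i : ι) (hi : i ∉ s) :
    zt a (insert i s) = segment ℝ 0 (a i) + zt a s := Finset.sum_insert hi

lemma zt_compact {n : ℕ} (a : ι → Euc n) (s : Finset ι) : IsCompact (zt a s) := by
  induction s using Finset.induction_on with
  | empty => simp [zt, ← Set.singleton_zero]
  | insert i s hi ih => rw [zt_insert a s i hi]; exact (isCompact_seg _).add ih

lemma zt_convex {n : ℕ} (a : ι → Euc n) (s : Finset ι) : Convex ℝ (zt a s) :=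
  convex_sum _ fun i _ => convex_segment _ _

lemma cZ_insert {n : ℕ} (a : ι → Euc n) (B : Set (Euc n)) (s : Finset ι) (i : ι) (hi : i ∉ s) :
    cZ a B (insert i s) = cZ a (B + segment ℝ 0 (a i)) s - cZ a B s := by
  have h1 : ∀ J ∈ s.powerset, (-1 : ℝ) ^ ((insert i s).card + (insert i J).card) *
      VZ a B (insert i J) = (-1) ^ (s.card + J.card) * VZ a (B + segment ℝ 0 (a i)) J := by
    intro J hJ
    have hiJ : i ∉ J := fun h => hi (Finset.mem_powerset.1 hJ h)
    rw [Finset.card_insert_of_notMem hi, Finset.card_insert_of_notMem hiJ, VZ, VZ,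
      zt_insert a J i hiJ, add_assoc B]
    ring
  have h2 : ∀ J ∈ s.powerset, (-1 : ℝ) ^ ((insert i s).card + J.card) *
      VZ a B J = - ((-1) ^ (s.card + J.card) * VZ a B J) := by
    intro J hJ
    rw [Finset.card_insert_of_notMem hi]; ring
  rw [cZ, Finset.sum_powerset_insert hi, Finset.sum_congr rfl h1, Finset.sum_congr rfl h2,
    Finset.sum_neg_distrib, cZ, cZ]
  ring

/-- Moebius inversion: the volume of a sum of segments is the sum over subfamilies of the
alternating sums `cZ`. -/
lemma VZ_eq_sum {n : ℕ} (a : ι → Euc n) (s : Finset ι) : ∀ B : Set (Euc n),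
    VZ a B s = ∑ J ∈ s.powerset, cZ a B J := by
  induction s using Finset.induction_on with
  | empty => intro B; simp [cZ]
  | insert i s hi ih =>
    intro B
    have h1 : ∀ J ∈ s.powerset, cZ a B (insert i J) =
        cZ a (B + segment ℝ 0 (a i)) J - cZ a B J := fun J hJ =>
      cZ_insert a B J i fun h => hi (Finset.mem_powerset.1 hJ h)
    rw [Finset.sum_powerset_insert hi, Finset.sum_congr rfl h1, Finset.sum_sub_distrib, ← ih, ← ih]
    rw [VZ, zt_insert a s i hi, ← add_assoc B, VZ, VZ]; ring

lemma cZ_seg (a : ι → Euc (m + 1)) (B : Set (Euc (m + 1))) (hB : IsCompact B) (hc : Convex ℝ B)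
    (s : Finset ι) (v : Euc (m + 1)) (t : ℝ) (ht : 0 ≤ t) :
    cZ a (B + segment ℝ 0 (t • v)) s - cZ a B s =
      t * (cZ a (B + segment ℝ 0 v) s - cZ a B s) := by
  have h : ∀ t : ℝ, 0 ≤ t → cZ a (B + segment ℝ 0 (t • v)) s - cZ a B s =
      t * ∑ J ∈ s.powerset, (-1) ^ (s.card + J.card) * pK (B + zt a J) v := by
    intro t ht
    rw [cZ, cZ, ← Finset.sum_sub_distrib, Finset.mul_sum]
    refine Finset.sum_congr rfl fun J _ => ?_
    rw [VZ, VZ, add_right_comm, seg_vol _ (hB.add (zt_compact a J)) (hc.add (zt_convex a J)) v t ht]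
    ring
  have h1 := h 1 zero_le_one
  rw [one_smul, one_mul] at h1
  rw [h t ht, h1]

lemma cZ_smul_vec (a : ι → Euc (m + 1)) (t : ℝ) (ht : 0 ≤ t) (s : Finset ι) :
    ∀ B : Set (Euc (m + 1)), IsCompact B → Convex ℝ B →
    cZ (fun i => t • a i) B s = t ^ s.card * cZ a B s := by
  induction s using Finset.induction_on with
  | empty => intro B _ _; simp [cZ, VZ, zt]
  | insert i s hi ih =>
    intro B hB hc
    rw [cZ_insert _ _ _ _ hi, cZ_insert _ _ _ _ hi,
      ih _ (hB.add (isCompact_seg _)) (hc.add (convex_segment _ _)), ih _ hB hc, ← mul_sub,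
      cZ_seg a B hB hc s (a i) t ht, Finset.card_insert_of_notMem hi]
    ring

lemma smul_seg {n : ℕ} (t : ℝ) (v : Euc n) : t • segment ℝ 0 v = segment ℝ 0 (t • v) := by
  have h : t • segment ℝ 0 v = segment ℝ (t • (0 : Euc n)) (t • v) :=
    image_segment ℝ (LinearMap.lsmul ℝ (Euc n) t).toAffineMap 0 v
  rw [h, smul_zero]

lemma smul_zt {n : ℕ} (a : ι → Euc n) (t : ℝ) (s : Finset ι) :
    t • zt a s = zt (fun i => t • a i) s := by
  induction s using Finset.induction_on with
  | empty => simp [zt]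
  | insert i s hi ih => rw [zt_insert _ _ _ hi, zt_insert _ _ _ hi, smul_add, ih, smul_seg]

lemma cZ_smul_all {n : ℕ} (a : ι → Euc n) (t : ℝ) (ht : 0 ≤ t) (s : Finset ι) (B : Set (Euc n)) :
    cZ (fun i => t • a i) (t • B) s = t ^ n * cZ a B s := by
  rw [cZ, cZ, Finset.mul_sum]
  refine Finset.sum_congr rfl fun J _ => ?_
  rw [VZ, ← smul_zt, ← smul_add, vol_smul _ _ ht, VZ]; ring

lemma cZ_zero (a : ι → Euc (m + 1)) (s : Finset ι) (hs : s.card ≠ m + 1) : cZ a {0} s = 0 := by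
  have h1 := cZ_smul_vec a 2 (by norm_num) s {0} isCompact_singleton (convex_singleton _)
  have h2 := cZ_smul_all a 2 (by norm_num) s {0}
  rw [smul_set_singleton, smul_zero, h1] at h2
  have h3 : (2 : ℝ) ^ s.card ≠ 2 ^ (m + 1) := fun h =>
    hs (pow_right_injective₀ (by norm_num : (0 : ℝ) < 2) (by norm_num) h)
  by_contra hne
  exact h3 (mul_right_cancel₀ hne h2)

/-- Comparing the two homogeneities, degree `s.card` in the segments and degree `m + 1` under
dilation, only subfamilies with `m` elements contribute to the shadow. -/
lemma dZ_zero (a : ι → Euc (m + 1)) (u : Euc (m + 1)) (s : Finset ι) (hs : s.card ≠ m) :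
    cZ a ({0} + segment ℝ 0 u) s - cZ a {0} s = 0 := by
  have c1 : IsCompact ({0} : Set (Euc (m + 1))) := isCompact_singleton
  have c2 : Convex ℝ ({0} : Set (Euc (m + 1))) := convex_singleton _
  have h1 := cZ_smul_vec a 2 (by norm_num) s {0} c1 c2
  have h1' := cZ_smul_vec a 2 (by norm_num) s ({0} + segment ℝ 0 u) (c1.add (isCompact_seg _))
    (c2.add (convex_segment _ _))
  have h2 := cZ_smul_all a 2 (by norm_num) s {0}
  have h2' := cZ_smul_all a 2 (by norm_num) s ({0} + segment ℝ 0 u)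
  have h3 := cZ_seg (fun i => (2 : ℝ) • a i) {0} c1 c2 s u 2 (by norm_num)
  rw [smul_add, smul_seg, smul_set_singleton, smul_zero] at h2'
  rw [smul_set_singleton, smul_zero] at h2
  rw [h2', h1'] at h3
  have h4 : (2 : ℝ) ^ (s.card + 1) ≠ 2 ^ (m + 1) := fun h => hs (by
    have := pow_right_injective₀ (by norm_num : (0 : ℝ) < 2) (by norm_num) h
    omega)
  by_contra hne
  refine h4 (mul_right_cancel₀ hne ?_)
  rw [pow_succ]
  rw [h1] at h2
  rw [h1] at h3
  linarith

lemma vol_zt_small (a : ι → Euc (m + 1)) (s : Finset ι) (hs : s.card ≤ m) : vol (zt a s) = 0 := by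
  have := VZ_eq_sum a s {0}
  rw [VZ, Set.singleton_zero, zero_add] at this
  rw [this]
  refine Finset.sum_eq_zero fun J hJ => ?_
  rw [← Set.singleton_zero]
  exact cZ_zero a J (by have := Finset.card_le_card (Finset.mem_powerset.1 hJ); omega)

lemma pK_zt_sum (a : ι → Euc (m + 1)) (s : Finset ι) (u : Euc (m + 1)) :
    pK (zt a s) u = ∑ J ∈ s.powersetCard m, (cZ a ({0} + segment ℝ 0 u) J - cZ a {0} J) := by
  have h1 := VZ_eq_sum a s {0}
  have h2 := VZ_eq_sum a s ({0} + segment ℝ 0 u)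
  have h3 : pK (zt a s) u = VZ a ({0} + segment ℝ 0 u) s - VZ a {0} s := by
    rw [pK, VZ, VZ, Set.singleton_zero, zero_add, zero_add]
    congr 2; exact add_comm _ _
  rw [h3, h1, h2, ← Finset.sum_sub_distrib, Finset.powersetCard_eq_filter, Finset.sum_filter]
  refine Finset.sum_congr rfl fun J _ => ?_
  split_ifs with h
  · rfl
  · exact dZ_zero a u J h

lemma vol_parallelepiped {n : ℕ} (b : Fin n → Euc n) : vol (∑ i, segment ℝ 0 (b i)) = |Dt n b| := by
  rw [vol, ← parallelepiped_eq_sum_segment,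
    ← (EuclideanSpace.basisFun (Fin n) ℝ).addHaar_eq_volume, Measure.addHaar_parallelepiped,
    ENNReal.toReal_ofReal (abs_nonneg _)]
  rfl

lemma pK_zt_basis (a : ι → Euc (m + 1)) (u : Euc (m + 1)) (j : Fin m → ι)
    (hj : Function.Injective j) :
    pK (zt a (Finset.univ.image j)) u = |Dt (m + 1) (Fin.cons u fun i => a (j i))| := by
  rw [pK, vol_zt_small a _ (by simpa using Finset.card_image_le (s := Finset.univ) (f := j)),
    sub_zero, ← vol_parallelepiped, Fin.sum_univ_succ]
  simp only [Fin.cons_zero, Fin.cons_succ]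
  rw [zt, Finset.sum_image fun x _ y _ h => hj h]
  congr 1; exact add_comm _ _

/-- The shadow of a zonotope as a sum of absolute determinants over all `m`-tuples of generators;
tuples with repetitions contribute zero. -/
lemma pK_zt [Fintype ι] (a : ι → Euc (m + 1)) (u : Euc (m + 1)) :
    pK (zt a Finset.univ) u =
      (m.factorial : ℝ)⁻¹ * ∑ j : Fin m → ι, |Dt (m + 1) (Fin.cons u fun i => a (j i))| := by
  rw [eq_inv_mul_iff_mul_eq₀ (by positivity), pK_zt_sum, Finset.mul_sum]
  rw [← Finset.sum_fiberwise Finset.univ (fun j : Fin m → ι => Finset.univ.image j)]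
  have hsplit : ∀ G : Finset ι → ℝ, ∑ J, G J = ∑ J ∈ Finset.univ.powersetCard m, G J +
      ∑ J ∈ (Finset.univ : Finset ι).powerset with ¬ J.card = m, G J := fun G => by
    rw [Finset.powersetCard_eq_filter, Finset.sum_filter_add_sum_filter_not, Finset.powerset_univ]
  rw [hsplit]
  have hz : ∑ J ∈ (Finset.univ : Finset ι).powerset with ¬ J.card = m,
      ∑ j : Fin m → ι with Finset.univ.image j = J,
        |Dt (m + 1) (Fin.cons u fun i => a (j i))| = 0 := by
    refine Finset.sum_eq_zero fun J hJ => Finset.sum_eq_zero fun j hj => ?_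
    rw [abs_eq_zero]
    have hni : ¬ Function.Injective j := by
      intro hinj
      refine (Finset.mem_filter.1 hJ).2 ?_
      rw [← (Finset.mem_filter.1 hj).2, Finset.card_image_of_injective _ hinj]; simp
    simp only [Function.Injective, not_forall] at hni
    obtain ⟨x, y, hxy, hne⟩ := hni
    refine (Dt (m + 1)).map_eq_zero_of_eq _ (i := x.succ) (j := y.succ) ?_
      (fun h => hne (Fin.succ_injective _ h))
    simp [hxy]
  rw [hz, add_zero]
  refine Finset.sum_congr rfl fun J hJ => ?_
  have hJc : J.card = m := (Finset.mem_powersetCard.1 hJ).2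
  have hd : cZ a ({0} + segment ℝ 0 u) J - cZ a {0} J = pK (zt a J) u := by
    have hps : J.powersetCard m = {J} := by
      conv_lhs => rw [← hJc]
      exact Finset.powersetCard_self J
    rw [pK_zt_sum, hps, Finset.sum_singleton]
  have hconst : ∀ j ∈ Finset.univ.filter (fun j : Fin m → ι => Finset.univ.image j = J),
      |Dt (m + 1) (Fin.cons u fun i => a (j i))| = pK (zt a J) u := by
    intro j hj
    have e := (Finset.mem_filter.1 hj).2
    rw [← e, pK_zt_basis]
    have : (Finset.univ.image j).card = (Finset.univ : Finset (Fin m)).card := by rw [e, hJc]; simp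
    have := Finset.card_image_iff.1 this
    intro x y hxy; exact this (by simp) (by simp) hxy
  rw [Finset.sum_congr rfl hconst, Finset.sum_const, hd, nsmul_eq_mul]
  congr 2
  -- orderings of `J`
  let E : {j : Fin m → ι // Finset.univ.image j = J} ≃ (Fin m ≃ J) :=
    { toFun := fun j => Equiv.ofBijective (fun i => ⟨j.1 i, by
          
          have h := Finset.mem_image_of_mem j.1 (Finset.mem_univ i)
          exact (Finset.ext_iff.1 j.2 _).1 h⟩) (by
          rw [Fintype.bijective_iff_surjective_and_card]
          refine ⟨fun y => ?_, by simp [hJc]⟩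
          have hy : y.1 ∈ Finset.univ.image j.1 := (Finset.ext_iff.1 j.2 _).2 y.2
          obtain ⟨i, -, hi⟩ := Finset.mem_image.1 hy
          exact ⟨i, Subtype.ext hi⟩)
      invFun := fun e => ⟨fun i => (e i : ι), by
        ext y; constructor
        · intro h
          obtain ⟨i, -, rfl⟩ := Finset.mem_image.1 h
          exact (e i).2
        · intro h
          exact Finset.mem_image.2 ⟨e.symm ⟨y, h⟩, by simp, by simp⟩⟩
      left_inv := fun j => by ext; rfl
      right_inv := fun e => by ext; rfl }
  rw [← Fintype.card_subtype, Fintype.card_congr E,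
    Fintype.card_equiv (Fintype.equivFinOfCardEq (by simp [hJc])).symm]
  simp

end

/-! ### Support functions and approximation by zonotopes -/

section

lemma suppFn_bdd {n : ℕ} {K : Set (Euc n)} (hK : IsCompact K) (u : Euc n) :
    BddAbove ((fun y => ⟪y, u⟫) '' K) :=
  (hK.image (f := fun y : Euc n => ⟪y, u⟫) (by fun_prop)).bddAbove

lemma le_suppFn {n : ℕ} {K : Set (Euc n)} (hK : IsCompact K) {x : Euc n} (hx : x ∈ K) (u : Euc n) :
    ⟪x, u⟫ ≤ suppFn K u := le_csSup (suppFn_bdd hK u) ⟨x, hx, rfl⟩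

lemma suppFn_le {n : ℕ} {K : Set (Euc n)} (hne : K.Nonempty) {u : Euc n} {c : ℝ}
    (h : ∀ y ∈ K, ⟪y, u⟫ ≤ c) : suppFn K u ≤ c := by
  refine csSup_le (hne.image _) ?_
  rintro _ ⟨y, hy, rfl⟩; exact h y hy

lemma exists_suppFn {n : ℕ} {K : Set (Euc n)} (hK : IsCompact K) (hne : K.Nonempty) (u : Euc n) :
    ∃ y ∈ K, suppFn K u = ⟪y, u⟫ := by
  obtain ⟨y, hy, hmax⟩ := hK.exists_isMaxOn hne
    (f := fun y : Euc n => ⟪y, u⟫) (by fun_prop)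
  exact ⟨y, hy, le_antisymm (suppFn_le hne fun z hz => hmax hz) (le_suppFn hK hy u)⟩

lemma suppFn_add {n : ℕ} {K L : Set (Euc n)} (hK : IsCompact K) (hL : IsCompact L)
    (hKn : K.Nonempty) (hLn : L.Nonempty) (u : Euc n) :
    suppFn (K + L) u = suppFn K u + suppFn L u := by
  apply le_antisymm
  · refine suppFn_le (hKn.add hLn) ?_
    rintro _ ⟨x, hx, y, hy, rfl⟩
    simp only [inner_add_left]
    exact add_le_add (le_suppFn hK hx u) (le_suppFn hL hy u)
  · obtain ⟨x, hx, h1⟩ := exists_suppFn hK hKn u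
    obtain ⟨y, hy, h2⟩ := exists_suppFn hL hLn u
    rw [h1, h2, ← inner_add_left]
    exact le_suppFn (hK.add hL) (add_mem_add hx hy) u

lemma suppFn_smul {n : ℕ} {K : Set (Euc n)} (hK : IsCompact K) (hKn : K.Nonempty) (r : ℝ)
    (hr : 0 ≤ r) (u : Euc n) : suppFn (r • K) u = r * suppFn K u := by
  apply le_antisymm
  · refine suppFn_le hKn.smul_set ?_
    rintro _ ⟨x, hx, rfl⟩
    simp only [real_inner_smul_left]
    exact mul_le_mul_of_nonneg_left (le_suppFn hK hx u) hr
  · obtain ⟨x, hx, h1⟩ := exists_suppFn hK hKn u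
    rw [h1, ← real_inner_smul_left]
    exact le_suppFn (hK.smul r) (smul_mem_smul_set hx) u

/-- Inclusion of convex bodies is the pointwise order of their support functions. -/
lemma subset_of_suppFn {n : ℕ} {A B : Set (Euc n)} (hA : IsCompact A) (hB : IsCompact B)
    (hBc : Convex ℝ B) (hBn : B.Nonempty) (h : ∀ u, suppFn A u ≤ suppFn B u) : A ⊆ B := by
  intro x hx
  by_contra hxB
  obtain ⟨f, c, h1, h2⟩ := geometric_hahn_banach_closed_point hBc hB.isClosed hxB
  set u := (InnerProductSpace.toDual ℝ (Euc n)).symm f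
  have hu : ∀ y, ⟪y, u⟫ = f y := fun y => by
    rw [real_inner_comm]; exact InnerProductSpace.toDual_symm_apply
  have h3 := le_suppFn hA hx u
  have h4 : suppFn B u ≤ c := suppFn_le hBn fun y hy => by rw [hu]; exact (h1 y hy).le
  rw [hu] at h3
  linarith [h u]

variable {m : ℕ} [NeZero m]

lemma pK_mono {A B : Set (Euc (m + 1))} (hA : IsCompact A) (hAc : Convex ℝ A) (hB : IsCompact B)
    (hBc : Convex ℝ B) (h : A ⊆ B) (v : Euc (m + 1)) : pK A v ≤ pK B v := by
  by_contra hlt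
  push Not at hlt
  have hd : 0 < pK A v - pK B v := by linarith
  have hB0 : 0 ≤ vol B := ENNReal.toReal_nonneg
  have hA0 : 0 ≤ vol A := ENNReal.toReal_nonneg
  set s : ℝ := (vol B + 1) / (pK A v - pK B v) with hs
  have hs0 : 0 ≤ s := by positivity
  have h1 := vol_mono (hB.add (isCompact_seg (s • v))) (add_subset_add_right (t := segment ℝ 0 (s • v)) h)
  rw [seg_vol A hA hAc v s hs0, seg_vol B hB hBc v s hs0] at h1
  have : s * (pK A v - pK B v) = vol B + 1 := div_mul_cancel₀ _ hd.ne'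
  nlinarith

lemma pK_smul_body (K : Set (Euc (m + 1))) (hK : IsCompact K) (hc : Convex ℝ K) (r : ℝ)
    (hr : 0 < r) (v : Euc (m + 1)) : pK (r • K) v = r ^ m * pK K v := by
  have h : r • K + segment ℝ 0 v = r • (K + segment ℝ 0 (r⁻¹ • v)) := by
    rw [smul_add, smul_seg, smul_inv_smul₀ hr.ne']
  rw [pK, h, vol_smul _ _ hr.le, vol_smul _ _ hr.le, seg_vol K hK hc v _ (by positivity)]
  field_simp
  ring

lemma pK_add_singleton {n : ℕ} (K : Set (Euc n)) (x v : Euc n) : pK (K + {x}) v = pK K v := by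
  rw [pK, pK, add_right_comm, vol_vadd, vol_vadd]

variable {ι : Type*} [DecidableEq ι] [Fintype ι]

/-- The centred zonotope `∑ [-a i, a i]`. -/
def czt {n : ℕ} (a : ι → Euc n) : Set (Euc n) := zt (fun i => (2 : ℝ) • a i) Finset.univ + {-∑ i, a i}

lemma czt_compact {n : ℕ} (a : ι → Euc n) : IsCompact (czt a) :=
  (zt_compact _ _).add isCompact_singleton

lemma czt_convex {n : ℕ} (a : ι → Euc n) : Convex ℝ (czt a) :=
  (zt_convex _ _).add (convex_singleton _)

lemma zt_nonempty {n : ℕ} (a : ι → Euc n) (s : Finset ι) : (zt a s).Nonempty := by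
  induction s using Finset.induction_on with
  | empty => exact ⟨0, by simp [zt]⟩
  | insert i s hi ih => rw [zt_insert a s i hi]; exact Nonempty.add ⟨0, left_mem_segment ℝ _ _⟩ ih

lemma czt_nonempty {n : ℕ} (a : ι → Euc n) : (czt a).Nonempty :=
  (zt_nonempty _ _).add (singleton_nonempty _)

lemma suppFn_segment {n : ℕ} (v u : Euc n) : suppFn (segment ℝ 0 v) u = max 0 ⟪v, u⟫ := by
  refine le_antisymm (suppFn_le ⟨0, left_mem_segment ℝ _ _⟩ fun y hy => ?_) (max_le ?_ ?_)
  · rw [segment_zero_eq] at hy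
    obtain ⟨t, ht, rfl⟩ := hy
    simp only [real_inner_smul_left]
    rcases le_total 0 ⟪v, u⟫ with h | h
    · exact (mul_le_of_le_one_left h ht.2).trans (le_max_right _ _)
    · exact (mul_nonpos_of_nonneg_of_nonpos ht.1 h).trans (le_max_left _ _)
  · have := le_suppFn (isCompact_seg v) (left_mem_segment ℝ 0 v) u
    rwa [inner_zero_left] at this
  · exact le_suppFn (isCompact_seg v) (right_mem_segment ℝ 0 v) u

lemma suppFn_zt {n : ℕ} (a : ι → Euc n) (s : Finset ι) (u : Euc n) :
    suppFn (zt a s) u = ∑ i ∈ s, max 0 ⟪a i, u⟫ := by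
  induction s using Finset.induction_on with
  | empty => simp [zt, suppFn]
  | insert i s hi ih =>
    rw [zt_insert a s i hi, suppFn_add (isCompact_seg _) (zt_compact a s)
      ⟨0, left_mem_segment ℝ _ _⟩ (zt_nonempty a s), ih, suppFn_segment, Finset.sum_insert hi]

lemma suppFn_czt {n : ℕ} (a : ι → Euc n) (u : Euc n) : suppFn (czt a) u = ∑ i, |⟪a i, u⟫| := by
  rw [czt, suppFn_add (zt_compact _ _) isCompact_singleton (zt_nonempty _ _)
    (singleton_nonempty _), suppFn_zt]
  have : suppFn {-∑ i, a i} u = - ∑ i, ⟪a i, u⟫ := by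
    simp [suppFn, sum_inner]
  rw [this, ← sub_eq_add_neg, ← Finset.sum_sub_distrib]
  refine Finset.sum_congr rfl fun i _ => ?_
  rw [real_inner_smul_left]
  rcases le_total 0 ⟪a i, u⟫ with h | h
  · rw [max_eq_right (by positivity), abs_of_nonneg h]; ring
  · rw [max_eq_left (by linarith), abs_of_nonpos h]; ring

lemma Dt_smul_cons (u : Euc (m + 1)) (c : Fin m → ℝ) (y : Fin m → Euc (m + 1)) :
    Dt (m + 1) (Fin.cons u fun i => c i • y i) = (∏ i, c i) * Dt (m + 1) (Fin.cons u y) := by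
  have h := (Dt (m + 1)).toMultilinearMap.map_smul_univ (Fin.cons 1 c : Fin (m + 1) → ℝ) (Fin.cons u y)
  rw [Fin.prod_univ_succ] at h
  simp only [Fin.cons_zero, Fin.cons_succ, one_mul, smul_eq_mul] at h
  have e : (fun i : Fin (m + 1) => (Fin.cons 1 c : Fin (m + 1) → ℝ) i •
      (Fin.cons u y : Fin (m + 1) → Euc (m + 1)) i) =
      (Fin.cons u fun i => c i • y i : Fin (m + 1) → Euc (m + 1)) := by
    funext i
    refine Fin.cases ?_ (fun j => ?_) i <;> simp
  rw [e] at h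
  exact h

lemma pK_czt (w : ι → ℝ) (hw : ∀ i, 0 ≤ w i) (y : ι → Euc (m + 1)) (u : Euc (m + 1)) :
    pK (czt fun i => w i • y i) u = 2 ^ m / m.factorial *
      ∑ j : Fin m → ι, (∏ i, w (j i)) * |Dt (m + 1) (Fin.cons u fun i => y (j i))| := by
  rw [czt, pK_add_singleton, pK_zt, div_eq_inv_mul, mul_assoc]
  congr 1
  rw [Finset.mul_sum]
  refine Finset.sum_congr rfl fun j _ => ?_
  simp only [smul_smul]
  rw [Dt_smul_cons u (fun i => 2 * w (j i)) (fun i => y (j i)), abs_mul, Finset.prod_mul_distrib,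
    Finset.prod_const, Finset.card_univ, Fintype.card_fin, abs_mul,
    abs_of_nonneg (by positivity : (0 : ℝ) ≤ 2 ^ m),
    abs_of_nonneg (Finset.prod_nonneg fun i _ => hw (j i)), mul_assoc]

lemma integral_idx {X : Type*} [MeasurableSpace X] (μ : Measure X) [IsFiniteMeasure μ]
    {κ : Type*} [Fintype κ] [MeasurableSpace κ] [MeasurableSingletonClass κ] (idx : X → κ)
    (hi : Measurable idx) (g : κ → ℝ) :
    ∫ x, g (idx x) ∂μ = ∑ i, μ.real (idx ⁻¹' {i}) * g i := by
  have hg : Measurable g := measurable_of_finite g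
  rw [← integral_map (φ := idx) hi.aemeasurable hg.aestronglyMeasurable,
    integral_fintype Integrable.of_finite]
  refine Finset.sum_congr rfl fun i _ => ?_
  rw [smul_eq_mul, map_measureReal_apply hi (measurableSet_singleton i)]

lemma integral_idx_pi [MeasurableSpace ι] [MeasurableSingletonClass ι]
    (η : Measure (Euc (m + 1))) [IsFiniteMeasure η] (idx : Euc (m + 1) → ι)
    (hi : Measurable idx) (y : ι → Euc (m + 1)) (u : Euc (m + 1)) :
    ∫ x, |Dt (m + 1) (Fin.cons u fun i => y (idx (x i)))| ∂(Measure.pi fun _ : Fin m => η) =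
      ∑ j : Fin m → ι, (∏ i, η.real (idx ⁻¹' {j i})) *
        |Dt (m + 1) (Fin.cons u fun i => y (j i))| := by
  have hI : Measurable fun (x : Fin m → Euc (m + 1)) i => idx (x i) :=
    measurable_pi_lambda _ fun i => hi.comp (measurable_pi_apply i)
  rw [integral_idx (Measure.pi fun _ : Fin m => η) (fun x i => idx (x i)) hI
    (fun j => |Dt (m + 1) (Fin.cons u fun i => y (j i))|)]
  refine Finset.sum_congr rfl fun j _ => ?_
  congr 1
  have : (fun (x : Fin m → Euc (m + 1)) i => idx (x i)) ⁻¹' {j} =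
      Set.univ.pi fun i => idx ⁻¹' {j i} := by
    ext x; simp [Set.mem_pi, funext_iff]
  rw [this, measureReal_def, Measure.pi_pi, ENNReal.toReal_prod]
  rfl

/-- Finitely valued approximations of the identity. -/
lemma approx_exists (n : ℕ) : ∃ (idx : (N : ℕ) → Euc n → Fin (N + 1)) (e : ℕ → Euc n),
    (∀ N, Measurable (idx N)) ∧ (∀ x, Tendsto (fun N => e (idx N x)) atTop (𝓝 x)) ∧
    ∀ N x, ‖e (idx N x) - x‖ ≤ ‖e 0 - x‖ := by
  set e : ℕ → Euc n := TopologicalSpace.denseSeq (Euc n)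
  have hval : ∀ N x, e (Fin.ofNat (N + 1) (SimpleFunc.nearestPtInd e N x) : Fin (N + 1)) =
      SimpleFunc.nearestPt e N x := by
    intro N x
    have : (SimpleFunc.nearestPtInd e N x) % (N + 1) = SimpleFunc.nearestPtInd e N x :=
      Nat.mod_eq_of_lt (Nat.lt_succ_of_le (SimpleFunc.nearestPtInd_le e N x))
    simp only [Fin.ofNat]
    rw [this]; rfl
  refine ⟨fun N x => Fin.ofNat (N + 1) (SimpleFunc.nearestPtInd e N x), e, ?_, ?_, ?_⟩
  · intro N
    exact (measurable_from_top (f := fun k : ℕ => Fin.ofNat (N + 1) k)).comp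
      (SimpleFunc.measurable _)
  · intro x
    simp only [hval]
    exact SimpleFunc.tendsto_nearestPt ((TopologicalSpace.denseRange_denseSeq (Euc n)).closure_eq ▸ mem_univ x)
  · intro N x
    rw [hval]
    have := SimpleFunc.edist_nearestPt_le e x (Nat.zero_le N)
    rw [edist_dist, edist_dist, ENNReal.ofReal_le_ofReal_iff dist_nonneg, dist_eq_norm,
      dist_eq_norm] at this
    exact this

end

/-! ### Shadows of zonoids -/

section

variable {m : ℕ} [NeZero m]

lemma continuous_cons_right (u : Euc (m + 1)) : Continuous fun x : Fin m → Euc (m + 1) =>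
    (Fin.cons u x : Fin (m + 1) → Euc (m + 1)) :=
  continuous_cons.comp (by fun_prop : Continuous fun x : Fin m → Euc (m + 1) => (u, x))

lemma Dt_bound (u : Euc (m + 1)) (R : ℝ) : ∃ C, ∀ x : Fin m → Euc (m + 1), (∀ i, ‖x i‖ ≤ R) →
    ‖|Dt (m + 1) (Fin.cons u x)|‖ ≤ C := by
  have hcpt : IsCompact {x : Fin m → Euc (m + 1) | ∀ i, x i ∈ closedBall (0 : Euc (m + 1)) R} :=
    isCompact_pi_infinite fun _ => isCompact_closedBall _ _
  have hcont : Continuous fun x : Fin m → Euc (m + 1) => |Dt (m + 1) (Fin.cons u x)| :=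
    ((continuous_Dt (m + 1)).comp (continuous_cons_right u)).abs
  obtain ⟨C, hC⟩ := hcpt.exists_bound_of_continuousOn hcont.continuousOn
  exact ⟨C, fun x hx => hC x fun i => by simpa using hx i⟩

/-- The projection function of a zonoid with generating measure `η`. -/
theorem zonoid_pK (Z : Set (Euc (m + 1))) (hZ : IsCompact Z) (hZc : Convex ℝ Z) (hZn : Z.Nonempty)
    (η : Measure (Euc (m + 1))) [IsFiniteMeasure η] (hη : ∀ᵐ x ∂η, ‖x‖ = 1)
    (h : ∀ u, suppFn Z u = ∫ x, |⟪u, x⟫| ∂η) (r : ℝ) (hr : 0 < r)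
    (hrZ : ∀ u, r * ‖u‖ ≤ suppFn Z u) (u : Euc (m + 1)) :
    pK Z u = 2 ^ m / m.factorial *
      ∫ x, |Dt (m + 1) (Fin.cons u x)| ∂(Measure.pi fun _ : Fin m => η) := by
  obtain ⟨idx, e, hidx, hlim, hbd⟩ := approx_exists (m + 1)
  set R : ℝ := ‖e 0‖ + 1 with hR
  have hbd1 : ∀ N x, ‖x‖ = 1 → ‖e (idx N x) - x‖ ≤ R := fun N x hx =>
    (hbd N x).trans ((norm_sub_le _ _).trans (by rw [hx]))
  have hbd2 : ∀ N x, ‖x‖ = 1 → ‖e (idx N x)‖ ≤ R + 1 := fun N x hx => by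
    have h1 := hbd1 N x hx
    have h2 := norm_add_le (e (idx N x) - x) x
    rw [sub_add_cancel, hx] at h2
    linarith
  have hem : ∀ N, Measurable fun x => e (idx N x) := fun N =>
    (measurable_of_finite fun i : Fin (N + 1) => e i).comp (hidx N)
  -- the weights and the approximating zonotopes
  set w : (N : ℕ) → Fin (N + 1) → ℝ := fun N i => η.real (idx N ⁻¹' {i}) with hw
  set ZN : ℕ → Set (Euc (m + 1)) := fun N => czt fun i : Fin (N + 1) => w N i • e i with hZN
  have hsupp : ∀ N v, suppFn (ZN N) v = ∫ x, |⟪v, e (idx N x)⟫| ∂η := by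
    intro N v
    rw [hZN, suppFn_czt, integral_idx η (idx N) (hidx N) (fun i => |⟪v, e i⟫|)]
    refine Finset.sum_congr rfl fun i _ => ?_
    rw [real_inner_smul_left, abs_mul, abs_of_nonneg measureReal_nonneg, real_inner_comm]
  have hpN : ∀ N, pK (ZN N) u = 2 ^ m / m.factorial *
      ∫ x, |Dt (m + 1) (Fin.cons u fun i => e (idx N (x i)))| ∂(Measure.pi fun _ : Fin m => η) := by
    intro N
    rw [hZN, pK_czt (w N) (fun i => measureReal_nonneg) (fun i => e i) u,
      integral_idx_pi η (idx N) (hidx N) (fun i => e i) u]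
  have lim1 : Tendsto (fun N => pK (ZN N) u) atTop (𝓝 (2 ^ m / m.factorial *
      ∫ x, |Dt (m + 1) (Fin.cons u x)| ∂(Measure.pi fun _ : Fin m => η))) := by
    simp only [hpN]
    refine Tendsto.const_mul _ ?_
    obtain ⟨C, hC⟩ := Dt_bound u (R + 1)
    have hcont : Continuous fun x : Fin m → Euc (m + 1) => |Dt (m + 1) (Fin.cons u x)| :=
      ((continuous_Dt (m + 1)).comp (continuous_cons_right u)).abs
    refine tendsto_integral_of_dominated_convergence (fun _ => C) (fun N => ?_)
      (integrable_const _) (fun N => ?_) (ae_of_all _ fun x => ?_)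
    · exact (hcont.measurable.comp (measurable_pi_lambda _ fun i =>
        (hem N).comp (measurable_pi_apply i))).aestronglyMeasurable
    · filter_upwards [ae_pi_sphere hη] with x hx
      exact hC _ fun i => hbd2 N _ (hx i)
    · exact (hcont.tendsto x).comp (tendsto_pi_nhds.2 fun i => hlim (x i))
  -- the error of the support functions
  set ep : ℕ → ℝ := fun N => ∫ x, ‖e (idx N x) - x‖ ∂η with hep
  have hepi : ∀ N, Integrable (fun x => ‖e (idx N x) - x‖) η := fun N =>
    Integrable.of_bound ((hem N).sub measurable_id).norm.aestronglyMeasurable R (by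
      filter_upwards [hη] with x hx
      rw [norm_norm]; exact hbd1 N x hx)
  have hep0 : Tendsto ep atTop (𝓝 0) := by
    have : Tendsto ep atTop (𝓝 (∫ x, (0 : ℝ) ∂η)) := by
      refine tendsto_integral_of_dominated_convergence (fun _ => R)
        (fun N => (hepi N).aestronglyMeasurable) (integrable_const _) (fun N => ?_)
        (ae_of_all _ fun x => ?_)
      · filter_upwards [hη] with x hx
        rw [norm_norm]; exact hbd1 N x hx
      · have := ((hlim x).sub_const x).norm
        rwa [sub_self, norm_zero] at this
    rwa [integral_zero] at this
  have herr : ∀ N v, |suppFn (ZN N) v - suppFn Z v| ≤ ep N * ‖v‖ := by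
    intro N v
    have i1 : Integrable (fun x => |⟪v, e (idx N x)⟫|) η := by
      refine Integrable.of_bound (measurable_const.inner (hem N)).abs.aestronglyMeasurable
        (‖v‖ * (R + 1)) ?_
      filter_upwards [hη] with x hx
      rw [Real.norm_eq_abs, abs_abs]
      exact (abs_real_inner_le_norm _ _).trans (mul_le_mul_of_nonneg_left (hbd2 N x hx) (norm_nonneg _))
    have i2 : Integrable (fun x => |⟪v, x⟫|) η := by
      refine Integrable.of_bound (measurable_const.inner measurable_id).abs.aestronglyMeasurable
        ‖v‖ ?_
      filter_upwards [hη] with x hx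
      rw [Real.norm_eq_abs, abs_abs]
      exact abs_inner_le_of_unit v x hx
    rw [hsupp, h, ← integral_sub i1 i2, hep, ← integral_mul_const]
    refine (abs_integral_le_integral_abs).trans (integral_mono (i1.sub i2).abs
      ((hepi N).mul_const _) fun x => ?_)
    refine (abs_abs_sub_abs_le_abs_sub _ _).trans ?_
    rw [← inner_sub_right, mul_comm]
    exact abs_real_inner_le_norm _ _
  have hq0 : Tendsto (fun N => ep N / r) atTop (𝓝 0) := by
    simpa using hep0.div_const r
  have hepn : ∀ N, 0 ≤ ep N := fun N => integral_nonneg fun x => norm_nonneg _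
  have hle : ∀ N v, ep N * ‖v‖ ≤ ep N / r * suppFn Z v := by
    intro N v
    calc ep N * ‖v‖ = ep N / r * (r * ‖v‖) := by field_simp
      _ ≤ _ := mul_le_mul_of_nonneg_left (hrZ v) (div_nonneg (hepn N) hr.le)
  have lim2 : Tendsto (fun N => pK (ZN N) u) atTop (𝓝 (pK Z u)) := by
    have l1 : Tendsto (fun N => (1 - ep N / r) ^ m * pK Z u) atTop (𝓝 (pK Z u)) := by
      have := ((hq0.const_sub 1).pow m).mul_const (pK Z u)
      simpa using this
    have l2 : Tendsto (fun N => (1 + ep N / r) ^ m * pK Z u) atTop (𝓝 (pK Z u)) := by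
      have := ((hq0.const_add 1).pow m).mul_const (pK Z u)
      simpa using this
    refine tendsto_of_tendsto_of_tendsto_of_le_of_le' l1 l2 ?_ ?_
    · filter_upwards [hq0.eventually_lt_const zero_lt_one] with N hN
      have hpos : 0 < 1 - ep N / r := by linarith
      rw [← pK_smul_body Z hZ hZc _ hpos]
      refine pK_mono (hZ.smul _) (hZc.smul _) (czt_compact _) (czt_convex _)
        (subset_of_suppFn (hZ.smul _) (czt_compact _) (czt_convex _) (czt_nonempty _) fun v => ?_) u
      rw [suppFn_smul hZ hZn _ hpos.le]
      have h1 := (abs_le.1 (herr N v)).1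
      have h2 := hle N v
      change _ ≤ suppFn (ZN N) v
      linarith
    · refine Eventually.of_forall fun N => ?_
      have hpos : 0 < 1 + ep N / r := by have := div_nonneg (hepn N) hr.le; linarith
      rw [← pK_smul_body Z hZ hZc _ hpos]
      refine pK_mono (czt_compact _) (czt_convex _) (hZ.smul _) (hZc.smul _)
        (subset_of_suppFn (czt_compact _) (hZ.smul _) (hZc.smul _) hZn.smul_set fun v => ?_) u
      rw [suppFn_smul hZ hZn _ hpos.le]
      have h1 := (abs_le.1 (herr N v)).2
      have h2 := hle N v
      change suppFn (ZN N) v ≤ _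
      linarith
  exact tendsto_nhds_unique lim2 lim1

end

/-! ### Projection bodies and linear maps -/

section

lemma vol_image {n : ℕ} (φ : Euc n ≃ₗ[ℝ] Euc n) (K : Set (Euc n)) :
    vol (φ '' K) = |LinearMap.det (φ : Euc n →ₗ[ℝ] Euc n)| * vol K := by
  have := Measure.addHaar_image_linearMap volume (φ : Euc n →ₗ[ℝ] Euc n) K
  rw [vol, vol, ← ENNReal.toReal_ofReal (abs_nonneg (LinearMap.det (φ : Euc n →ₗ[ℝ] Euc n))),
    ← ENNReal.toReal_mul, ← this]
  rfl

lemma image_seg {n : ℕ} (φ : Euc n ≃ₗ[ℝ] Euc n) (v : Euc n) :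
    φ '' segment ℝ 0 v = segment ℝ 0 (φ v) := by
  have h : φ '' segment ℝ 0 v = segment ℝ (φ 0) (φ v) :=
    image_segment ℝ (φ : Euc n →ₗ[ℝ] Euc n).toAffineMap 0 v
  rw [h, map_zero]

lemma pK_image {n : ℕ} (φ : Euc n ≃ₗ[ℝ] Euc n) (K : Set (Euc n)) (v : Euc n) :
    pK (φ '' K) (φ v) = |LinearMap.det (φ : Euc n →ₗ[ℝ] Euc n)| * pK K v := by
  rw [pK, pK, ← image_seg, ← Set.image_add, vol_image, vol_image]; ring

lemma det_pos {n : ℕ} (φ : Euc n ≃ₗ[ℝ] Euc n) : 0 < |LinearMap.det (φ : Euc n →ₗ[ℝ] Euc n)| :=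
  abs_pos.2 (LinearEquiv.isUnit_det' φ).ne_zero

/-- The transpose of a linear automorphism. -/
def tr {n : ℕ} (φ : Euc n ≃ₗ[ℝ] Euc n) : Euc n ≃ₗ[ℝ] Euc n :=
  LinearEquiv.ofLinearMap (LinearMap.adjoint (φ : Euc n →ₗ[ℝ] Euc n))
    (LinearMap.adjoint (φ.symm : Euc n →ₗ[ℝ] Euc n))
    (by rw [← LinearMap.adjoint_comp]; ext1 x; simp)
    (by rw [← LinearMap.adjoint_comp]; ext1 x; simp)

lemma inner_tr {n : ℕ} (φ : Euc n ≃ₗ[ℝ] Euc n) (x y : Euc n) : ⟪tr φ x, y⟫ = ⟪x, φ y⟫ :=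
  LinearMap.adjoint_inner_left _ _ _

lemma tr_symm {n : ℕ} (φ : Euc n ≃ₗ[ℝ] Euc n) : tr (tr φ).symm = φ.symm := by
  ext1 x
  refine ext_inner_right ℝ fun y => ?_
  rw [inner_tr]
  obtain ⟨z, rfl⟩ := (tr φ).surjective y
  rw [LinearEquiv.symm_apply_apply, real_inner_comm (tr φ z), inner_tr, LinearEquiv.apply_symm_apply,
    real_inner_comm]

lemma image_compact {n : ℕ} (φ : Euc n ≃ₗ[ℝ] Euc n) {K : Set (Euc n)} (hK : IsCompact K) :
    IsCompact (φ '' K) := hK.image (LinearMap.continuous_of_finiteDimensional (φ : Euc n →ₗ[ℝ] Euc n))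

lemma image_convex {n : ℕ} (φ : Euc n ≃ₗ[ℝ] Euc n) {K : Set (Euc n)} (hK : Convex ℝ K) :
    Convex ℝ (φ '' K) := hK.linear_image (φ : Euc n →ₗ[ℝ] Euc n)

variable {m : ℕ} [NeZero m]

lemma mem_projBody (L : Set (Euc (m + 1))) (hL : IsCompact L) (hLc : Convex ℝ L)
    (x : Euc (m + 1)) : x ∈ projBody L ↔ ∀ u, ⟪x, u⟫ ≤ (cH m)⁻¹ * pK L u := by
  constructor
  · intro h u
    rcases eq_or_ne u 0 with rfl | hu
    · rw [inner_zero_right]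
      exact mul_nonneg (inv_nonneg.2 cH_pos.le) (pK_nonneg L hL _)
    · have hn : ‖(‖u‖⁻¹ • u)‖ = 1 := norm_smul_inv_norm hu
      have h1 := h (‖u‖⁻¹ • u) (by simpa using hn)
      rw [projSupp_eq L hL hLc _ hn, pK_smul_nonneg L hL hLc u _ (by positivity),
        real_inner_smul_right] at h1
      have hp : 0 < ‖u‖⁻¹ := inv_pos.2 (norm_pos_iff.2 hu)
      rw [mul_left_comm] at h1
      exact le_of_mul_le_mul_left h1 hp
  · intro h u hu
    rw [projSupp_eq L hL hLc u (by simpa using hu)]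
    exact h u

lemma projBody_convex {n : ℕ} (L : Set (Euc n)) : Convex ℝ (projBody L) := by
  intro x hx y hy a b ha hb hab u hu
  rw [inner_add_left, real_inner_smul_left, real_inner_smul_left]
  calc a * ⟪x, u⟫ + b * ⟪y, u⟫ ≤ a * projSupp L u + b * projSupp L u :=
        add_le_add (mul_le_mul_of_nonneg_left (hx u hu) ha) (mul_le_mul_of_nonneg_left (hy u hu) hb)
    _ = projSupp L u := by rw [← add_mul, hab, one_mul]

lemma projBody_closed {n : ℕ} (L : Set (Euc n)) : IsClosed (projBody L) := by
  have : projBody L = ⋂ u ∈ sphere (0 : Euc n) 1, {x | ⟪x, u⟫ ≤ projSupp L u} := by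
    ext x; simp [projBody]
  rw [this]
  exact isClosed_biInter fun u _ => isClosed_le (by fun_prop) (by fun_prop)

lemma projBody_compact (L : Set (Euc (m + 1))) (hL : IsCompact L) (hLc : Convex ℝ L) :
    IsCompact (projBody L) := by
  refine Metric.isCompact_of_isClosed_isBounded (projBody_closed L) ?_
  refine (Metric.isBounded_closedBall (x := (0 : Euc (m + 1)))
    (r := (cH m)⁻¹ * vol (L + closedBall (0 : Euc (m + 1)) 1))).subset fun x hx => ?_
  rw [mem_closedBall_zero_iff]
  have hc : 0 ≤ (cH m)⁻¹ := inv_nonneg.2 cH_pos.le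
  have hV : ∀ K : Set (Euc (m + 1)), 0 ≤ vol K := fun K => ENNReal.toReal_nonneg
  rcases eq_or_ne x 0 with rfl | hx0
  · rw [norm_zero]; exact mul_nonneg hc (hV _)
  have hn : ‖(‖x‖⁻¹ • x)‖ = 1 := norm_smul_inv_norm hx0
  have h1 := (mem_projBody L hL hLc x).1 hx (‖x‖⁻¹ • x)
  rw [real_inner_smul_right, real_inner_self_eq_norm_sq, pow_two,
    inv_mul_cancel_left₀ (norm_ne_zero_iff.2 hx0)] at h1
  refine h1.trans (mul_le_mul_of_nonneg_left ?_ hc)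
  rw [pK]
  have h2 : vol (L + segment ℝ 0 (‖x‖⁻¹ • x)) ≤ vol (L + closedBall (0 : Euc (m + 1)) 1) := by
    refine vol_mono (hL.add (isCompact_closedBall _ _)) (add_subset_add_left ?_)
    refine (convex_closedBall (0 : Euc (m + 1)) 1).segment_subset (by simp) ?_
    rw [mem_closedBall_zero_iff, hn]
  linarith [hV L]

lemma projBody_image (φ : Euc (m + 1) ≃ₗ[ℝ] Euc (m + 1)) (L : Set (Euc (m + 1)))
    (hL : IsCompact L) (hLc : Convex ℝ L) :
    projBody (φ '' L) = |LinearMap.det (φ : Euc (m + 1) →ₗ[ℝ] Euc (m + 1))| •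
      ((tr φ).symm '' projBody L) := by
  have hd := det_pos φ
  set d := |LinearMap.det (φ : Euc (m + 1) →ₗ[ℝ] Euc (m + 1))| with hdd
  ext x
  rw [mem_smul_set_iff_inv_smul_mem₀ hd.ne', LinearEquiv.image_symm_eq_preimage, mem_preimage,
    mem_projBody _ (image_compact φ hL) (image_convex φ hLc), mem_projBody _ hL hLc]
  rw [φ.surjective.forall]
  refine forall_congr' fun v => ?_
  rw [pK_image, inner_tr, real_inner_smul_left, inv_mul_le_iff₀ hd, ← hdd, mul_left_comm]

lemma projBody_smul (L : Set (Euc (m + 1))) (hL : IsCompact L) (hLc : Convex ℝ L) (r : ℝ)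
    (hr : 0 < r) : projBody (r • L) = r ^ m • projBody L := by
  ext x
  have hp : 0 < r ^ m := pow_pos hr m
  rw [mem_smul_set_iff_inv_smul_mem₀ hp.ne', mem_projBody _ (hL.smul r) (hLc.smul r),
    mem_projBody _ hL hLc]
  refine forall_congr' fun v => ?_
  rw [pK_smul_body L hL hLc r hr, real_inner_smul_left, inv_mul_le_iff₀ hp, mul_left_comm]

/-- `Π²` commutes with linear maps up to a scalar. -/
lemma proj2_image (φ : Euc (m + 1) ≃ₗ[ℝ] Euc (m + 1)) (L : Set (Euc (m + 1)))
    (hL : IsCompact L) (hLc : Convex ℝ L) : ∃ d : ℝ, 0 < d ∧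
    projBody (projBody (φ '' L)) = d • (φ '' projBody (projBody L)) := by
  have c1 := projBody_compact L hL hLc
  have c2 := projBody_convex L
  have hd := det_pos φ
  have hd2 := det_pos (tr φ).symm
  rw [projBody_image φ L hL hLc, projBody_smul _ (image_compact _ c1) (image_convex _ c2) _ hd,
    projBody_image _ _ c1 c2, tr_symm, LinearEquiv.symm_symm, smul_smul]
  exact ⟨_, mul_pos (pow_pos hd m) hd2, rfl⟩

/-- If the projection function is a cosine transform, it is the support function of the
projection body. -/
lemma suppFn_projBody (L : Set (Euc (m + 1))) (hL : IsCompact L) (hLc : Convex ℝ L)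
    (η : Measure (Euc (m + 1))) [IsFiniteMeasure η] (hη : ∀ᵐ x ∂η, ‖x‖ = 1)
    (h : ∀ u, pK L u = ∫ x, |⟪u, x⟫| ∂η) (u : Euc (m + 1)) :
    suppFn (projBody L) u = (cH m)⁻¹ * pK L u := by
  have hc : 0 ≤ (cH m)⁻¹ := inv_nonneg.2 cH_pos.le
  have hne : (projBody L).Nonempty := ⟨0, (mem_projBody L hL hLc 0).2 fun u => by
    rw [inner_zero_left]; exact mul_nonneg hc (pK_nonneg L hL _)⟩
  refine le_antisymm (suppFn_le hne fun y hy => (mem_projBody L hL hLc y).1 hy u) ?_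
  have hint : ∀ v, Integrable (fun x => |⟪v, x⟫|) η := fun v =>
    integrable_of_bound_sphere hη (by fun_prop) ‖v‖ fun x hx => by
      rw [abs_abs]; exact abs_inner_le_of_unit v x hx
  have hadd : ∀ v w, pK L (v + w) ≤ pK L v + pK L w := by
    intro v w
    rw [h, h, h, ← integral_add (hint v) (hint w)]
    refine integral_mono (hint _) ((hint v).add (hint w)) fun x => ?_
    simp only [inner_add_left]
    exact abs_add_le _ _
  have hu0 : u ≠ 0 ∨ u = 0 := (eq_or_ne u 0).symm
  rcases hu0 with hu | rfl
  swap
  · have : pK L 0 = 0 := by rw [h]; simp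
    rw [this, mul_zero]
    obtain ⟨y, hy⟩ := hne
    have := le_suppFn (projBody_compact L hL hLc) hy 0
    rwa [inner_zero_right] at this
  -- Hahn–Banach extension of the functional `t • u ↦ t * H(u)`
  obtain ⟨g, hg1, hg2⟩ := exists_extension_of_le_sublinear
    (LinearPMap.mkSpanSingleton u ((cH m)⁻¹ * pK L u) hu) (fun v => (cH m)⁻¹ * pK L v)
    (fun c hc' x => by rw [pK_smul_nonneg L hL hLc x c hc'.le]; ring)
    (fun x y => by rw [← mul_add]; exact mul_le_mul_of_nonneg_left (hadd x y) hc)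
    (by
      rintro ⟨x, hx⟩
      obtain ⟨t, rfl⟩ := Submodule.mem_span_singleton.1 hx
      refine (LinearPMap.mkSpanSingleton'_apply (σ := RingHom.id ℝ) u ((cH m)⁻¹ * pK L u) _ t hx).trans_le ?_
      change t * _ ≤ (cH m)⁻¹ * pK L (t • u)
      rw [mul_left_comm]
      refine mul_le_mul_of_nonneg_left ?_ hc
      rw [h (t • u), h u, ← integral_const_mul]
      refine integral_mono ((hint _).const_mul _) (hint _) fun x => ?_
      simp only [real_inner_smul_left, abs_mul]
      exact mul_le_mul_of_nonneg_right (le_abs_self t) (abs_nonneg _))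
  set y := (InnerProductSpace.toDual ℝ (Euc (m + 1))).symm (LinearMap.toContinuousLinearMap g)
  have hy : ∀ v, ⟪y, v⟫ = g v := fun v => InnerProductSpace.toDual_symm_apply
  have hmem : y ∈ projBody L := (mem_projBody L hL hLc y).2 fun v => by rw [hy]; exact hg2 v
  have := le_suppFn (projBody_compact L hL hLc) hmem u
  rw [hy] at this
  have h3 := hg1 ⟨u, Submodule.mem_span_singleton_self u⟩
  rw [LinearPMap.mkSpanSingleton_apply] at h3
  rw [← h3]
  exact this

/-- The projection function of a centred ball is a multiple of the norm. -/
lemma pK_ball (R : ℝ) : ∃ C, ∀ u, pK (closedBall (0 : Euc (m + 1)) R) u = C * ‖u‖ := by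
  refine ⟨pK (closedBall (0 : Euc (m + 1)) R) (e0 (m + 1)), fun u => ?_⟩
  rcases eq_or_ne u 0 with rfl | hu
  · simp [pK]
  have hn : ‖(‖u‖⁻¹ • u)‖ = 1 := norm_smul_inv_norm hu
  obtain ⟨g, hg⟩ := exists_oact_single (e0 (m + 1)) (‖u‖⁻¹ • u) (norm_e0 _) hn
  have hu' : u = ‖u‖ • oact g (e0 (m + 1)) := by
    rw [← hg, smul_inv_smul₀ (norm_ne_zero_iff.2 hu)]
  have h1 := pK_image (oact g).toLinearEquiv (closedBall (0 : Euc (m + 1)) R) (e0 (m + 1))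
  have h2 : (oact g).toLinearEquiv '' closedBall (0 : Euc (m + 1)) R = closedBall 0 R := by
    have := (oact g).image_closedBall 0 R
    rw [map_zero] at this
    exact this
  have h3 : |LinearMap.det ((oact g).toLinearEquiv : Euc (m + 1) →ₗ[ℝ] Euc (m + 1))| = 1 :=
    abs_det_isom (oact g)
  rw [h2, h3, one_mul] at h1
  conv_lhs => rw [hu']
  rw [pK_smul_nonneg _ (isCompact_closedBall _ _) (convex_closedBall _ _) _ _ (norm_nonneg _),
    mul_comm]
  congr 1

lemma projBody_of_norm (L : Set (Euc (m + 1))) (hL : IsCompact L) (hLc : Convex ℝ L) (C : ℝ)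
    (h : ∀ u, pK L u = C * ‖u‖) : projBody L = closedBall 0 ((cH m)⁻¹ * C) := by
  ext x
  rw [mem_projBody L hL hLc, mem_closedBall_zero_iff]
  have hC : 0 ≤ C := by
    have := pK_nonneg L hL (e0 (m + 1))
    rwa [h, norm_e0, mul_one] at this
  constructor
  · intro hx
    rcases eq_or_ne x 0 with rfl | hx0
    · rw [norm_zero]; exact mul_nonneg (inv_nonneg.2 cH_pos.le) hC
    have h1 := hx x
    rw [h, real_inner_self_eq_norm_sq, pow_two, ← mul_assoc] at h1
    exact le_of_mul_le_mul_right h1 (norm_pos_iff.2 hx0)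
  · intro hx u
    rw [h, ← mul_assoc]
    exact (real_inner_le_norm x u).trans (mul_le_mul_of_nonneg_right hx (norm_nonneg _))

/-- A solution of `Π²K = cK` whose shadow function is a multiple of the norm is a centred ball,
since `Π²K` is then one. -/
lemma ball_of_norm (K : Set (Euc (m + 1))) (hK : IsConvexBody K) (C c : ℝ) (hc : 0 < c)
    (h : ∀ u, pK K u = C * ‖u‖) (h2 : projBody (projBody K) = c • K) :
    ∃ r : ℝ, 0 < r ∧ K = closedBall 0 r := by
  rw [projBody_of_norm K hK.1 hK.2.1 C h] at h2
  obtain ⟨C', hC'⟩ := pK_ball (m := m) ((cH m)⁻¹ * C)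
  rw [projBody_of_norm _ (isCompact_closedBall _ _) (convex_closedBall _ _) C' hC'] at h2
  set R := (cH m)⁻¹ * C'
  have h3 : K = c⁻¹ • closedBall (0 : Euc (m + 1)) R := by
    rw [h2, inv_smul_smul₀ hc.ne']
  have hR : 0 < R := by
    by_contra hneg
    have hsub : K ⊆ {0} := by
      rw [h3]
      rintro _ ⟨y, hy, rfl⟩
      have : ‖y‖ ≤ 0 := (mem_closedBall_zero_iff.1 hy).trans (not_lt.1 hneg)
      have : y = 0 := norm_le_zero_iff.1 this
      simp [this]
    obtain ⟨x, hx⟩ := hK.2.2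
    have := interior_mono hsub hx
    rw [interior_singleton] at this
    exact this
  refine ⟨c⁻¹ * R, by positivity, ?_⟩
  rw [h3, smul_closedBall _ _ hR.le, smul_zero, Real.norm_of_nonneg (by positivity)]

end

/-! ### The fixed point equation for the surface area measure -/

section

variable {m : ℕ} [NeZero m]

lemma integral_ofReal_smul {X : Type*} [MeasurableSpace X] (μ : Measure X) (a : ℝ) (ha : 0 ≤ a)
    (f : X → ℝ) : ∫ x, f x ∂(ENNReal.ofReal a • μ) = a * ∫ x, f x ∂μ := by
  rw [integral_smul_measure, ENNReal.toReal_ofReal ha, smul_eq_mul]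

/-- `zonoid_pK` in terms of the measure `lamM`. -/
lemma zonoid_pK' (Z : Set (Euc (m + 1))) (hZ : IsCompact Z) (hZc : Convex ℝ Z) (hZn : Z.Nonempty)
    (η : Measure (Euc (m + 1))) [IsFiniteMeasure η] (hη : ∀ᵐ x ∂η, ‖x‖ = 1)
    (h : ∀ u, suppFn Z u = ∫ x, |⟪u, x⟫| ∂η) (r : ℝ) (hr : 0 < r)
    (hrZ : ∀ u, r * ‖u‖ ≤ suppFn Z u) (u : Euc (m + 1)) :
    pK Z u = ∫ x, |⟪u, x⟫| ∂(ENNReal.ofReal (2 ^ m / m.factorial) • lamM η) := by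
  rw [zonoid_pK Z hZ hZc hZn η hη h r hr hrZ u, integral_ofReal_smul _ _ (by positivity),
    cos_lamM hη]

/-- An even support function of a set with nonempty interior is bounded below on the sphere. -/
lemma suppFn_lower {n : ℕ} (K : Set (Euc n)) (hK : IsConvexBody K)
    (hev : ∀ u, suppFn K (-u) = suppFn K u) : ∃ r : ℝ, 0 < r ∧ ∀ u, r * ‖u‖ ≤ suppFn K u := by
  obtain ⟨x, hx⟩ := hK.2.2
  obtain ⟨r, hr, hsub⟩ := Metric.nhds_basis_closedBall.mem_iff.1 (mem_interior_iff_mem_nhds.1 hx)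
  refine ⟨r, hr, fun u => ?_⟩
  have key : ∀ u : Euc n, ⟪x, u⟫ + r * ‖u‖ ≤ suppFn K u := by
    intro u
    have hmem : x + (r * ‖u‖⁻¹) • u ∈ K := hsub (by
      rw [mem_closedBall_iff_norm, add_sub_cancel_left, norm_smul, norm_mul, norm_inv, norm_norm,
        Real.norm_of_nonneg hr.le, mul_assoc]
      exact mul_le_of_le_one_right hr.le inv_mul_le_one)
    have := le_suppFn hK.1 hmem u
    rw [inner_add_left, real_inner_smul_left, real_inner_self_eq_norm_sq] at this
    rcases eq_or_ne u 0 with rfl | hu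
    · simpa using this
    · have e : r * ‖u‖⁻¹ * ‖u‖ ^ 2 = r * ‖u‖ := by
        have := norm_ne_zero_iff.2 hu
        field_simp
      rwa [e] at this
  have h1 := key u
  have h2 := key (-u)
  rw [hev, inner_neg_right, norm_neg] at h2
  linarith

/-- The equation `Π²K = cK` for the generating measure of `ΠK`. -/
theorem fixed_point (K : Set (Euc (m + 1))) (hK : IsConvexBody K) (η : Measure (Euc (m + 1)))
    [IsFiniteMeasure η] (hη : ∀ᵐ x ∂η, ‖x‖ = 1) (hev : η.map (fun x => -x) = η) (r : ℝ)
    (hr : 0 < r) (hrη : ∀ u, r * ‖u‖ ≤ ∫ x, |⟪u, x⟫| ∂η)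
    (h : ∀ u, pK K u = ∫ x, |⟪u, x⟫| ∂η) (c : ℝ) (hc : 0 < c)
    (h2 : projBody (projBody K) = c • K) : ∃ κ : ℝ≥0∞, κ ≠ ⊤ ∧ η = κ • lamM (lamM η) := by
  have hKn : K.Nonempty := hK.2.2.mono interior_subset
  have hcH : 0 < (cH m)⁻¹ := inv_pos.2 cH_pos
  have c1 := projBody_compact K hK.1 hK.2.1
  have c2 := projBody_convex K
  have fin : ∀ (μ : Measure (Euc (m + 1))) [IsFiniteMeasure μ] (a : ℝ),
      IsFiniteMeasure (ENNReal.ofReal a • μ) := fun μ _ a => Measure.smul_finite _ ENNReal.ofReal_ne_top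
  have sph : ∀ (μ : Measure (Euc (m + 1))) (a : ℝ≥0∞), (∀ᵐ x ∂μ, ‖x‖ = 1) →
      ∀ᵐ x ∂(a • μ), ‖x‖ = 1 := fun μ a hμ => Measure.ae_smul_measure hμ a
  -- the first projection body
  set a1 := (cH m)⁻¹ with ha1
  have s1 : ∀ u, suppFn (projBody K) u = ∫ x, |⟪u, x⟫| ∂(ENNReal.ofReal a1 • η) := fun u => by
    rw [suppFn_projBody K hK.1 hK.2.1 η hη h u, h, integral_ofReal_smul _ _ hcH.le]
  have c3 : (projBody K).Nonempty := ⟨0, (mem_projBody K hK.1 hK.2.1 0).2 fun u => by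
    rw [inner_zero_left]; exact mul_nonneg hcH.le (pK_nonneg K hK.1 _)⟩
  have := fin η a1
  have hη1 := sph η (ENNReal.ofReal a1) hη
  have p1 := zonoid_pK' (projBody K) c1 c2 c3 (ENNReal.ofReal a1 • η) hη1 s1 (a1 * r)
    (mul_pos hcH hr) (fun u => by
      rw [s1, integral_ofReal_smul _ _ hcH.le, mul_assoc]
      exact mul_le_mul_of_nonneg_left (hrη u) hcH.le)
  -- the second projection body
  set q : ℝ := 2 ^ m / m.factorial with hq
  have hq0 : 0 < q := by positivity
  have hfl := finite_lamM hη
  have hsl := lamM_sphere hη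
  rw [lamM_smul η _ ENNReal.ofReal_ne_top, smul_smul, ← ENNReal.ofReal_pow hcH.le,
    ← ENNReal.ofReal_mul hq0.le] at p1
  set b : ℝ := q * a1 ^ m with hb
  have hb0 : 0 < b := by positivity
  have := fin (lamM η) b
  have s2 : ∀ u, suppFn K u = ∫ x, |⟪u, x⟫| ∂(ENNReal.ofReal (c⁻¹ * a1 * b) • lamM η) := by
    intro u
    have e1 := suppFn_projBody (projBody K) c1 c2 (ENNReal.ofReal b • lamM η) (sph _ _ hsl) p1 u
    rw [h2, suppFn_smul hK.1 hKn c hc.le, p1, integral_ofReal_smul _ _ hb0.le] at e1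
    rw [integral_ofReal_smul _ _ (by positivity), mul_assoc, mul_assoc, ← e1,
      inv_mul_cancel_left₀ hc.ne']
  obtain ⟨r', hr', hrK⟩ := suppFn_lower K hK fun u => by
    rw [s2, s2]
    simp only [inner_neg_left, abs_neg]
  have := fin (lamM η) (c⁻¹ * a1 * b)
  have p2 := zonoid_pK' K hK.1 hK.2.1 hKn _ (sph _ _ hsl) s2 r' hr' hrK
  rw [lamM_smul _ _ ENNReal.ofReal_ne_top, smul_smul] at p2
  have hfll := finite_lamM hsl
  have hκ : ENNReal.ofReal q * ENNReal.ofReal (c⁻¹ * a1 * b) ^ m ≠ ⊤ :=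
    ENNReal.mul_ne_top ENNReal.ofReal_ne_top (ENNReal.pow_ne_top ENNReal.ofReal_ne_top)
  refine ⟨_, hκ, ?_⟩
  have : IsFiniteMeasure ((ENNReal.ofReal q * ENNReal.ofReal (c⁻¹ * a1 * b) ^ m) • lamM (lamM η)) :=
    Measure.smul_finite _ hκ
  refine cos_unique _ _ hη (sph _ _ (lamM_sphere hsl)) hev ?_ fun u => ?_
  · rw [Measure.map_smul, lamM_even]
  · rw [← h, p2]

end

/-! ### Existence of an isotropic position -/

section

variable {n : ℕ} [NeZero n]

/-- The functional minimised over maps of determinant one to reach isotropic position. -/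
def JJ (μ : Measure (Euc n)) (B : Euc n →L[ℝ] Euc n) : ℝ := ∫ x, ‖B x‖ ∂μ

lemma JJ_int (μ : Measure (Euc n)) [IsFiniteMeasure μ] (hμ : ∀ᵐ x ∂μ, ‖x‖ = 1)
    (B : Euc n →L[ℝ] Euc n) : Integrable (fun x => ‖B x‖) μ :=
  integrable_of_bound_sphere hμ (by fun_prop) ‖B‖ fun x hx => by
    rw [abs_norm]
    have := B.le_opNorm x
    rwa [hx, mul_one] at this

lemma JJ_continuous (μ : Measure (Euc n)) [IsFiniteMeasure μ] (hμ : ∀ᵐ x ∂μ, ‖x‖ = 1) :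
    Continuous (JJ μ) := by
  refine (LipschitzWith.of_dist_le_mul (K := (μ.real univ).toNNReal) fun B B' => ?_).continuous
  rw [Real.dist_eq, JJ, JJ, ← integral_sub (JJ_int μ hμ B) (JJ_int μ hμ B'),
    Real.coe_toNNReal _ measureReal_nonneg, dist_eq_norm, mul_comm]
  rw [← Real.norm_eq_abs]
  refine norm_integral_le_of_norm_le_const ?_
  filter_upwards [hμ] with x hx
  have h1 := abs_norm_sub_norm_le (B x) (B' x)
  have h2 := (B - B').le_opNorm x
  rw [hx, mul_one, ContinuousLinearMap.sub_apply] at h2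
  exact h1.trans h2

lemma JJ_bound (μ : Measure (Euc n)) [IsFiniteMeasure μ] (hμ : ∀ᵐ x ∂μ, ‖x‖ = 1) (c : ℝ)
    (hc : 0 < c) (hcμ : ∀ a, c * ‖a‖ ≤ ∫ x, |⟪a, x⟫| ∂μ) (B : Euc n →L[ℝ] Euc n) :
    ‖B‖ ≤ JJ μ B / c := by
  have hJ : 0 ≤ JJ μ B := integral_nonneg fun x => norm_nonneg _
  have key : ∀ a, ‖ContinuousLinearMap.adjoint B a‖ ≤ JJ μ B / c * ‖a‖ := by
    intro a
    have h1 := hcμ (ContinuousLinearMap.adjoint B a)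
    have h2 : ∫ x, |⟪ContinuousLinearMap.adjoint B a, x⟫| ∂μ ≤ ∫ x, ‖a‖ * ‖B x‖ ∂μ := by
      refine integral_mono_of_nonneg (ae_of_all _ fun x => abs_nonneg _)
        ((JJ_int μ hμ B).const_mul _) (ae_of_all _ fun x => ?_)
      simp only [ContinuousLinearMap.adjoint_inner_left]
      exact abs_real_inner_le_norm _ _
    rw [integral_const_mul] at h2
    have h3 := h1.trans h2
    rw [div_mul_eq_mul_div, le_div_iff₀ hc]
    change _ ≤ ‖a‖ * JJ μ B at h3
    linarith
  rw [← ContinuousLinearMap.adjoint.norm_map B]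
  exact ContinuousLinearMap.opNorm_le_bound _ (by positivity) key

/-- The functional is coercive on the closed set `det B = 1`, so the minimum is attained. -/
lemma exists_min (μ : Measure (Euc n)) [IsFiniteMeasure μ] (hμ : ∀ᵐ x ∂μ, ‖x‖ = 1) (c : ℝ)
    (hc : 0 < c) (hcμ : ∀ a, c * ‖a‖ ≤ ∫ x, |⟪a, x⟫| ∂μ) :
    ∃ B : Euc n →L[ℝ] Euc n, B.det = 1 ∧ ∀ B' : Euc n →L[ℝ] Euc n, B'.det = 1 → JJ μ B ≤ JJ μ B' := by
  have hcont := JJ_continuous μ hμ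
  set I : Euc n →L[ℝ] Euc n := ContinuousLinearMap.id ℝ (Euc n)
  have hI : I.det = 1 := by
    change LinearMap.det (LinearMap.id : Euc n →ₗ[ℝ] Euc n) = 1
    exact LinearMap.det_id
  set S : Set (Euc n →L[ℝ] Euc n) := {B | B.det = 1 ∧ JJ μ B ≤ JJ μ I} with hS
  have hSc : IsCompact S := by
    refine Metric.isCompact_of_isClosed_isBounded ?_ ?_
    · exact (isClosed_eq ContinuousLinearMap.continuous_det continuous_const).inter
        (isClosed_le hcont continuous_const)
    · refine (Metric.isBounded_closedBall (x := (0 : Euc n →L[ℝ] Euc n)) (r := JJ μ I / c)).subset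
        fun B hB => ?_
      rw [mem_closedBall_zero_iff]
      exact (JJ_bound μ hμ c hc hcμ B).trans (div_le_div_of_nonneg_right hB.2 hc.le)
  obtain ⟨B, hB, hmin⟩ := hSc.exists_isMinOn ⟨I, hI, le_rfl⟩ hcont.continuousOn
  refine ⟨B, hB.1, fun B' hB' => ?_⟩
  rcases le_total (JJ μ B') (JJ μ I) with h | h
  · exact hmin ⟨hB', h⟩
  · exact hB.2.trans h

/-- The stretch `y ↦ y + s ⟪a, y⟫ a`. -/
def stretch (a : Euc n) (s : ℝ) : Euc n →L[ℝ] Euc n :=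
  ContinuousLinearMap.id ℝ (Euc n) + (innerSL ℝ (s • a)).smulRight a

lemma stretch_apply (a y : Euc n) (s : ℝ) : stretch a s y = y + (s * ⟪a, y⟫) • a := by
  simp [stretch, real_inner_smul_left]

lemma stretch_det (a : Euc n) (ha : ‖a‖ = 1) (s : ℝ) : (stretch a s).det = 1 + s := by
  have h : ((stretch a s : Euc n →L[ℝ] Euc n) : Euc n →ₗ[ℝ] Euc n) =
      LinearMap.transvection ((innerSL ℝ (s • a) : Euc n →L[ℝ] ℝ) : Euc n →ₗ[ℝ] ℝ) a := by
    ext1 y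
    rw [LinearMap.transvection.apply]
    rfl
  rw [ContinuousLinearMap.det, h, LinearMap.transvection.det]
  simp [real_inner_smul_left, ha]

lemma norm_stretch_le (a y : Euc n) (ha : ‖a‖ = 1) (s : ℝ) (hy : y ≠ 0) :
    ‖stretch a s y‖ ≤ ‖y‖ + (2 * s + s ^ 2) / 2 * (⟪a, y⟫ ^ 2 / ‖y‖) := by
  have hy0 : 0 < ‖y‖ := norm_pos_iff.2 hy
  have h1 : ‖stretch a s y‖ ^ 2 = ‖y‖ ^ 2 + (2 * s + s ^ 2) * ⟪a, y⟫ ^ 2 := by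
    rw [stretch_apply, norm_add_sq_real, real_inner_smul_right, norm_smul, ha, real_inner_comm,
      Real.norm_eq_abs, mul_one, sq_abs]
    ring
  have h2 : ‖y‖ * ‖stretch a s y‖ ≤ (‖y‖ ^ 2 + ‖stretch a s y‖ ^ 2) / 2 := by
    nlinarith [sq_nonneg (‖y‖ - ‖stretch a s y‖)]
  rw [h1] at h2
  refine le_of_mul_le_mul_left ?_ hy0
  refine h2.trans_eq ?_
  field_simp
  ring

/-- The stationarity condition at a minimiser: isotropic position. -/
lemma first_order (μ : Measure (Euc n)) [IsFiniteMeasure μ] (hμ : ∀ᵐ x ∂μ, ‖x‖ = 1)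
    (B : Euc n →L[ℝ] Euc n) (hB : B.det = 1)
    (hmin : ∀ B' : Euc n →L[ℝ] Euc n, B'.det = 1 → JJ μ B ≤ JJ μ B') (a : Euc n) (ha : ‖a‖ = 1) :
    ∫ x, ⟪a, B x⟫ ^ 2 / ‖B x‖ ∂μ = JJ μ B / n := by
  have hinj : ∀ x, x ≠ 0 → B x ≠ 0 := by
    intro x hx h0
    have hd : LinearMap.det (B : Euc n →ₗ[ℝ] Euc n) ≠ 0 := by
      change B.det ≠ 0; rw [hB]; exact one_ne_zero
    have hk := LinearMap.ker_eq_bot.1 (LinearMap.ker_eq_bot'.2 fun y hy => by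
      by_contra hy0
      exact hd (LinearMap.det_eq_zero_iff_ker_ne_bot.2 fun hb => hy0 (by
        have : y ∈ LinearMap.ker (B : Euc n →ₗ[ℝ] Euc n) := hy
        rwa [hb, Submodule.mem_bot] at this)))
    exact hx (hk (by simpa using h0))
  set Q := ∫ x, ⟪a, B x⟫ ^ 2 / ‖B x‖ ∂μ with hQ
  have hQi : Integrable (fun x => ⟪a, B x⟫ ^ 2 / ‖B x‖) μ := by
    refine integrable_of_bound_sphere hμ ?_ ‖B‖ fun x hx => ?_
    · exact ((by fun_prop : Measurable fun x => ⟪a, B x⟫).pow_const 2).div (by fun_prop)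
    · have h1 := B.le_opNorm x
      rw [hx, mul_one] at h1
      refine le_trans ?_ h1
      rw [abs_of_nonneg (by positivity)]
      refine div_le_of_le_mul₀ (norm_nonneg _) (norm_nonneg _) ?_
      have h2 := abs_real_inner_le_norm a (B x)
      rw [ha, one_mul] at h2
      rw [← sq_abs, ← pow_two]
      exact pow_le_pow_left₀ (abs_nonneg _) h2 2
  -- comparison with `(1 + t)⁻¹ • stretch`, where the stretch has determinant `(1 + t)ⁿ`
  have hineq : ∀ t : ℝ, -1 < t → 0 ≤ ((1 + t) ^ (2 * n) - 1) / 2 * Q - t * JJ μ B := by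
    intro t ht
    have ht0 : 0 < 1 + t := by linarith
    set s : ℝ := (1 + t) ^ n - 1 with hs
    set T : Euc n →L[ℝ] Euc n := (1 + t)⁻¹ • (stretch a s).comp B with hT
    have hTd : T.det = 1 := by
      have e : (T : Euc n →ₗ[ℝ] Euc n) = (1 + t)⁻¹ •
          ((stretch a s : Euc n →ₗ[ℝ] Euc n) ∘ₗ (B : Euc n →ₗ[ℝ] Euc n)) := rfl
      have h1 : LinearMap.det (B : Euc n →ₗ[ℝ] Euc n) = 1 := hB
      have h2 : LinearMap.det (stretch a s : Euc n →ₗ[ℝ] Euc n) = 1 + s := stretch_det a ha s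
      rw [ContinuousLinearMap.det, e, LinearMap.det_smul, LinearMap.det_comp, h1, h2, hs,
        finrank_euclideanSpace_fin]
      rw [mul_one, add_sub_cancel, inv_pow, inv_mul_cancel₀ (pow_pos ht0 n).ne']
    have h1 := hmin T hTd
    have h2 : JJ μ T ≤ (1 + t)⁻¹ * (JJ μ B + (2 * s + s ^ 2) / 2 * Q) := by
      rw [JJ, JJ, hQ, ← integral_const_mul, ← integral_add (JJ_int μ hμ B) (hQi.const_mul _),
        ← integral_const_mul]
      refine integral_mono_ae (JJ_int μ hμ T) (((JJ_int μ hμ B).add (hQi.const_mul _)).const_mul _) ?_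
      filter_upwards [hμ] with x hx
      have hx0 : x ≠ 0 := by rintro rfl; simp at hx
      have : T x = (1 + t)⁻¹ • stretch a s (B x) := rfl
      rw [this, norm_smul, Real.norm_of_nonneg (inv_nonneg.2 ht0.le)]
      exact mul_le_mul_of_nonneg_left (norm_stretch_le a (B x) ha s (hinj x hx0))
        (inv_nonneg.2 ht0.le)
    have h3 := h1.trans h2
    rw [le_inv_mul_iff₀ ht0] at h3
    have h4 : 2 * s + s ^ 2 = (1 + t) ^ (2 * n) - 1 := by rw [hs, mul_comm 2 n, pow_mul]; ring
    rw [h4] at h3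
    linarith
  have hder : HasDerivAt (fun t : ℝ => ((1 + t) ^ (2 * n) - 1) / 2 * Q - t * JJ μ B)
      (((2 * n : ℕ) * (1 + 0) ^ (2 * n - 1) * 1) / 2 * Q - 1 * JJ μ B) 0 :=
    (((((hasDerivAt_id (0 : ℝ)).const_add 1).pow (2 * n)).sub_const 1).div_const 2 |>.mul_const Q).sub
      ((hasDerivAt_id (0 : ℝ)).mul_const _)
  have hloc : IsLocalMin (fun t : ℝ => ((1 + t) ^ (2 * n) - 1) / 2 * Q - t * JJ μ B) 0 := by
    filter_upwards [lt_mem_nhds (by norm_num : (-1 : ℝ) < 0)] with t ht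
    simpa using hineq t ht
  have h0 := hloc.hasDerivAt_eq_zero hder
  have hn : (n : ℝ) ≠ 0 := by exact_mod_cast NeZero.ne n
  rw [eq_div_iff hn]
  push_cast at h0
  rw [add_zero, one_pow] at h0
  linarith

end

/-! ### Near-extremal maps of determinant one are near-isometries -/

section

variable {n : ℕ} [NeZero n]

/-- Singular values of a map of determinant one. -/
lemma svd (B : Euc n →L[ℝ] Euc n) (hB : B.det = 1) :
    ∃ (b : OrthonormalBasis (Fin n) ℝ (Euc n)) (s : Fin n → ℝ), (∀ i, 0 < s i) ∧
      ∏ i, s i = 1 ∧ ∀ x, ‖B x‖ ^ 2 = ∑ i, (s i * ⟪b i, x⟫) ^ 2 := by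
  set L : Euc n →ₗ[ℝ] Euc n := (B : Euc n →ₗ[ℝ] Euc n) with hL
  have hLB : ∀ x, L x = B x := fun x => rfl
  set T : Euc n →ₗ[ℝ] Euc n := LinearMap.adjoint L * L with hTdef
  have hTi : ∀ x y, ⟪T x, y⟫ = ⟪B x, B y⟫ := by
    intro x y
    rw [hTdef, Module.End.mul_apply, LinearMap.adjoint_inner_left]
    rfl
  have hT : T.IsSymmetric := by
    intro x y
    rw [hTi, real_inner_comm (T y) x, hTi, real_inner_comm]
  have hn : Module.finrank ℝ (Euc n) = n := by simp
  have hdet : T.det = 1 := by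
    have h1 : LinearMap.det (LinearMap.adjoint L) = LinearMap.det L := by
      have hb := EuclideanSpace.basisFun (Fin n) ℝ
      rw [← LinearMap.det_toMatrix hb.toBasis, ← LinearMap.det_toMatrix hb.toBasis,
        LinearMap.toMatrix_adjoint, Matrix.conjTranspose_eq_transpose_of_trivial,
        Matrix.det_transpose]
    have h2 : LinearMap.det L = 1 := hB
    rw [hTdef, map_mul, h1, h2, mul_one]
  have hl : ∀ i, hT.eigenvalues hn i = ‖B (hT.eigenvectorBasis hn i)‖ ^ 2 := by
    intro i
    have h := hTi (hT.eigenvectorBasis hn i) (hT.eigenvectorBasis hn i)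
    rw [hT.apply_eigenvectorBasis hn i, real_inner_self_eq_norm_sq, real_inner_smul_left,
      real_inner_self_eq_norm_sq, OrthonormalBasis.norm_eq_one] at h
    simpa using h
  have hprod : ∏ i, hT.eigenvalues hn i = 1 := by
    have := hT.det_eq_prod_eigenvalues hn
    rw [hdet] at this
    simpa using this.symm
  refine ⟨hT.eigenvectorBasis hn, fun i => ‖B (hT.eigenvectorBasis hn i)‖, ?_, ?_, ?_⟩
  · intro i
    refine lt_of_le_of_ne (norm_nonneg _) fun h => ?_
    have h0 : hT.eigenvalues hn i = 0 := by
      rw [hl]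
      exact pow_eq_zero_iff two_ne_zero |>.2 h.symm
    rw [Finset.prod_eq_zero (Finset.mem_univ i) h0] at hprod
    exact zero_ne_one hprod
  · simp only [hl] at hprod
    rw [Finset.prod_pow] at hprod
    exact (pow_eq_one_iff_of_nonneg (Finset.prod_nonneg fun i _ => norm_nonneg _) two_ne_zero).1 hprod
  · intro x
    have h := hTi x x
    rw [real_inner_self_eq_norm_sq] at h
    rw [← h, ← (hT.eigenvectorBasis hn).sum_inner_mul_inner (T x) x]
    refine Finset.sum_congr rfl fun i _ => ?_
    have h2 : ⟪T x, hT.eigenvectorBasis hn i⟫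
        = hT.eigenvalues hn i * ⟪hT.eigenvectorBasis hn i, x⟫ := by
      rw [hT x, hT.apply_eigenvectorBasis hn i, real_inner_smul_right, real_inner_comm]; rfl
    rw [h2, hl]
    ring

lemma sub_one_sub_log_ge (s : ℝ) (hs : 0 < s) : (√s - 1) ^ 2 ≤ s - 1 - Real.log s := by
  have h1 : 0 < √s := Real.sqrt_pos.2 hs
  have h2 := Real.log_le_sub_one_of_pos h1
  have h3 : Real.log s = 2 * Real.log √s := by rw [Real.log_sqrt hs.le]; ring
  have h4 := Real.sq_sqrt hs.le
  nlinarith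

/-- Stability in the inequality `∫ ‖B x‖ dν ≥ 1` for maps of determinant one: near equality forces
`B` to be nearly isometric. -/
lemma near_isometry (δ : ℝ) (hδ : 0 < δ) (hδ1 : δ ≤ 1) : ∃ τ > 0, ∀ B : Euc n →L[ℝ] Euc n,
    B.det = 1 → ∫ x, ‖B x‖ ∂nu n ≤ 1 + τ →
      ∀ x, (1 - δ) * ‖x‖ ≤ ‖B x‖ ∧ ‖B x‖ ≤ (1 + δ) * ‖x‖ := by
  have hn0 : (0:ℝ) < n := by exact_mod_cast Nat.pos_of_ne_zero (NeZero.ne n)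
  refine ⟨(δ / 3) ^ 2 / n, by positivity, fun B hB hint => ?_⟩
  obtain ⟨b, s, hs, hprod, hnorm⟩ := svd B hB
  have hpars : ∀ x, ∑ i, ⟪b i, x⟫ ^ 2 = ‖x‖ ^ 2 := fun x => by
    rw [← b.sum_sq_norm_inner_right x]; simp
  have hlow : ∀ x, ‖x‖ = 1 → ∑ i, s i * ⟪b i, x⟫ ^ 2 ≤ ‖B x‖ := by
    intro x hx
    refine abs_le_of_sq_le_sq' ?_ (norm_nonneg _) |>.2
    have hcs := Finset.sum_mul_sq_le_sq_mul_sq Finset.univ (fun i => s i * ⟪b i, x⟫)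
      (fun i => ⟪b i, x⟫)
    rw [hpars, hx, ← hnorm] at hcs
    refine le_trans (le_of_eq ?_) (hcs.trans (by simp))
    congr 1
    exact Finset.sum_congr rfl fun i _ => by ring
  have hi2 : ∀ i, Integrable (fun x => s i * ⟪b i, x⟫ ^ 2) (nu n) := fun i =>
    (integrable_of_bound_sphere (nu_sphere n) (by fun_prop) 1 fun x hx => by
      have h := abs_inner_le_of_unit (b i) x hx
      rw [b.norm_eq_one] at h
      rw [abs_pow]
      exact pow_le_one₀ (abs_nonneg _) h).const_mul _
  have hsum : (∑ i, s i) / n ≤ ∫ x, ‖B x‖ ∂nu n := by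
    have h1 : ∫ x, ∑ i, s i * ⟪b i, x⟫ ^ 2 ∂nu n = (∑ i, s i) / n := by
      rw [integral_finsetSum _ fun i _ => hi2 i, Finset.sum_div]
      refine Finset.sum_congr rfl fun i _ => ?_
      rw [integral_const_mul, nu_mom, mom_two, b.norm_eq_one]
      ring
    rw [← h1]
    refine integral_mono_ae (integrable_finsetSum _ fun i _ => hi2 i)
      (JJ_int _ (nu_sphere n) B) ?_
    filter_upwards [nu_sphere n] with x hx using hlow x hx
  have hlog : ∑ i, Real.log (s i) = 0 := by
    rw [← Real.log_prod (fun i _ => (hs i).ne'), hprod, Real.log_one]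
  have htot : ∑ i, (s i - 1 - Real.log (s i)) ≤ (δ / 3) ^ 2 := by
    rw [Finset.sum_sub_distrib, Finset.sum_sub_distrib, hlog]
    have h3 := (div_le_iff₀ hn0).1 (hsum.trans hint)
    have h4 : (1 + (δ / 3) ^ 2 / n) * n = n + (δ / 3) ^ 2 := by field_simp
    rw [h4] at h3
    simp
    linarith
  have hsi : ∀ i, 1 - δ ≤ s i ∧ s i ≤ 1 + δ := by
    intro i
    have h5 : (√(s i) - 1) ^ 2 ≤ (δ / 3) ^ 2 :=
      (sub_one_sub_log_ge _ (hs i)).trans ((Finset.single_le_sum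
        (f := fun i => s i - 1 - Real.log (s i))
        (fun j _ => (sq_nonneg _).trans (sub_one_sub_log_ge _ (hs j))) (Finset.mem_univ i)).trans htot)
    have h6 := abs_le_of_sq_le_sq' h5 (by positivity)
    have h7 := Real.sq_sqrt (hs i).le
    constructor <;> nlinarith
  intro x
  have hx := norm_nonneg x
  constructor
  · refine abs_le_of_sq_le_sq' ?_ (norm_nonneg _) |>.2
    rw [hnorm, mul_pow, ← hpars, Finset.mul_sum]
    refine Finset.sum_le_sum fun i _ => ?_
    rw [mul_pow]
    exact mul_le_mul_of_nonneg_right (pow_le_pow_left₀ (by linarith) (hsi i).1 2) (sq_nonneg _)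
  · refine abs_le_of_sq_le_sq' ?_ (by positivity) |>.2
    rw [hnorm, mul_pow, ← hpars, Finset.mul_sum]
    refine Finset.sum_le_sum fun i _ => ?_
    rw [mul_pow]
    exact mul_le_mul_of_nonneg_right (pow_le_pow_left₀ (hs i).le (hsi i).2 2) (sq_nonneg _)

end

/-! ### Distortion of the uniform measure by a near-isometry -/

section

variable {n : ℕ} [NeZero n]

/-- Polar coordinates: radial projection of Lebesgue measure on a ball is a multiple of `ν`. -/
lemma ball_map_Nrm (R : ℝ) :
    (volume.restrict (closedBall (0 : Euc n) R)).map Nrm = volume (closedBall (0 : Euc n) R) • nu n := by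
  have hfin : IsFiniteMeasure (volume.restrict (closedBall (0 : Euc n) R)) :=
    ⟨by rw [Measure.restrict_apply_univ]; exact measure_closedBall_lt_top⟩
  have h := nu_unique ((volume.restrict (closedBall (0 : Euc n) R)).map Nrm) ?_ ?_
  · rw [Measure.map_apply measurable_Nrm .univ, preimage_univ, Measure.restrict_apply_univ] at h
    exact h
  · intro g
    rw [Measure.map_map (measurable_oact g) measurable_Nrm]
    have h1 : (oact g) ∘ (Nrm : Euc n → Euc n) = Nrm ∘ (oact g) := by
      funext x
      simp [Nrm]
    have h2 : MeasurePreserving (oact g) (volume.restrict (closedBall (0 : Euc n) R))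
        (volume.restrict (closedBall (0 : Euc n) R)) := by
      have h3 := (oact g).measurePreserving.restrict_preimage
        (measurableSet_closedBall (x := (0 : Euc n)) (ε := R))
      have h4 : (oact g) ⁻¹' (closedBall (0 : Euc n) R) = closedBall 0 R := by
        ext x; simp
      rwa [h4] at h3
    rw [h1, ← Measure.map_map measurable_Nrm (measurable_oact g), h2.map_eq]
  · have hm : MeasurableSet {x : Euc n | ‖x‖ = 1} := measurableSet_eq_fun (by fun_prop) (by fun_prop)
    rw [ae_map_iff measurable_Nrm.aemeasurable hm]
    have hne : ∀ᵐ x : Euc n ∂volume, x ≠ 0 := by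
      have : Nontrivial (Euc n) := ⟨e0 n, 0, fun h => by have := norm_e0 n; rw [h] at this; simp at this⟩
      exact Measure.ae_ne volume 0
    filter_upwards [ae_restrict_of_ae hne] with x hx using norm_Nrm hx

lemma Nrm_comp (B : Euc n →L[ℝ] Euc n) (x : Euc n) : Nrm (B (Nrm x)) = Nrm (B x) := by
  rcases eq_or_ne x 0 with rfl | hx
  · simp [Nrm]
  · have h : 0 < ‖x‖ := norm_pos_iff.2 hx
    rw [Nrm, Nrm, Nrm, map_smul, norm_smul, smul_smul, norm_inv, norm_norm]
    congr 1
    field_simp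

lemma ball_scale (R : ℝ) (hR : 0 ≤ R) : volume (closedBall (0 : Euc n) R)
    = ENNReal.ofReal (R ^ n) * volume (closedBall (0 : Euc n) 1) := by
  rw [Measure.addHaar_closedBall' _ _ hR]
  simp

/-- The radial action of a near-isometry of determinant one distorts `ν` by bounded factors. -/
lemma push_bounds (B : Euc n →L[ℝ] Euc n) (hB : B.det = 1) (δ : ℝ) (hδ : 0 ≤ δ) (hδ1 : δ < 1)
    (hx : ∀ x, (1 - δ) * ‖x‖ ≤ ‖B x‖ ∧ ‖B x‖ ≤ (1 + δ) * ‖x‖) :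
    ENNReal.ofReal ((1 - δ) ^ n) • nu n ≤ (nu n).map (fun x => Nrm (B x)) ∧
      (nu n).map (fun x => Nrm (B x)) ≤ ENNReal.ofReal ((1 + δ) ^ n) • nu n := by
  have hmB : Measurable (fun x => Nrm (B x)) := measurable_Nrm.comp B.measurable
  set ω := volume (closedBall (0 : Euc n) 1) with hω
  have hω0 : ω ≠ 0 := (measure_closedBall_pos volume _ one_pos).ne'
  have hωt : ω ≠ ⊤ := measure_closedBall_lt_top.ne
  have hpres : ∀ A, volume (B ⁻¹' A) = volume A := by
    intro A
    have hd : LinearMap.det (B : Euc n →ₗ[ℝ] Euc n) = 1 := hB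
    have := Measure.addHaar_preimage_linearMap (volume : Measure (Euc n))
      (f := (B : Euc n →ₗ[ℝ] Euc n)) (by rw [hd]; exact one_ne_zero) A
    rw [hd] at this
    simpa using this
  have hν : ∀ A, MeasurableSet A → ∀ R, 0 ≤ R → ENNReal.ofReal (R ^ n) * ω * nu n A
      = volume (Nrm ⁻¹' A ∩ closedBall (0 : Euc n) R) := by
    intro A hA R hR
    have h := congrArg (fun μ : Measure (Euc n) => μ A) (ball_map_Nrm (n := n) R)
    rw [Measure.map_apply measurable_Nrm hA, Measure.restrict_apply (measurable_Nrm hA),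
      Measure.smul_apply, smul_eq_mul, ball_scale R hR] at h
    exact h.symm
  have hmid : ∀ A, MeasurableSet A → ω * (nu n).map (fun x => Nrm (B x)) A
      = volume ((fun x => Nrm (B x)) ⁻¹' A ∩ closedBall (0 : Euc n) 1) := by
    intro A hA
    rw [Measure.map_apply hmB hA]
    have h := hν _ (hmB hA) 1 zero_le_one
    rw [one_pow, ENNReal.ofReal_one, one_mul] at h
    rw [h]
    congr 2
    ext x
    simp only [mem_preimage, Nrm_comp]
  constructor
  · refine Measure.le_iff.2 fun A hA => ?_
    rw [← ENNReal.mul_le_mul_iff_right hω0 hωt, hmid A hA, Measure.smul_apply, smul_eq_mul, ← mul_assoc,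
      mul_comm ω, hν A hA _ (by linarith), ← hpres]
    refine measure_mono fun x hxA => ⟨hxA.1, ?_⟩
    have h1 : ‖B x‖ ≤ 1 - δ := by simpa using hxA.2
    have h2 := (hx x).1.trans h1
    rw [mem_closedBall_zero_iff]
    by_contra h3
    push Not at h3
    nlinarith
  · refine Measure.le_iff.2 fun A hA => ?_
    rw [← ENNReal.mul_le_mul_iff_right hω0 hωt, hmid A hA, Measure.smul_apply, smul_eq_mul, ← mul_assoc,
      mul_comm ω, hν A hA _ (by linarith), ← hpres (Nrm ⁻¹' A ∩ _)]
    refine measure_mono fun x hxA => ⟨hxA.1, ?_⟩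
    have h1 : ‖x‖ ≤ 1 := by simpa using hxA.2
    change B x ∈ _
    rw [mem_closedBall_zero_iff]
    nlinarith [(hx x).2]

end

/-! ### Reduction to even isotropic densities -/

section

variable {m : ℕ} [NeZero m]

/-- The image of the measure `‖B x‖ f₁(x) dν` under radial projection of `B` has a density
close to one. -/
lemma push_density (f₁ : Euc (m + 1) → ℝ) (hf : Measurable f₁) (δ : ℝ) (hδ : 0 ≤ δ) (hδ1 : δ < 1)
    (hfδ : ∀ x, |f₁ x - 1| ≤ δ) (B : Euc (m + 1) →L[ℝ] Euc (m + 1)) (hB : B.det = 1)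
    (hx : ∀ x, (1 - δ) * ‖x‖ ≤ ‖B x‖ ∧ ‖B x‖ ≤ (1 + δ) * ‖x‖) :
    ∃ k : Euc (m + 1) → ℝ, Measurable k ∧
      (∀ x, (1 - δ) ^ (m + 3) ≤ k x ∧ k x ≤ (1 + δ) ^ (m + 3)) ∧
      ∀ ψ : Euc (m + 1) → ℝ, Measurable ψ →
        ∫ x, f₁ x * (‖B x‖ * ψ (Nrm (B x))) ∂nu (m + 1) = ∫ x, k x * ψ x ∂nu (m + 1) := by
  have hmB : Measurable (fun x => Nrm (B x)) := measurable_Nrm.comp B.measurable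
  have hf1 : ∀ x, 1 - δ ≤ f₁ x ∧ f₁ x ≤ 1 + δ := fun x => by
    have := abs_le.1 (hfδ x); constructor <;> linarith
  have hf0 : ∀ x, 0 ≤ f₁ x := fun x => by linarith [(hf1 x).1]
  set g : Euc (m + 1) → ℝ := fun x => f₁ x * ‖B x‖ with hg
  have hgm : Measurable g := hf.mul (by fun_prop)
  have hg0 : ∀ x, 0 ≤ g x := fun x => mul_nonneg (hf0 x) (norm_nonneg _)
  have hgb : ∀ x, ‖x‖ = 1 → (1 - δ) ^ 2 ≤ g x ∧ g x ≤ (1 + δ) ^ 2 := by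
    intro x h1
    have h2 := hx x
    rw [h1, mul_one, mul_one] at h2
    constructor
    · rw [sq]; exact mul_le_mul (hf1 x).1 h2.1 (by linarith) (hf0 x)
    · rw [sq]; exact mul_le_mul (hf1 x).2 h2.2 (norm_nonneg _) (by linarith)
  have hlow : ENNReal.ofReal ((1 - δ) ^ 2) • nu (m + 1) ≤ dn g := by
    rw [← withDensity_const, dn]
    refine withDensity_mono ?_
    filter_upwards [nu_sphere (m + 1)] with x h1 using ENNReal.ofReal_le_ofReal (hgb x h1).1
  have hup : dn g ≤ ENNReal.ofReal ((1 + δ) ^ 2) • nu (m + 1) := by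
    rw [← withDensity_const, dn]
    refine withDensity_mono ?_
    filter_upwards [nu_sphere (m + 1)] with x h1 using ENNReal.ofReal_le_ofReal (hgb x h1).2
  have hgi : Integrable g (nu (m + 1)) :=
    integrable_of_bound_sphere (nu_sphere _) hgm ((1 + δ) ^ 2) fun x h1 => by
      rw [abs_of_nonneg (hg0 x)]; exact (hgb x h1).2
  have hfin : IsFiniteMeasure (dn g) := isFiniteMeasure_withDensity_ofReal hgi.2
  obtain ⟨hp1, hp2⟩ := push_bounds B hB δ hδ hδ1 hx
  have h1δ : 0 ≤ 1 - δ := by linarith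
  have h2δ : 0 ≤ 1 + δ := by linarith
  have hd1 : ENNReal.ofReal ((1 - δ) ^ (m + 3)) • nu (m + 1) ≤ (dn g).map fun x => Nrm (B x) := by
    calc ENNReal.ofReal ((1 - δ) ^ (m + 3)) • nu (m + 1)
        = ENNReal.ofReal ((1 - δ) ^ 2) • (ENNReal.ofReal ((1 - δ) ^ (m + 1)) • nu (m + 1)) := by
          rw [smul_smul, ← ENNReal.ofReal_mul (by positivity)]; congr 2; ring
      _ ≤ ENNReal.ofReal ((1 - δ) ^ 2) • (nu (m + 1)).map (fun x => Nrm (B x)) := by gcongr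
      _ = (ENNReal.ofReal ((1 - δ) ^ 2) • nu (m + 1)).map (fun x => Nrm (B x)) := by
          rw [Measure.map_smul]
      _ ≤ _ := Measure.map_mono hlow hmB
  have hd2 : (dn g).map (fun x => Nrm (B x)) ≤ ENNReal.ofReal ((1 + δ) ^ (m + 3)) • nu (m + 1) := by
    calc (dn g).map (fun x => Nrm (B x))
        ≤ (ENNReal.ofReal ((1 + δ) ^ 2) • nu (m + 1)).map (fun x => Nrm (B x)) :=
          Measure.map_mono hup hmB
      _ = ENNReal.ofReal ((1 + δ) ^ 2) • (nu (m + 1)).map (fun x => Nrm (B x)) := by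
          rw [Measure.map_smul]
      _ ≤ ENNReal.ofReal ((1 + δ) ^ 2) • (ENNReal.ofReal ((1 + δ) ^ (m + 1)) • nu (m + 1)) := by
          gcongr
      _ = ENNReal.ofReal ((1 + δ) ^ (m + 3)) • nu (m + 1) := by
          rw [smul_smul, ← ENNReal.ofReal_mul (by positivity)]; congr 2; ring
  obtain ⟨k, hkm, hkb, hk⟩ := exists_density (nu (m + 1)) ((dn g).map fun x => Nrm (B x))
    ((1 - δ) ^ (m + 3)) ((1 + δ) ^ (m + 3)) (by positivity)
    (pow_le_pow_left₀ h1δ (by linarith) _) hd1 hd2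
  refine ⟨k, hkm, hkb, fun ψ hψ => ?_⟩
  have hk0 : ∀ x, 0 ≤ k x := fun x => le_trans (by positivity) (hkb x).1
  have e1 : ∫ x, ψ x ∂((dn g).map fun x => Nrm (B x)) = ∫ x, ψ (Nrm (B x)) ∂(dn g) :=
    integral_map hmB.aemeasurable hψ.aestronglyMeasurable
  rw [hk] at e1
  have e2 := integral_dn k ψ hkm hk0
  have e3 := integral_dn g (fun x => ψ (Nrm (B x))) hgm hg0
  rw [← e2, dn, e1, e3]
  refine integral_congr_ae (.of_forall fun x => ?_)
  simp only [hg]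
  ring

lemma norm_mul_inner_Nrm {n : ℕ} (w y : Euc n) : ‖y‖ * |⟪w, Nrm y⟫| = |⟪w, y⟫| := by
  conv_rhs => rw [← norm_smul_Nrm y, inner_smul_right, abs_mul, abs_norm]

lemma norm_mul_inner_Nrm_sq {n : ℕ} (w y : Euc n) : ‖y‖ * ⟪w, Nrm y⟫ ^ 2 = ⟪w, y⟫ ^ 2 / ‖y‖ := by
  rw [Nrm, inner_smul_right]
  rcases eq_or_ne ‖y‖ 0 with h | h
  · simp [h]
  · field_simp

lemma nu_neg_integral (ψ : Euc (m + 1) → ℝ) :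
    ∫ x, ψ (-x) ∂nu (m + 1) = ∫ x, ψ x ∂nu (m + 1) := by
  have := (nu_mp (m + 1) (LinearIsometryEquiv.neg ℝ)).integral_comp
    (LinearIsometryEquiv.neg ℝ : Euc (m + 1) ≃ₗᵢ[ℝ] Euc (m + 1)).toHomeomorph.measurableEmbedding ψ
  simpa using this

/-- A real number close enough to zero distorts the density by at most `δ₀`. -/
lemma exists_ratio (δ₀ : ℝ) (hδ₀ : 0 < δ₀) (p : ℕ) :
    ∃ δ : ℝ, 0 < δ ∧ δ ≤ 1 / 2 ∧ (1 + δ) ^ p ≤ (1 + δ₀) * (1 - δ) ^ p := by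
  have hc : Tendsto (fun δ : ℝ => (1 + δ₀) * (1 - δ) ^ p - (1 + δ) ^ p) (𝓝[>] 0)
      (𝓝 ((1 + δ₀) * (1 - 0) ^ p - (1 + 0) ^ p)) :=
    (Continuous.tendsto (by fun_prop) 0).mono_left nhdsWithin_le_nhds
  have hev : ∀ᶠ δ : ℝ in 𝓝[>] 0, 0 < (1 + δ₀) * (1 - δ) ^ p - (1 + δ) ^ p :=
    hc.eventually (lt_mem_nhds (by simp [hδ₀]))
  have hev2 : ∀ᶠ δ : ℝ in 𝓝[>] 0, δ ∈ Ioc (0:ℝ) (1 / 2) :=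
    Ioc_mem_nhdsGT (by norm_num)
  obtain ⟨δ, h1, h2⟩ := (hev.and hev2).exists
  exact ⟨δ, h2.1, h2.2, by linarith⟩


/-- Every density close to one can be moved by a linear map to an even density close to one in
isotropic position. -/
lemma normalise (δ₀ : ℝ) (hδ₀ : 0 < δ₀) : ∃ ε : ℝ, 0 < ε ∧ ε ≤ 1 / 2 ∧
    ∀ f₁ : Euc (m + 1) → ℝ, Measurable f₁ → (∀ x, |f₁ x - 1| ≤ ε) →
      ∃ (B : Euc (m + 1) →L[ℝ] Euc (m + 1)) (C : ℝ) (f : Euc (m + 1) → ℝ), B.det = 1 ∧ 0 < C ∧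
        Measurable f ∧ (∀ x, |f x - 1| ≤ δ₀) ∧ (∀ x, f (-x) = f x) ∧ ∫ x, f x ∂nu (m + 1) = 1 ∧
        (∀ a, ∫ x, ⟪a, x⟫ ^ 2 * f x ∂nu (m + 1) = ‖a‖ ^ 2 / ((m : ℝ) + 1)) ∧
        ∀ w, ∫ x, |⟪w, B x⟫| * f₁ x ∂nu (m + 1) = C * ∫ y, |⟪w, y⟫| * f y ∂nu (m + 1) := by
  obtain ⟨δ, hδ, hδ1, hδr⟩ := exists_ratio δ₀ hδ₀ (m + 3)
  obtain ⟨τ, hτ, hnear⟩ := near_isometry (n := m + 1) δ hδ (by linarith)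
  refine ⟨min δ (min (τ / (2 + τ)) (1 / 2)), by positivity,
    (min_le_right _ _).trans (min_le_right _ _), fun f₁ hf hfε => ?_⟩
  set ε := min δ (min (τ / (2 + τ)) (1 / 2)) with hε
  have hε1 : ε ≤ δ := min_le_left _ _
  have hε2 : ε ≤ τ / (2 + τ) := (min_le_right _ _).trans (min_le_left _ _)
  have hε3 : ε ≤ 1 / 2 := (min_le_right _ _).trans (min_le_right _ _)
  have hε0 : 0 < ε := by positivity
  have hfb : ∀ x, 1 - ε ≤ f₁ x ∧ f₁ x ≤ 1 + ε := fun x => by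
    have := abs_le.1 (hfε x); constructor <;> linarith
  have hf0 : ∀ x, 0 ≤ f₁ x := fun x => by linarith [(hfb x).1]
  have hfin : IsFiniteMeasure (dn f₁) := finite_dn f₁ hf 2 fun x => by
    rw [abs_of_nonneg (hf0 x)]; linarith [(hfb x).2]
  have hint : ∀ ψ : Euc (m + 1) → ℝ, Integrable ψ (nu (m + 1)) →
      Integrable (fun x => f₁ x * ψ x) (nu (m + 1)) := fun ψ hψ =>
    Integrable.bdd_mul (c := 2) hψ hf.aestronglyMeasurable (.of_forall fun x => by
      rw [Real.norm_eq_abs, abs_of_nonneg (hf0 x)]; linarith [(hfb x).2])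
  have hlowB : ∀ ψ : Euc (m + 1) → ℝ, (∀ x, 0 ≤ ψ x) → Integrable ψ (nu (m + 1)) →
      (1 - ε) * ∫ x, ψ x ∂nu (m + 1) ≤ ∫ x, ψ x ∂(dn f₁) := by
    intro ψ h0 hψ
    rw [integral_dn f₁ ψ hf hf0, ← integral_const_mul]
    exact integral_mono (hψ.const_mul _) (hint ψ hψ) fun x =>
      mul_le_mul_of_nonneg_right (hfb x).1 (h0 x)
  have habs : ∀ a : Euc (m + 1), Integrable (fun x => |⟪a, x⟫|) (nu (m + 1)) := fun a =>
    integrable_of_bound_sphere (nu_sphere _) (by fun_prop) ‖a‖ fun x hx => by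
      rw [abs_abs]; exact abs_inner_le_of_unit a x hx
  obtain ⟨B, hB, hmin⟩ := exists_min (dn f₁) (dn_sphere f₁) ((1 - ε) * cabs (m + 1))
    (mul_pos (by linarith) cabs_pos) fun a => by
      have := hlowB (fun x => |⟪a, x⟫|) (fun x => abs_nonneg _) (habs a)
      rwa [nu_abs, ← mul_assoc] at this
  have hJ1 : JJ (dn f₁) B ≤ 1 + ε := by
    have hid : (ContinuousLinearMap.id ℝ (Euc (m + 1))).det = 1 := by
      change LinearMap.det (LinearMap.id : Euc (m + 1) →ₗ[ℝ] Euc (m + 1)) = 1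
      exact LinearMap.det_id
    refine (hmin _ hid).trans ?_
    rw [JJ, integral_dn f₁ _ hf hf0]
    have h1 : ∫ x, f₁ x * ‖(ContinuousLinearMap.id ℝ (Euc (m + 1))) x‖ ∂nu (m + 1)
        ≤ ∫ x, (1 + ε) ∂nu (m + 1) := by
      refine integral_mono_ae (hint _ (JJ_int _ (nu_sphere _) _)) (integrable_const _) ?_
      filter_upwards [nu_sphere (m + 1)] with x hx
      rw [ContinuousLinearMap.id_apply, hx, mul_one]
      exact (hfb x).2
    refine h1.trans (le_of_eq ?_)
    simp
  have hJ2 : ∫ x, ‖B x‖ ∂nu (m + 1) ≤ 1 + τ := by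
    have h1 := hlowB (fun x => ‖B x‖) (fun x => norm_nonneg _) (JJ_int _ (nu_sphere _) B)
    have h2 : (1 - ε) * ∫ x, ‖B x‖ ∂nu (m + 1) ≤ 1 + ε := h1.trans hJ1
    rw [le_div_iff₀ (by positivity)] at hε2
    have h3 : 1 + ε ≤ (1 - ε) * (1 + τ) := by nlinarith
    exact le_of_mul_le_mul_left (h2.trans h3) (by linarith)
  have hx := hnear B hB hJ2
  obtain ⟨k, hkm, hkb, hk⟩ := push_density f₁ hf δ hδ.le (by linarith)
    (fun x => (hfε x).trans hε1) B hB hx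
  set p := (1 - δ) ^ (m + 3) with hp
  set q := (1 + δ) ^ (m + 3) with hq
  have hp0 : 0 < p := pow_pos (by linarith) _
  have hki : Integrable k (nu (m + 1)) := Integrable.of_bound hkm.aestronglyMeasurable q
    (.of_forall fun x => by rw [Real.norm_eq_abs, abs_of_nonneg (hp0.le.trans (hkb x).1)]; exact (hkb x).2)
  set S := ∫ x, k x ∂nu (m + 1) with hS
  have hS1 : p ≤ S := by
    have := integral_mono (integrable_const p) hki fun x => (hkb x).1
    simpa using this
  have hS2 : S ≤ q := by
    have := integral_mono hki (integrable_const q) fun x => (hkb x).2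
    simpa using this
  have hS0 : 0 < S := hp0.trans_le hS1
  have hkψ : ∀ ψ : Euc (m + 1) → ℝ, Integrable ψ (nu (m + 1)) → (∀ x, ψ (-x) = ψ x) →
      ∫ x, ψ x * ((k x + k (-x)) / (2 * S)) ∂nu (m + 1) = (∫ x, k x * ψ x ∂nu (m + 1)) / S := by
    intro ψ hψ hev
    have hkabs : ∀ x, ‖k x‖ ≤ q := fun x => by
      rw [Real.norm_eq_abs, abs_of_nonneg (hp0.le.trans (hkb x).1)]; exact (hkb x).2
    have i1 : Integrable (fun x => k x * ψ x) (nu (m + 1)) :=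
      Integrable.bdd_mul (c := q) hψ hkm.aestronglyMeasurable (.of_forall hkabs)
    have i2 : Integrable (fun x => k (-x) * ψ x) (nu (m + 1)) :=
      Integrable.bdd_mul (c := q) hψ (hkm.comp measurable_neg).aestronglyMeasurable
        (.of_forall fun x => hkabs (-x))
    have e1 : ∫ x, k (-x) * ψ x ∂nu (m + 1) = ∫ x, k x * ψ x ∂nu (m + 1) := by
      rw [← nu_neg_integral (fun x => k x * ψ x)]
      simp only [hev]
    have e2 : ∀ x, ψ x * ((k x + k (-x)) / (2 * S)) = (k x * ψ x + k (-x) * ψ x) / (2 * S) :=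
      fun x => by ring
    simp only [e2]
    rw [integral_div, integral_add i1 i2, e1]
    field_simp
    ring
  have hsq : ∀ a : Euc (m + 1), Integrable (fun x => ⟪a, x⟫ ^ 2) (nu (m + 1)) := fun a =>
    integrable_of_bound_sphere (nu_sphere _) (by fun_prop) (‖a‖ ^ 2) fun x hx => by
      rw [abs_pow]; exact pow_le_pow_left₀ (abs_nonneg _) (abs_inner_le_of_unit a x hx) 2
  have hSJ : S = JJ (dn f₁) B := by
    have h := hk (fun _ => 1) measurable_const
    simp only [mul_one] at h
    rw [JJ, integral_dn f₁ _ hf hf0, hS]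
    exact h.symm
  have hunit : ∀ a : Euc (m + 1), ‖a‖ = 1 →
      ∫ x, k x * ⟪a, x⟫ ^ 2 ∂nu (m + 1) = S / ((m : ℝ) + 1) := by
    intro a ha
    have h := first_order (dn f₁) (dn_sphere f₁) B hB hmin a ha
    rw [integral_dn f₁ _ hf hf0, ← hSJ] at h
    rw [← hk (fun x => ⟪a, x⟫ ^ 2) (by fun_prop)]
    simp only [norm_mul_inner_Nrm_sq]
    rw [h]
    push_cast
    rfl
  refine ⟨B, S, fun x => (k x + k (-x)) / (2 * S), hB, hS0,
    (hkm.add (hkm.comp measurable_neg)).div_const _, ?_, ?_, ?_, ?_, ?_⟩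
  · intro x
    have h1 := hkb x
    have h2 := hkb (-x)
    have h3 : (1 + δ₀) * p ≤ (1 + δ₀) * S := by gcongr
    rw [abs_sub_le_iff, sub_le_iff_le_add, sub_le_iff_le_add, div_le_iff₀ (by positivity),
      ← sub_le_iff_le_add', le_div_iff₀ (by positivity)]
    constructor
    · linarith
    · have h4 : (1 - δ₀) * q ≤ p := by
        rcases le_total δ₀ 1 with h | h
        · calc (1 - δ₀) * q ≤ (1 - δ₀) * ((1 + δ₀) * p) := by gcongr
            _ ≤ p := by nlinarith
        · nlinarith [hp0.le.trans (hS1.trans hS2)]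
      rcases le_total δ₀ 1 with h | h
      · have : (1 - δ₀) * S ≤ (1 - δ₀) * q := by gcongr
        linarith
      · nlinarith
  · intro x
    simp only [neg_neg]
    congr 1
    exact add_comm _ _
  · have h := hkψ (fun _ => 1) (integrable_const _) fun _ => rfl
    simp only [one_mul, mul_one] at h
    rw [h, ← hS, div_self hS0.ne']
  · intro a
    rw [hkψ (fun x => ⟪a, x⟫ ^ 2) (hsq a) fun x => by rw [inner_neg_right, neg_sq]]
    rcases eq_or_ne a 0 with rfl | ha
    · simp
    · have h := hunit (Nrm a) (norm_Nrm ha)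
      have e : ∀ x, k x * ⟪a, x⟫ ^ 2 = ‖a‖ ^ 2 * (k x * ⟪Nrm a, x⟫ ^ 2) := by
        intro x
        conv_lhs => rw [← norm_smul_Nrm a, real_inner_smul_left]
        ring
      simp only [e]
      rw [integral_const_mul, h]
      field_simp
  · intro w
    rw [hkψ (fun x => |⟪w, x⟫|) (habs w) fun x => by rw [inner_neg_right, abs_neg],
      mul_div_cancel₀ _ hS0.ne', ← hk (fun x => |⟪w, x⟫|) (by fun_prop)]
    refine integral_congr_ae (.of_forall fun x => ?_)
    simp only [norm_mul_inner_Nrm]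
    exact mul_comm _ _

end

/-! ### Conclusion -/

section

lemma image_body {n : ℕ} (φ : Euc n ≃ₗ[ℝ] Euc n) {K : Set (Euc n)} (hK : IsConvexBody K) :
    IsConvexBody (φ '' K) := by
  refine ⟨image_compact φ hK.1, image_convex φ hK.2.1, ?_⟩
  have h := φ.toContinuousLinearEquiv.toHomeomorph.image_interior K
  have h2 : (φ.toContinuousLinearEquiv.toHomeomorph : Euc n → Euc n) '' interior K
      = interior (φ '' K) := h
  rw [← h2]
  exact hK.2.2.image _

variable {m : ℕ} [NeZero m]

/-- The case of a body whose surface area measure is, up to a factor and evenness, an even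
isotropic density close to one: such a body is a ball. -/
lemma isotropic_case (hm : 2 ≤ m) : ∃ δ : ℝ, 0 < δ ∧ ∀ (K : Set (Euc (m + 1))) (f : Euc (m + 1) → ℝ)
    (D c : ℝ), IsConvexBody K → 0 < D → 0 < c → Measurable f → (∀ x, |f x - 1| ≤ δ) →
    (∀ x, f (-x) = f x) → ∫ x, f x ∂nu (m + 1) = 1 →
    (∀ a : Euc (m + 1), ∫ x, ⟪a, x⟫ ^ 2 * f x ∂(nu (m + 1)) = ‖a‖ ^ 2 / ((m : ℝ) + 1)) →
    (∀ w, pK K w = D * ∫ y, |⟪w, y⟫| * f y ∂nu (m + 1)) →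
    projBody (projBody K) = c • K → ∃ r : ℝ, 0 < r ∧ K = closedBall 0 r := by
  obtain ⟨δ', hδ', hcon⟩ := contraction hm
  refine ⟨min δ' (1 / 2), by positivity, fun K f D c hK hD hc hf hfδ hev h1 h2 hpK hfix => ?_⟩
  have hfb : ∀ x, 1 / 2 ≤ f x ∧ f x ≤ 2 := fun x => by
    have := abs_le.1 ((hfδ x).trans (min_le_right _ _)); constructor <;> linarith
  have hf0 : ∀ x, 0 ≤ f x := fun x => by linarith [(hfb x).1]
  have hfin : IsFiniteMeasure (dn f) := finite_dn f hf 2 fun x => by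
    rw [abs_of_nonneg (hf0 x)]; exact (hfb x).2
  have habs : ∀ a : Euc (m + 1), Integrable (fun x => |⟪a, x⟫|) (nu (m + 1)) := fun a =>
    integrable_of_bound_sphere (nu_sphere _) (by fun_prop) ‖a‖ fun x hx => by
      rw [abs_abs]; exact abs_inner_le_of_unit a x hx
  have hcos : ∀ w, ∫ y, |⟪w, y⟫| ∂(dn f) = ∫ y, |⟪w, y⟫| * f y ∂nu (m + 1) := by
    intro w
    rw [integral_dn f _ hf hf0]
    exact integral_congr_ae (.of_forall fun x => mul_comm _ _)
  have hcosl : ∀ w, 1 / 2 * (cabs (m + 1) * ‖w‖) ≤ ∫ y, |⟪w, y⟫| ∂(dn f) := by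
    intro w
    rw [integral_dn f _ hf hf0, ← nu_abs, ← integral_const_mul]
    refine integral_mono ((habs w).const_mul _) (Integrable.bdd_mul (c := 2) (habs w)
      hf.aestronglyMeasurable (.of_forall fun x => ?_)) fun x =>
        mul_le_mul_of_nonneg_right (hfb x).1 (abs_nonneg _)
    rw [Real.norm_eq_abs, abs_of_nonneg (hf0 x)]; exact (hfb x).2
  have hevm : (dn f).map (fun x => -x) = dn f := by
    ext A hA
    rw [Measure.map_apply measurable_neg hA, dn, withDensity_apply _ (measurable_neg hA),
      withDensity_apply _ hA, ← lintegral_indicator (measurable_neg hA), ← lintegral_indicator hA]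
    have hmp := nu_mp (m + 1) (LinearIsometryEquiv.neg ℝ)
    rw [← hmp.lintegral_comp (Measurable.indicator (by fun_prop) hA)]
    refine lintegral_congr fun x => ?_
    rw [LinearIsometryEquiv.coe_neg]
    by_cases hx : -x ∈ A
    · rw [indicator_of_mem hx, indicator_of_mem (show x ∈ (fun x => -x) ⁻¹' A from hx), hev]
    · rw [indicator_of_notMem hx, indicator_of_notMem (show x ∉ (fun x => -x) ⁻¹' A from hx)]
  have hDt : ENNReal.ofReal D ≠ ⊤ := ENNReal.ofReal_ne_top
  have hD0 : ENNReal.ofReal D ≠ 0 := (ENNReal.ofReal_pos.2 hD).ne'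
  have hfin2 : IsFiniteMeasure (ENNReal.ofReal D • dn f) := Measure.smul_finite _ hDt
  obtain ⟨κ, hκ, hfp⟩ := fixed_point K hK (ENNReal.ofReal D • dn f)
    (Measure.ae_smul_measure (dn_sphere f) _) (by rw [Measure.map_smul, hevm])
    (D * (1 / 2 * cabs (m + 1))) (mul_pos hD (mul_pos (by norm_num) cabs_pos))
    (fun u => by
      rw [integral_ofReal_smul _ _ hD.le]
      have := mul_le_mul_of_nonneg_left (hcosl u) hD.le
      linarith)
    (fun u => by rw [integral_ofReal_smul _ _ hD.le, hcos, hpK]) c hc hfix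
  have hfl : IsFiniteMeasure (lamM (dn f)) := finite_lamM (dn_sphere f)
  rw [lamM_smul _ _ hDt, lamM_smul _ _ (ENNReal.pow_ne_top hDt), smul_smul] at hfp
  have hfp2 : dn f = ((ENNReal.ofReal D)⁻¹ * (κ * (ENNReal.ofReal D ^ m) ^ m)) • lamM (lamM (dn f)) := by
    rw [mul_smul, ← hfp, smul_smul, ENNReal.inv_mul_cancel hD0 hDt, one_smul]
  have hodd : ∀ a : Euc (m + 1), ∫ x, ⟪a, x⟫ * f x ∂nu (m + 1) = 0 := by
    intro a
    have h := nu_neg_integral (fun x => ⟪a, x⟫ * f x)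
    have h3 : ∀ x, ⟪a, -x⟫ * f (-x) = -(⟪a, x⟫ * f x) := fun x => by
      rw [inner_neg_right, hev, neg_mul]
    simp only [h3] at h
    rw [integral_neg] at h
    linarith
  have hnu := hcon f _ hf (fun x => (hfδ x).trans (min_le_left _ _)) hodd h1 h2 hfp2
  refine ball_of_norm K hK (D * cabs (m + 1)) c hc (fun u => ?_) hfix
  rw [hpK, ← hcos, hnu, nu_abs, mul_assoc]

lemma petty_aux (hm : 2 ≤ m) :
    ∃ ε : ℝ, 0 < ε ∧
      ∀ K : Set (Euc (m + 1)), IsConvexBody K →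
        (∃ c : ℝ, 0 < c ∧ projBody (projBody K) = c • K) →
        (∃ (φ : Euc (m + 1) ≃ₗ[ℝ] Euc (m + 1)) (fφ : Euc (m + 1) → ℝ),
          ContinuousOn fφ (sphere (0 : Euc (m + 1)) 1) ∧
          (∀ x ∈ sphere (0 : Euc (m + 1)) 1, 0 < fφ x) ∧ HasCurvFn (⇑φ '' K) fφ ∧
          CNorm (fun x => fφ x - 1) ≤ ε) →
        ∃ ψ : Euc (m + 1) ≃ₗ[ℝ] Euc (m + 1), K = ⇑ψ '' closedBall (0 : Euc (m + 1)) 1 := by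
  obtain ⟨δ, hδ, hiso⟩ := isotropic_case hm
  obtain ⟨ε, hε, hε1, hnorm⟩ := normalise (m := m) δ hδ
  refine ⟨ε, hε, ?_⟩
  rintro K hK ⟨c, hc, hfix⟩ ⟨φ, g, hg, hg0, hgK, hgε⟩
  classical
  have hcpt : IsCompact (sphere (0 : Euc (m + 1)) 1) := isCompact_sphere _ _
  have hms : MeasurableSet (sphere (0 : Euc (m + 1)) 1) := isClosed_sphere.measurableSet
  have hbd : BddAbove (range fun x : sphere (0 : Euc (m + 1)) 1 => |g x - 1|) := by
    have h := hcpt.bddAbove_image (f := fun x => |g x - 1|) (hg.sub continuousOn_const).abs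
    rwa [image_eq_range] at h
  have hgx : ∀ x ∈ sphere (0 : Euc (m + 1)) 1, |g x - 1| ≤ ε := fun x hx =>
    (le_ciSup hbd ⟨x, hx⟩).trans hgε
  -- values off the sphere are irrelevant
  set f₁ : Euc (m + 1) → ℝ := (sphere (0 : Euc (m + 1)) 1).piecewise g (fun _ => 1) with hf₁
  have hf₁m : Measurable f₁ := by
    refine measurable_of_restrict_of_restrict_compl hms ?_ ?_
    · rw [hf₁, domRestrict_piecewise]
      exact hg.domRestrict.measurable
    · rw [hf₁, domRestrict_piecewise_compl]
      exact measurable_const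
  have hf₁ε : ∀ x, |f₁ x - 1| ≤ ε := by
    intro x
    by_cases hx : x ∈ sphere (0 : Euc (m + 1)) 1
    · rw [hf₁, piecewise_eq_of_mem _ _ _ hx]; exact hgx x hx
    · rw [hf₁, piecewise_eq_of_notMem _ _ _ hx]; simp [hε.le]
  obtain ⟨B, C, f, hBdet, hC, hfm, hfδ, hfev, hf1, hf2, hBf⟩ := hnorm f₁ hf₁m hf₁ε
  have hBu : IsUnit (LinearMap.det (B : Euc (m + 1) →ₗ[ℝ] Euc (m + 1))) := by
    have : LinearMap.det (B : Euc (m + 1) →ₗ[ℝ] Euc (m + 1)) = 1 := hBdet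
    rw [this]; exact isUnit_one
  obtain ⟨E, hE⟩ : ∃ E : Euc (m + 1) ≃ₗ[ℝ] Euc (m + 1), ∀ x, E x = B x :=
    ⟨LinearEquiv.ofIsUnitDet (v := Module.finBasis ℝ _) (v' := Module.finBasis ℝ _)
      (f := (B : Euc (m + 1) →ₗ[ℝ] Euc (m + 1))) (by rwa [LinearMap.det_toMatrix]), fun x => rfl⟩
  obtain ⟨M, hM, hpK⟩ := pK_curv (φ '' K) (image_body φ hK) g hg hg0 hgK
  set T : Euc (m + 1) ≃ₗ[ℝ] Euc (m + 1) := φ.trans (tr E).symm with hT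
  have hTK : T '' K = (tr E).symm '' (φ '' K) := by
    rw [image_image]; rfl
  have hKT := image_body T hK
  obtain ⟨d, hd, hproj⟩ := proj2_image T K hK.1 hK.2.1
  rw [hfix] at hproj
  have hproj2 : projBody (projBody (T '' K)) = (d * c) • (T '' K) := by
    rw [hproj, mul_smul]
    congr 1
    exact image_smul_set ..
  have hd' := det_pos (tr E).symm
  set d' := |LinearMap.det ((tr E).symm : Euc (m + 1) →ₗ[ℝ] Euc (m + 1))| with hdd'
  have hpKT : ∀ w, pK (T '' K) w = (d' * (M * C)) * ∫ y, |⟪w, y⟫| * f y ∂nu (m + 1) := by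
    intro w
    have h := pK_image (tr E).symm (φ '' K) (tr E w)
    rw [LinearEquiv.symm_apply_apply, ← hTK, hpK] at h
    rw [h, mul_assoc, mul_assoc, ← hBf]
    congr 2
    refine integral_congr_ae ?_
    filter_upwards [nu_sphere (m + 1)] with x hx
    rw [inner_tr, hE, hf₁, piecewise_eq_of_mem _ _ _ (by simpa using hx)]
  obtain ⟨r, hr, hball⟩ := hiso (T '' K) f (d' * (M * C)) (d * c) hKT (by positivity)
    (by positivity) hfm hfδ hfev hf1 hf2 hpKT hproj2
  refine ⟨(LinearEquiv.smulOfNeZero ℝ (Euc (m + 1)) r hr.ne').trans T.symm, ?_⟩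
  have h1 : (fun x : Euc (m + 1) => r • x) '' closedBall (0 : Euc (m + 1)) 1 = closedBall 0 r := by
    have := smul_closedBall r (0 : Euc (m + 1)) zero_le_one
    rw [smul_zero, Real.norm_of_nonneg hr.le, mul_one] at this
    exact this
  have h2 : ((LinearEquiv.smulOfNeZero ℝ (Euc (m + 1)) r hr.ne').trans T.symm) ''
      closedBall (0 : Euc (m + 1)) 1 = T.symm '' ((fun x : Euc (m + 1) => r • x) '' closedBall 0 1) := by
    rw [image_image]; rfl
  rw [h2, h1, ← hball, image_image]
  simp

end

end Petty

/-- For `n ≥ 3` there is `ε > 0` such that any convex body `K` with positive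
continuous curvature function satisfying `Π²K = cK`, `c > 0`, and `‖f_{φK} - 1‖_C ≤ ε` for some
`φ ∈ GLₙ(ℝ)`, is an origin-centered ellipsoid. -/
theorem petty_local_uniqueness_curvature (n : ℕ) (hn : 3 ≤ n) :
    ∃ ε : ℝ, 0 < ε ∧
      ∀ K : Set (Euc n), IsConvexBody K →
        (∃ f : Euc n → ℝ, ContinuousOn f (sphere (0 : Euc n) 1) ∧
          (∀ x ∈ sphere (0 : Euc n) 1, 0 < f x) ∧ HasCurvFn K f) →
        (∃ c : ℝ, 0 < c ∧ projBody (projBody K) = c • K) →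
        (∃ (φ : Euc n ≃ₗ[ℝ] Euc n) (fφ : Euc n → ℝ),
          ContinuousOn fφ (sphere (0 : Euc n) 1) ∧
          (∀ x ∈ sphere (0 : Euc n) 1, 0 < fφ x) ∧ HasCurvFn (⇑φ '' K) fφ ∧
          CNorm (fun x => fφ x - 1) ≤ ε) →
        ∃ ψ : Euc n ≃ₗ[ℝ] Euc n, K = ⇑ψ '' closedBall (0 : Euc n) 1 := by
  obtain ⟨m, rfl⟩ : ∃ m, n = m + 1 := ⟨n - 1, by omega⟩
  have : NeZero m := ⟨by omega⟩
  obtain ⟨ε, hε, h⟩ := Petty.petty_aux (m := m) (by omega)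
  exact ⟨ε, hε, fun K hK _ => h K hK⟩
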